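/- Let v be a valuation on the compact convex subsets of ℝ^n and define v_p(K) = 2^{np} v(2^{-p} K) for each natural number p. Suppose v is simple, continuous, and satisfies condition (*): v is uniformly bounded on polytopes contained in the unit ball, and there exists M > 0 such that for all small ε > 0, all polytopes P and affine isometries f with P, f(P) ⊂ B(0,ε), one has v(f(P)) = v(P)(1 + αε) with |α| ≤ M. Then for every n-simplex T contained in a small ball B(0,ε), the sequence v_p(T) converges, and its limit ṽ(T) equals v(T) · ∏_{i=1}^{∞} 1/(1 + 2^{1−i} α_i ε) for some sequence (α_i) with |α_i| ≤ M; the infinite product converges since ∑ 2^{1−i} M ε < ∞. -/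

import Mathlib

open MeasureTheory Metric Set Filter Pointwise

/-- A convex body of `ℝ^n`: a nonempty compact convex set. -/
def IsConvexBody {n : ℕ} (K : Set (EuclideanSpace ℝ (Fin n))) : Prop :=
  K.Nonempty ∧ IsCompact K ∧ Convex ℝ K

/-- A (compact convex) polytope: the convex hull of a finite set of points. -/
def IsPolytope {n : ℕ} (P : Set (EuclideanSpace ℝ (Fin n))) : Prop :=
  ∃ s : Finset (EuclideanSpace ℝ (Fin n)), P = convexHull ℝ (s : Set (EuclideanSpace ℝ (Fin n)))

/-- An `n`-simplex: convex hull of `n+1` affinely independent points. -/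
def IsSimplex {n : ℕ} (T : Set (EuclideanSpace ℝ (Fin n))) : Prop :=
  ∃ p : Fin (n + 1) → EuclideanSpace ℝ (Fin n),
    AffineIndependent ℝ p ∧ T = convexHull ℝ (Set.range p)

/-!
For `n ≥ 3` cutting a simplex `T` at the midpoints of its edges leaves pieces that are not
congruent to `2⁻¹ T`, so the halving step `v(T) = 2ⁿ v(2⁻¹ T) (1 + α ε)`, `|α| ≤ M`, is obtained by
integral geometry instead.

By Klain's theorem an even translation invariant simple continuous valuation is a multiple of the
volume. Applied to the left hand side as a function of `Q`, this gives the kinematic formula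
  `∫ v(K ∩ (t + Q)) + v(K ∩ (t - Q)) dt = 2 vol(Q) v(K)`.
If `K` is a ball and `Q` a small body, almost invariance makes the integrand nearly `2 v(Q)`
wherever `t ± Q` lies in `K`, whence `|v(Q)| = O(sⁿ)` for `Q` in a ball of radius `s`. If `K = T`
and `Q = B(0, s)`, this bound shows that the balls that meet `∂T` contribute `o(sⁿ)`, so
  `v(T) = lim vol(B(0, s))⁻¹ ∫_T v(B(t, s)) dt` as `s → 0`.
Balls of equal radius are translates of each other, so `v(B(t, s))` and `v(B(2⁻¹ t, s))` agree up to
a relative error `M ε`, and the substitution `t ↦ 2⁻¹ t` gives the halving step. Iterating it on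
`2⁻ⁱ T ⊆ B(0, 2⁻ⁱ ε)` gives the product.

Klain's theorem reduces to valuations that vanish on parallelotopes. By induction on the dimension
they vanish on prisms, hence do not change when a segment, and so a zonoid, is added. The support
function of every symmetric body is a limit of differences of support functions of zonoids, found by
averaging over random maps `N • id + A` with `A` skew-adjoint, so symmetric bodies are sent to `0`.
A parallelotope splits into a simplex, a symmetric slab and the opposite simplex, so by evenness
simplices are sent to `0`, too, and the dissection of bodies into simplices finishes the proof.
-/

/-! ### Simple valuations and convergence of bodies -/

/-- Compact convex sets, the empty set included. -/
structure IsCompactConvex {E : Type*} [NormedAddCommGroup E] [NormedSpace ℝ E] (K : Set E) :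
    Prop where
  isCompact : IsCompact K
  convex : Convex ℝ K

/-- Convergence of the sets `K i` to `M` up to the boundary of `M`: the sets shrink into every
neighbourhood of `M` and eventually catch every interior point of `M`. For convex bodies this is
implied by Hausdorff convergence, but, unlike the latter, it also makes sense for empty sets and is
preserved by intersections; simple valuations do not notice the difference. -/
structure TendstoBody {ι E : Type*} [TopologicalSpace E] (K : ι → Set E) (l : Filter ι)
    (M : Set E) : Prop where
  eventually_mem : ∀ x ∈ interior M, ∀ᶠ i in l, x ∈ K i
  eventually_subset : ∀ U, IsOpen U → M ⊆ U → ∀ᶠ i in l, K i ⊆ U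

/-- Simple continuous valuations on the compact convex subsets of `E`. Simplicity allows us to
express continuity through `TendstoBody`. -/
structure IsSimpleValuation {E : Type*} [NormedAddCommGroup E] [NormedSpace ℝ E]
    (φ : Set E → ℝ) : Prop where
  empty : φ ∅ = 0
  union : ∀ {K L : Set E}, IsCompactConvex K → IsCompactConvex L → Convex ℝ (K ∪ L) →
    φ (K ∪ L) = φ K + φ L - φ (K ∩ L)
  simple : ∀ {K : Set E}, IsCompactConvex K → interior K = ∅ → φ K = 0
  tendsto_nat : ∀ {K : ℕ → Set E} {M : Set E}, (∀ i, IsCompactConvex (K i)) → IsCompactConvex M →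
    TendstoBody K atTop M → Tendsto (fun i => φ (K i)) atTop (nhds (φ M))

section CompactConvex

variable {E F : Type*} [NormedAddCommGroup E] [NormedSpace ℝ E] [NormedAddCommGroup F]
  [NormedSpace ℝ F] {K L : Set E}

namespace IsCompactConvex

theorem inter (hK : IsCompactConvex K) (hL : IsCompactConvex L) : IsCompactConvex (K ∩ L) :=
  ⟨hK.isCompact.inter hL.isCompact, hK.convex.inter hL.convex⟩

theorem add (hK : IsCompactConvex K) (hL : IsCompactConvex L) : IsCompactConvex (K + L) :=
  ⟨hK.isCompact.add hL.isCompact, hK.convex.add hL.convex⟩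

theorem neg (hK : IsCompactConvex K) : IsCompactConvex (-K) :=
  ⟨hK.isCompact.neg, hK.convex.neg⟩

theorem vadd (hK : IsCompactConvex K) (t : E) : IsCompactConvex (t +ᵥ K) :=
  ⟨hK.isCompact.vadd t, hK.convex.vadd t⟩

theorem image (hK : IsCompactConvex K) (f : E →L[ℝ] F) : IsCompactConvex (f '' K) :=
  ⟨hK.isCompact.image f.continuous, hK.convex.is_linear_image f.isLinear⟩

theorem inter_le (hK : IsCompactConvex K) (f : E →L[ℝ] ℝ) (c : ℝ) :
    IsCompactConvex (K ∩ {x | f x ≤ c}) :=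
  ⟨hK.isCompact.inter_right (isClosed_le f.continuous continuous_const),
    hK.convex.inter (convex_halfSpace_le f.isLinear c)⟩

theorem inter_ge (hK : IsCompactConvex K) (f : E →L[ℝ] ℝ) (c : ℝ) :
    IsCompactConvex (K ∩ {x | c ≤ f x}) :=
  ⟨hK.isCompact.inter_right (isClosed_le continuous_const f.continuous),
    hK.convex.inter (convex_halfSpace_ge f.isLinear c)⟩

theorem segment (x y : E) : IsCompactConvex (segment ℝ x y) := by
  refine ⟨?_, convex_segment x y⟩
  rw [segment_eq_image_lineMap]
  exact isCompact_Icc.image AffineMap.lineMap_continuous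

end IsCompactConvex

end CompactConvex

section TendstoBody

variable {ι κ E F : Type*} {l : Filter ι}

theorem TendstoBody.comp [TopologicalSpace E] {K : ι → Set E} {M : Set E}
    (h : TendstoBody K l M) {l' : Filter κ} {u : κ → ι} (hu : Tendsto u l' l) :
    TendstoBody (K ∘ u) l' M :=
  ⟨fun x hx => hu.eventually (h.eventually_mem x hx),
    fun U hU hMU => hu.eventually (h.eventually_subset U hU hMU)⟩

theorem TendstoBody.inter_left [TopologicalSpace E] {K : ι → Set E} {M C : Set E} (hC : IsClosed C)
    (h : TendstoBody K l M) : TendstoBody (fun i => C ∩ K i) l (C ∩ M) := by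
  constructor
  · intro x hx
    rw [interior_inter] at hx
    filter_upwards [h.eventually_mem x hx.2] with i hi using ⟨interior_subset hx.1, hi⟩
  · intro U hU hMU
    filter_upwards [h.eventually_subset (Cᶜ ∪ U) (hC.isOpen_compl.union hU) fun x hx =>
      or_iff_not_imp_left.2 fun hxC => hMU ⟨not_not.1 hxC, hx⟩] with i hi x hx
    exact (hi hx.2).resolve_left fun h => h hx.1

theorem TendstoBody.image_homeomorph [TopologicalSpace E] [TopologicalSpace F] {K : ι → Set E}
    {M : Set E} (e : E ≃ₜ F) (h : TendstoBody K l M) :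
    TendstoBody (fun i => e '' K i) l (e '' M) := by
  constructor
  · intro x hx
    rw [← e.image_interior] at hx
    obtain ⟨y, hy, rfl⟩ := hx
    filter_upwards [h.eventually_mem y hy] with i hi using mem_image_of_mem e hi
  · intro U hU hMU
    filter_upwards [h.eventually_subset _ (hU.preimage e.continuous) (image_subset_iff.1 hMU)]
      with i hi using image_subset_iff.2 hi

/-- On a bounded family, the upper half of the convergence can be checked pointwise. -/
theorem tendstoBody_of_isCompact [TopologicalSpace E] {K : ι → Set E} {M C : Set E}
    (hC : IsCompact C) (hKC : ∀ᶠ i in l, K i ⊆ C)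
    (hmem : ∀ x ∈ interior M, ∀ᶠ i in l, x ∈ K i)
    (hnot : ∀ x ∉ M, ∀ᶠ p in l ×ˢ nhds x, p.2 ∉ K p.1) : TendstoBody K l M := by
  refine ⟨hmem, fun U hU hMU => ?_⟩
  obtain ⟨A, hA, V, hV, hAV⟩ := mem_prod_iff.1 <| (hC.diff hU).mem_prod_nhdsSet_of_forall
    fun x hx => hnot x fun hxM => hx.2 (hMU hxM)
  filter_upwards [hKC, hA] with i hi hiA x hx
  by_contra hxU
  have hmem : (i, x) ∈ A ×ˢ V := ⟨hiA, subset_of_mem_nhdsSet hV ⟨hi hx, hxU⟩⟩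
  exact hAV hmem hx

theorem tendstoBody_of_antitone [TopologicalSpace E] [T2Space E] {K : ℕ → Set E}
    (hK : Antitone K) (hc : ∀ i, IsCompact (K i)) : TendstoBody K atTop (⋂ i, K i) := by
  constructor
  · exact fun x hx => .of_forall fun i => mem_iInter.1 (interior_subset hx) i
  · intro U hU hMU
    obtain ⟨i, hi⟩ := exists_subset_nhds_of_isCompact hK.directed_ge hc
      (fun x hx => hU.mem_nhds (hMU hx))
    filter_upwards [eventually_ge_atTop i] with j hj using (hK hj).trans hi

end TendstoBody

section SimpleValuation

variable {E : Type*} [NormedAddCommGroup E] [NormedSpace ℝ E] {φ : Set E → ℝ} {K M : Set E}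

namespace IsSimpleValuation

theorem tendsto {ι : Type*} {l : Filter ι} [l.IsCountablyGenerated] {K : ι → Set E}
    (hφ : IsSimpleValuation φ) (hK : ∀ i, IsCompactConvex (K i)) (hM : IsCompactConvex M)
    (h : TendstoBody K l M) : Tendsto (fun i => φ (K i)) l (nhds (φ M)) :=
  tendsto_of_seq_tendsto fun _ hu => hφ.tendsto_nat (fun _ => hK _) hM (h.comp hu)

theorem eq_zero_of_subset_hyperplane (hφ : IsSimpleValuation φ) (hK : IsCompactConvex K)
    {f : E →L[ℝ] ℝ} (hf : f ≠ 0) {c : ℝ} (hc : ∀ x ∈ K, f x = c) : φ K = 0 := by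
  refine hφ.simple hK (eq_empty_of_forall_notMem fun x hx => ?_)
  have hopen : IsOpen (f '' interior K) := f.isOpenMap_of_ne_zero hf _ isOpen_interior
  have hsub : f '' interior K ⊆ {c} := by
    rintro _ ⟨y, hy, rfl⟩
    exact hc y (interior_subset hy)
  have := hopen.subset_interior_iff.2 hsub (mem_image_of_mem f hx)
  rwa [interior_singleton] at this

theorem cut (hφ : IsSimpleValuation φ) (hK : IsCompactConvex K) {f : E →L[ℝ] ℝ} (hf : f ≠ 0)
    (c : ℝ) : φ K = φ (K ∩ {x | f x ≤ c}) + φ (K ∩ {x | c ≤ f x}) := by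
  have hunion : K ∩ {x | f x ≤ c} ∪ K ∩ {x | c ≤ f x} = K := by
    rw [← inter_union_distrib_left]
    exact inter_eq_left.2 fun x _ => le_total (f x) c
  have hzero : φ (K ∩ {x | f x ≤ c} ∩ (K ∩ {x | c ≤ f x})) = 0 :=
    hφ.eq_zero_of_subset_hyperplane ((hK.inter_le f c).inter (hK.inter_ge f c)) hf
      fun x hx => le_antisymm hx.1.2 hx.2.2
  have h := hφ.union (hK.inter_le f c) (hK.inter_ge f c) (hunion.symm ▸ hK.convex)
  rwa [hunion, hzero, sub_zero] at h

end IsSimpleValuation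

end SimpleValuation

/-! ### Valuations on sums with segments and on prisms -/

/-- The valuations of Klain's theorem: translation invariant, even, simple and continuous. -/
structure IsKlainValuation {E : Type*} [NormedAddCommGroup E] [NormedSpace ℝ E]
    (φ : Set E → ℝ) : Prop extends IsSimpleValuation φ where
  vadd : ∀ {K : Set E}, IsCompactConvex K → ∀ t : E, φ (t +ᵥ K) = φ K
  neg : ∀ {K : Set E}, IsCompactConvex K → φ (-K) = φ K

section Segment

variable {E : Type*} [NormedAddCommGroup E] [NormedSpace ℝ E] {φ : Set E → ℝ} {K : Set E}

theorem mem_add_segment_zero {u x : E} {c : ℝ} (hc : 0 ≤ c) :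
    x ∈ K + segment ℝ 0 (c • u) ↔ ∃ s ∈ Icc 0 c, x - s • u ∈ K := by
  rw [segment_eq_image', Set.mem_add]
  constructor
  · rintro ⟨k, hk, _, ⟨θ, hθ, rfl⟩, rfl⟩
    exact ⟨θ * c, ⟨mul_nonneg hθ.1 hc, mul_le_of_le_one_left hc hθ.2⟩, by simpa [smul_smul]⟩
  · rintro ⟨s, hs, hx⟩
    refine ⟨_, hx, _, ⟨s / c, ⟨div_nonneg hs.1 hc, div_le_one_of_le₀ hs.2 hc⟩, rfl⟩, ?_⟩
    rcases hc.eq_or_lt with rfl | hc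
    · simp [le_antisymm hs.2 hs.1]
    · simp [smul_smul, div_mul_cancel₀ s hc.ne']

theorem add_segment_zero_inter_vadd (hK : Convex ℝ K) (u : E) {a b : ℝ} (ha : 0 ≤ a)
    (hb : 0 ≤ b) :
    (K + segment ℝ 0 (a • u)) ∩ (a • u +ᵥ (K + segment ℝ 0 (b • u))) = a • u +ᵥ K := by
  ext x
  simp only [mem_inter_iff, mem_vadd_set_iff_neg_vadd_mem, vadd_eq_add, neg_add_eq_sub,
    mem_add_segment_zero ha, mem_add_segment_zero hb]
  constructor
  · rintro ⟨⟨s, hs, hxs⟩, r, hr, hxr⟩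
    have hmem : x - a • u ∈ segment ℝ (x - s • u) (x - a • u - r • u) := by
      have h := mem_segment_translate ℝ x (x := (-a) • u) (b := (-s) • u) (c := (-(a + r)) • u)
      have hseg : -a ∈ segment ℝ (-s) (-(a + r)) := by
        rw [segment_symm, segment_eq_Icc (by linarith [hs.2, hr.1])]
        exact ⟨by linarith [hr.1], by linarith [hs.2]⟩
      have himg := mem_image_of_mem (LinearMap.toSpanSingleton ℝ E u).toAffineMap hseg
      rw [image_segment] at himg
      convert h.2 himg using 1 <;> first | module | (congr 1 <;> module)
    exact hK.segment_subset hxs hxr hmem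
  · intro hx
    exact ⟨⟨a, ⟨ha, le_rfl⟩, hx⟩, 0, ⟨le_rfl, hb⟩, by simpa using hx⟩

theorem IsKlainValuation.add_segment_zero_add (hφ : IsKlainValuation φ) (hK : IsCompactConvex K)
    (u : E) {a b : ℝ} (ha : 0 ≤ a) (hb : 0 ≤ b) :
    φ (K + segment ℝ 0 ((a + b) • u)) =
      φ (K + segment ℝ 0 (a • u)) + φ (K + segment ℝ 0 (b • u)) - φ K := by
  have hbody (c : ℝ) : IsCompactConvex (K + segment ℝ 0 (c • u)) :=
    hK.add (.segment _ _)
  have hunion : K + segment ℝ 0 ((a + b) • u) =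
      (K + segment ℝ 0 (a • u)) ∪ (a • u +ᵥ (K + segment ℝ 0 (b • u))) := by
    ext x
    simp only [mem_union, mem_vadd_set_iff_neg_vadd_mem, vadd_eq_add, neg_add_eq_sub,
      mem_add_segment_zero ha, mem_add_segment_zero hb, mem_add_segment_zero (add_nonneg ha hb)]
    constructor
    · rintro ⟨s, hs, hx⟩
      rcases le_total s a with hsa | hsa
      · exact .inl ⟨s, ⟨hs.1, hsa⟩, hx⟩
      · exact .inr ⟨s - a, ⟨by linarith, by linarith [hs.2]⟩, by convert hx using 1; module⟩
    · rintro (⟨s, hs, hx⟩ | ⟨s, hs, hx⟩)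
      · exact ⟨s, ⟨hs.1, by linarith [hs.2]⟩, hx⟩
      · exact ⟨s + a, ⟨by linarith [hs.1], by linarith [hs.2]⟩, by convert hx using 1; module⟩
  have h := hφ.union (hbody a) ((hbody b).vadd (a • u)) (hunion ▸ (hbody _).convex)
  rwa [← hunion, add_segment_zero_inter_vadd hK.convex u ha hb, hφ.vadd (hbody b),
    hφ.vadd hK] at h

end Segment

section Prism

variable {E : Type*} [NormedAddCommGroup E] [InnerProductSpace ℝ E]

/-- The coordinate along `u` of the decomposition `E = (ℝ ∙ u)ᗮ ⊕ ℝ u`. -/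
noncomputable def height (u : E) : E →L[ℝ] ℝ := (‖u‖ ^ 2)⁻¹ • innerSL ℝ u

/-- The right prism with base `A` and edge vector `u`. -/
def prism (u : E) (A : Set (ℝ ∙ u)ᗮ) : Set E :=
  {x | (ℝ ∙ u)ᗮ.orthogonalProjectionOnto x ∈ A ∧ height u x ∈ Icc 0 1}

variable {u : E}

theorem height_self (hu : u ≠ 0) : height u u = 1 := by
  simp [height, hu]

theorem height_ne_zero (hu : u ≠ 0) : height u ≠ 0 := fun h => by
  simpa [h] using height_self hu

theorem height_coe (a : (ℝ ∙ u)ᗮ) : height u (a : E) = 0 := by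
  simp [height, Submodule.mem_orthogonal_singleton_iff_inner_right.1 a.2]

theorem orthogonalProjectionOnto_add_height_smul (u x : E) :
    ((ℝ ∙ u)ᗮ.orthogonalProjectionOnto x : E) + height u x • u = x := by
  have h := Submodule.starProjection_orthogonal_val (K := ℝ ∙ u) x
  rw [Submodule.starProjection_singleton] at h
  rw [← Submodule.starProjection_apply, h]
  simp [height, div_eq_inv_mul]

theorem orthogonalProjectionOnto_coe_add_smul (a : (ℝ ∙ u)ᗮ) (s : ℝ) :
    (ℝ ∙ u)ᗮ.orthogonalProjectionOnto ((a : E) + s • u) = a := by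
  rw [map_add, map_smul, Submodule.orthogonalProjectionOnto_mem_subspace_eq_self,
    Submodule.orthogonalProjectionOnto_orthogonalComplement_singleton_eq_zero, smul_zero, add_zero]

theorem prism_eq_add_segment (hu : u ≠ 0) (A : Set (ℝ ∙ u)ᗮ) :
    prism u A = (ℝ ∙ u)ᗮ.subtypeL '' A + segment ℝ 0 u := by
  ext x
  have hseg := mem_add_segment_zero (K := (ℝ ∙ u)ᗮ.subtypeL '' A) (u := u) (x := x) zero_le_one
  rw [one_smul] at hseg
  rw [hseg]
  constructor
  · rintro ⟨hA, hx⟩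
    exact ⟨_, hx, _, hA, eq_sub_of_add_eq (orthogonalProjectionOnto_add_height_smul u x)⟩
  · rintro ⟨s, hs, a, ha, hax⟩
    obtain rfl : (a : E) + s • u = x := add_eq_of_eq_sub hax
    refine ⟨by rwa [orthogonalProjectionOnto_coe_add_smul], ?_⟩
    simpa [height_coe, height_self hu] using hs

theorem IsCompactConvex.prism {A : Set (ℝ ∙ u)ᗮ} (hA : IsCompactConvex A) (hu : u ≠ 0) :
    IsCompactConvex (prism u A) :=
  prism_eq_add_segment hu A ▸ (hA.image _).add (.segment _ _)

theorem prism_vadd (t : (ℝ ∙ u)ᗮ) (A : Set (ℝ ∙ u)ᗮ) :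
    prism u (t +ᵥ A) = (t : E) +ᵥ prism u A := by
  ext x
  simp [prism, mem_vadd_set_iff_neg_vadd_mem, height_coe]

theorem prism_neg (hu : u ≠ 0) (A : Set (ℝ ∙ u)ᗮ) : prism u (-A) = u +ᵥ -prism u A := by
  ext x
  simp only [prism, mem_vadd_set_iff_neg_vadd_mem, mem_ofPred_eq, Set.mem_neg, vadd_eq_add, neg_add,
    neg_neg, map_add, map_neg, height_self hu, mem_Icc,
    Submodule.orthogonalProjectionOnto_orthogonalComplement_singleton_eq_zero, zero_add]
  exact and_congr_right fun _ => ⟨fun h => ⟨by linarith, by linarith⟩,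
    fun h => ⟨by linarith, by linarith⟩⟩

theorem orthogonalProjectionOnto_mem_interior [FiniteDimensional ℝ E] {A : Set (ℝ ∙ u)ᗮ} {x : E}
    (hx : x ∈ interior (prism u A)) : (ℝ ∙ u)ᗮ.orthogonalProjectionOnto x ∈ interior A := by
  have hopen : IsOpenMap (ℝ ∙ u)ᗮ.orthogonalProjectionOnto :=
    LinearMap.isOpenMap_of_finiteDimensional (ℝ ∙ u)ᗮ.orthogonalProjectionOnto.toLinearMap
      fun a => ⟨a, Submodule.orthogonalProjectionOnto_mem_subspace_eq_self a⟩
  refine interior_maximal ?_ (hopen _ isOpen_interior) (mem_image_of_mem _ hx)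
  rintro _ ⟨y, hy, rfl⟩
  exact (interior_subset hy).1

theorem TendstoBody.prism [FiniteDimensional ℝ E] (hu : u ≠ 0) {ι : Type*} {l : Filter ι}
    {A : ι → Set (ℝ ∙ u)ᗮ} {B : Set (ℝ ∙ u)ᗮ} (hB : IsCompact B) (h : TendstoBody A l B) :
    TendstoBody (fun i => prism u (A i)) l (prism u B) := by
  constructor
  · intro x hx
    filter_upwards [h.eventually_mem _ (orthogonalProjectionOnto_mem_interior hx)] with i hi
    exact ⟨hi, (interior_subset hx).2⟩
  · intro U hU hBU
    let f : (ℝ ∙ u)ᗮ × ℝ → E := fun p => p.1 + p.2 • u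
    have hf : Continuous f := by fun_prop
    have hsub : B ×ˢ Icc (0 : ℝ) 1 ⊆ f ⁻¹' U := fun p hp =>
      hBU ⟨by simpa [f, orthogonalProjectionOnto_coe_add_smul] using hp.1, by
        simpa [f, height_coe, height_self hu] using hp.2⟩
    obtain ⟨V, W, hV, -, hBV, hW, hVW⟩ := generalized_tube_lemma hB isCompact_Icc
      (hU.preimage hf) hsub
    filter_upwards [h.eventually_subset V hV hBV] with i hi x hx
    rw [← orthogonalProjectionOnto_add_height_smul u x]
    exact hVW (mk_mem_prod (hi hx.1) (hW hx.2))

theorem IsKlainValuation.prism [FiniteDimensional ℝ E] {φ : Set E → ℝ} (hφ : IsKlainValuation φ)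
    (hu : u ≠ 0) : IsKlainValuation fun A => φ (prism u A) where
  empty := by simpa [_root_.prism] using hφ.empty
  union {A B} hA hB hAB := by
    have hunion : _root_.prism u (A ∪ B) = _root_.prism u A ∪ _root_.prism u B := by
      ext x; simp [_root_.prism, or_and_right]
    have hinter : _root_.prism u (A ∩ B) = _root_.prism u A ∩ _root_.prism u B := by
      ext x; simp only [_root_.prism, mem_inter_iff, mem_ofPred_eq]; tauto
    have hconvex := (IsCompactConvex.prism ⟨hA.isCompact.union hB.isCompact, hAB⟩ hu).convex
    simp only [hunion, hinter] at hconvex ⊢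
    exact hφ.union (hA.prism hu) (hB.prism hu) hconvex
  simple {A} hA hint := hφ.simple (hA.prism hu) <| eq_empty_of_forall_notMem fun x hx =>
    (hint ▸ orthogonalProjectionOnto_mem_interior hx : _ ∈ (∅ : Set (ℝ ∙ u)ᗮ))
  tendsto_nat hA hB h := hφ.tendsto (fun i => (hA i).prism hu) (hB.prism hu)
    (h.prism hu hB.isCompact)
  vadd hA t := by rw [prism_vadd, hφ.vadd (hA.prism hu)]
  neg hA := by rw [prism_neg hu, hφ.vadd (hA.prism hu).neg, hφ.neg (hA.prism hu)]

/-- The hypothesis of Klain's theorem in dimension `m`: `φ` vanishes on the parallelotopes spanned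
by `m` vectors. -/
def VanishesOnParallelotopes (φ : Set E → ℝ) (m : ℕ) : Prop :=
  ∀ w : Fin m → E, φ (parallelepiped w) = 0

theorem VanishesOnParallelotopes.prism {φ : Set E → ℝ} {m : ℕ}
    (h : VanishesOnParallelotopes φ (m + 1)) (hu : u ≠ 0) :
    VanishesOnParallelotopes (fun A => φ (prism u A)) m := by
  intro w
  convert h (Fin.cons u fun i => (w i : E)) using 2
  rw [prism_eq_add_segment hu, parallelepiped_eq_sum_segment (Fin.cons _ _), Fin.sum_univ_succ,
    add_comm]
  simp only [Fin.cons_zero, Fin.cons_succ]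
  rw [← parallelepiped_eq_sum_segment]
  exact congrArg _ (image_parallelepiped (ℝ ∙ u)ᗮ.subtype w)

section Sweep

variable {K : Set E} {a b : ℝ}

theorem add_segment_zero_inter_height_le (hu : u ≠ 0) (hab : a ≤ b)
    (hK : ∀ k ∈ K, height u k ∈ Icc a b) :
    (K + segment ℝ 0 ((b - a + 1) • u)) ∩ {x | height u x ≤ b} =
      (K + segment ℝ 0 ((b - a) • u)) ∩ {x | height u x ≤ b} := by
  ext x
  simp only [mem_inter_iff, mem_ofPred_eq, mem_add_segment_zero (sub_nonneg.2 hab),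
    mem_add_segment_zero (add_nonneg (sub_nonneg.2 hab) zero_le_one)]
  refine and_congr_left fun hx => ⟨fun ⟨s, hs, hxs⟩ => ⟨s, ⟨hs.1, ?_⟩, hxs⟩,
    fun ⟨s, hs, hxs⟩ => ⟨s, ⟨hs.1, by linarith [hs.2]⟩, hxs⟩⟩
  have := (hK _ hxs).1
  rw [map_sub, map_smul, height_self hu, smul_eq_mul] at this
  linarith

theorem add_segment_zero_inter_slab (hu : u ≠ 0) (hab : a ≤ b)
    (hK : ∀ k ∈ K, height u k ∈ Icc a b) :
    (K + segment ℝ 0 ((b - a + 1) • u)) ∩ {x | b ≤ height u x} ∩ {x | height u x ≤ b + 1} =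
      b • u +ᵥ prism u ((ℝ ∙ u)ᗮ.orthogonalProjectionOnto '' K) := by
  ext x
  have hproj : (ℝ ∙ u)ᗮ.orthogonalProjectionOnto (x - b • u) =
      (ℝ ∙ u)ᗮ.orthogonalProjectionOnto x := by
    simp [Submodule.orthogonalProjectionOnto_orthogonalComplement_singleton_eq_zero]
  simp only [mem_inter_iff, mem_ofPred_eq, mem_vadd_set_iff_neg_vadd_mem, vadd_eq_add,
    neg_add_eq_sub, prism, hproj, map_sub, map_smul, height_self hu, smul_eq_mul, mul_one, mem_Icc,
    mem_add_segment_zero (add_nonneg (sub_nonneg.2 hab) zero_le_one), mem_image]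
  constructor
  · rintro ⟨⟨⟨s, -, hxs⟩, hbx⟩, hxb⟩
    refine ⟨⟨_, hxs, ?_⟩, by linarith, by linarith⟩
    simp [Submodule.orthogonalProjectionOnto_orthogonalComplement_singleton_eq_zero]
  · rintro ⟨⟨k, hk, hkx⟩, hbx, hxb⟩
    have hkI := hK k hk
    refine ⟨⟨⟨height u x - height u k, ⟨by linarith [hkI.2], by linarith [hkI.1]⟩, ?_⟩,
      by linarith⟩, by linarith⟩
    convert hk using 1
    rw [← orthogonalProjectionOnto_add_height_smul u k, hkx]
    nth_rw 1 [← orthogonalProjectionOnto_add_height_smul u x]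
    simp only [map_add, map_smul, height_coe, height_self hu, smul_eq_mul]
    module

theorem add_segment_zero_inter_height_ge (hu : u ≠ 0) (hab : a ≤ b)
    (hK : ∀ k ∈ K, height u k ∈ Icc a b) :
    (K + segment ℝ 0 ((b - a + 1) • u)) ∩ {x | b ≤ height u x} ∩ {x | b + 1 ≤ height u x} =
      u +ᵥ ((K + segment ℝ 0 ((b - a) • u)) ∩ {x | b ≤ height u x}) := by
  ext x
  simp only [mem_inter_iff, mem_ofPred_eq, mem_vadd_set_iff_neg_vadd_mem, vadd_eq_add,
    neg_add_eq_sub, map_sub, height_self hu, mem_add_segment_zero (sub_nonneg.2 hab),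
    mem_add_segment_zero (add_nonneg (sub_nonneg.2 hab) zero_le_one)]
  constructor
  · rintro ⟨⟨⟨s, hs, hxs⟩, -⟩, hx⟩
    have := (hK _ hxs).2
    rw [map_sub, map_smul, height_self hu, smul_eq_mul] at this
    exact ⟨⟨s - 1, ⟨by linarith, by linarith [hs.2]⟩, by convert hxs using 1; module⟩,
      by linarith⟩
  · rintro ⟨⟨s, hs, hxs⟩, hx⟩
    exact ⟨⟨⟨s + 1, ⟨by linarith [hs.1], by linarith [hs.2]⟩, by convert hxs using 1; module⟩,
      by linarith⟩, by linarith⟩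

end Sweep

/-- A body swept along `u` beyond its own height contains a full prism over its projection; on
either side of that prism it looks like the body swept a little less. -/
theorem IsKlainValuation.add_segment_zero [FiniteDimensional ℝ E] {φ : Set E → ℝ}
    (hφ : IsKlainValuation φ) (hu : u ≠ 0)
    (hprism : ∀ A : Set (ℝ ∙ u)ᗮ, IsCompactConvex A → φ (_root_.prism u A) = 0) {K : Set E}
    (hK : IsCompactConvex K) : φ (K + segment ℝ 0 u) = φ K := by
  obtain ⟨r, hr, hrK⟩ := (hK.isCompact.image (height u).continuous).isBounded.exists_pos_norm_le
  have hr₀ : -r ≤ r := by linarith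
  have hKI : ∀ k ∈ K, height u k ∈ Icc (-r) r := fun k hk =>
    abs_le.1 (hrK _ (mem_image_of_mem _ hk))
  set c := r - -r with hc
  have hbody (w : E) : IsCompactConvex (K + segment ℝ 0 w) := hK.add (.segment _ _)
  have hlong := hφ.add_segment_zero_add hK u (sub_nonneg.2 hr₀) zero_le_one
  have hcut := hφ.cut (hbody ((c + 1) • u)) (height_ne_zero hu) r
  have hcut_top := hφ.cut ((hbody ((c + 1) • u)).inter_ge (height u) r) (height_ne_zero hu)
    (r + 1)
  have hcut_short := hφ.cut (hbody (c • u)) (height_ne_zero hu) r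
  rw [add_segment_zero_inter_slab hu hr₀ hKI, add_segment_zero_inter_height_ge hu hr₀ hKI,
    hφ.vadd ((hbody _).inter_ge _ _), hφ.vadd ((hK.image _).prism hu),
    hprism _ (hK.image _)] at hcut_top
  rw [add_segment_zero_inter_height_le hu hr₀ hKI] at hcut
  rw [one_smul, ← hc] at hlong
  linarith

theorem IsKlainValuation.add_segment_neg [FiniteDimensional ℝ E] {φ : Set E → ℝ}
    (hφ : IsKlainValuation φ) (h : ∀ w ≠ (0 : E), ∀ A : Set (ℝ ∙ w)ᗮ, IsCompactConvex A →
      φ (_root_.prism w A) = 0) {K : Set E} (hK : IsCompactConvex K) (w : E) :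
    φ (K + segment ℝ (-w) w) = φ K := by
  rcases eq_or_ne w 0 with rfl | hw
  · simp
  have hseg : segment ℝ (-w) w = -w +ᵥ segment ℝ 0 ((2 : ℝ) • w) := by
    rw [vadd_segment, vadd_eq_add, vadd_eq_add, add_zero]
    congr 1
    module
  have h2w : (2 : ℝ) • w ≠ 0 := smul_ne_zero two_ne_zero hw
  rw [hseg, add_vadd_comm, hφ.vadd (hK.add (.segment _ _)), hφ.add_segment_zero h2w (h _ h2w) hK]

end Prism

/-! ### Support functions and zonoids -/

section SupportBody

variable {E : Type*} [NormedAddCommGroup E] [InnerProductSpace ℝ E]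

/-- The origin-symmetric convex body with support function `p`. -/
def supportBody (p : Seminorm ℝ E) : Set E := {y | ∀ x, inner ℝ x y ≤ p x}

/-- The support function of the segment from `-u` to `u`. -/
noncomputable def absInner (u : E) : Seminorm ℝ E := (innerₗ E u).toSeminorm

theorem absInner_apply (u x : E) : absInner u x = |inner ℝ u x| := rfl

theorem supportBody_zero : supportBody (0 : Seminorm ℝ E) = {0} := by
  ext y
  refine ⟨fun hy => ?_, fun hy x => by simp [mem_singleton_iff.1 hy]⟩
  exact inner_self_eq_zero.1 (le_antisymm (hy y) real_inner_self_nonneg)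

theorem supportBody_subset_closedBall {p : Seminorm ℝ E} {C : ℝ} (hC₀ : 0 ≤ C)
    (hC : ∀ x, p x ≤ C * ‖x‖) : supportBody p ⊆ closedBall 0 C := by
  intro y hy
  rw [mem_closedBall_zero_iff]
  have h := (hy y).trans (hC y)
  rw [real_inner_self_eq_norm_sq] at h
  nlinarith [norm_nonneg y]

variable [FiniteDimensional ℝ E] {p : Seminorm ℝ E}

theorem continuous_seminorm (p : Seminorm ℝ E) : Continuous p :=
  p.convexOn.locallyLipschitz.continuous

theorem exists_forall_seminorm_le_mul_norm (p : Seminorm ℝ E) :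
    ∃ C, 0 < C ∧ ∀ x, p x ≤ C * ‖x‖ :=
  p.bound_of_continuous_normedSpace (continuous_seminorm p)

theorem isCompactConvex_supportBody (p : Seminorm ℝ E) : IsCompactConvex (supportBody p) := by
  have hinter : supportBody p = ⋂ x, {y | innerSL ℝ x y ≤ p x} := by
    ext y; simp [supportBody]
  constructor
  · obtain ⟨C, hC, hpC⟩ := exists_forall_seminorm_le_mul_norm p
    refine (isCompact_closedBall 0 C).of_isClosed_subset ?_
      (supportBody_subset_closedBall hC.le hpC)
    exact hinter ▸ isClosed_iInter fun x => isClosed_le (innerSL ℝ x).continuous continuous_const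
  · exact hinter ▸ convex_iInter fun x => convex_halfSpace_le (innerSL ℝ x).isLinear _

theorem exists_mem_supportBody_inner_eq (p : Seminorm ℝ E) (x : E) :
    ∃ y ∈ supportBody p, inner ℝ x y = p x := by
  rcases eq_or_ne x 0 with rfl | hx
  · exact ⟨0, fun z => by simp, by simp⟩
  let coord : Module.Dual ℝ (Submodule.span ℝ {x}) := LinearEquiv.coord ℝ E x hx
  have hcoord (z : Submodule.span ℝ {x}) : coord z • x = z :=
    LinearEquiv.coord_apply_smul ℝ E x hx z
  obtain ⟨f, hfx, hf⟩ := Module.Dual.exists_extension_of_le_seminorm_real (Submodule.span ℝ {x})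
    (p x • coord) (p := p) fun z => by
      rw [← hcoord, map_smul_eq_mul, mul_comm]
      exact mul_le_mul_of_nonneg_left (Real.le_norm_self (coord z)) (apply_nonneg p x)
  have hinner (z : E) :
      inner ℝ z ((InnerProductSpace.toDual ℝ E).symm f.toContinuousLinearMap) = f z := by
    rw [real_inner_comm, InnerProductSpace.toDual_symm_apply]; rfl
  refine ⟨_, fun z => (hinner z).trans_le (le_of_abs_le (hf z)), (hinner x).trans ?_⟩
  have hone : coord ⟨x, Submodule.mem_span_singleton_self x⟩ = 1 := LinearEquiv.coord_self ℝ E x hx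
  simpa [hone] using hfx ⟨x, Submodule.mem_span_singleton_self x⟩

theorem exists_lt_inner_of_notMem {K : Set E} (hK : IsCompactConvex K) {y : E} (hy : y ∉ K) :
    ∃ x : E, ∃ c, (∀ k ∈ K, inner ℝ x k < c) ∧ c < inner ℝ x y := by
  obtain ⟨f, c, hfK, hfy⟩ := geometric_hahn_banach_closed_point hK.convex hK.isCompact.isClosed hy
  refine ⟨(InnerProductSpace.toDual ℝ E).symm f, c, ?_⟩
  simpa only [InnerProductSpace.toDual_symm_apply] using ⟨hfK, hfy⟩

theorem supportBody_add_absInner (p : Seminorm ℝ E) (u : E) :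
    supportBody (p + absInner u) = supportBody p + segment ℝ (-u) u := by
  have hseg : segment ℝ (-u) u ⊆ supportBody (absInner u) := by
    refine (isCompactConvex_supportBody _).convex.segment_subset ?_ ?_ <;> intro x <;>
      rw [absInner_apply, real_inner_comm] <;> simp [neg_le_abs, le_abs_self]
  ext y
  constructor
  · intro hy
    by_contra hmem
    obtain ⟨x, c, hxK, hxy⟩ := exists_lt_inner_of_notMem
      ((isCompactConvex_supportBody p).add (.segment (-u) u)) hmem
    obtain ⟨k, hk, hxk⟩ := exists_mem_supportBody_inner_eq p x
    have hxy' : inner ℝ x y ≤ p x + |inner ℝ u x| := hy x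
    have hneg := hxK _ (add_mem_add hk (left_mem_segment ℝ (-u) u))
    have hpos := hxK _ (add_mem_add hk (right_mem_segment ℝ (-u) u))
    rw [inner_add_right, hxk, real_inner_comm] at hneg hpos
    rw [inner_neg_left] at hneg
    rcases abs_choice (inner ℝ u x) with h | h <;> linarith
  · rintro ⟨k, hk, s, hs, rfl⟩ x
    rw [inner_add_right]
    exact add_le_add (hk x) (hseg hs x)

/-- Support functions are compared on the unit sphere. -/
theorem tendstoBody_supportBody {ι : Type*} {l : Filter ι} {q : ι → Seminorm ℝ E}
    (h : ∀ δ > 0, ∀ᶠ i in l, ∀ x, |q i x - p x| ≤ δ * ‖x‖) :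
    TendstoBody (fun i => supportBody (q i)) l (supportBody p) := by
  obtain ⟨C, hC, hpC⟩ := exists_forall_seminorm_le_mul_norm p
  refine tendstoBody_of_isCompact (isCompact_closedBall 0 (C + 1)) ?_ ?_ ?_
  · filter_upwards [h 1 one_pos] with i hi
    refine supportBody_subset_closedBall (by linarith) fun x => ?_
    linarith [hpC x, le_of_abs_le (hi x)]
  · intro y hy
    obtain ⟨r, hr, hball⟩ := nhds_basis_closedBall.mem_iff.1 (mem_interior_iff_mem_nhds.1 hy)
    have hmargin (x : E) : inner ℝ x y + r * ‖x‖ ≤ p x := by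
      rcases eq_or_ne x 0 with rfl | hx
      · simp
      have hmem : y + (r * ‖x‖⁻¹) • x ∈ closedBall y r := by
        simp [norm_smul, abs_of_pos hr, hx]
      have := hball hmem x
      rw [inner_add_right, inner_smul_right, real_inner_self_eq_norm_sq] at this
      convert this using 2
      field_simp
    filter_upwards [h r hr] with i hi x
    linarith [hmargin x, neg_le_of_abs_le (hi x)]
  · intro y hy
    obtain ⟨x, hx⟩ : ∃ x, p x < inner ℝ x y := by simpa [supportBody] using hy
    have hq : Tendsto (fun i => q i x) l (nhds (p x)) := by
      refine Metric.tendsto_nhds.2 fun δ hδ => ?_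
      filter_upwards [h (δ / (‖x‖ + 1)) (by positivity)] with i hi
      refine (hi x).trans_lt ?_
      rw [div_mul_eq_mul_div, div_lt_iff₀ (by positivity)]
      linarith
    have hlim : Tendsto (fun z : ι × E => inner ℝ x z.2 - q z.1 x) (l ×ˢ nhds y)
        (nhds (inner ℝ x y - p x)) :=
      (((innerSL ℝ x).continuous.tendsto y).comp tendsto_snd).sub (hq.comp tendsto_fst)
    filter_upwards [hlim.eventually (lt_mem_nhds (sub_pos.2 hx))] with z hz hmem
    exact (hmem x).not_gt (sub_pos.1 hz)

theorem exists_supportBody_eq {K : Set E} (hK : IsCompactConvex K) (hne : K.Nonempty)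
    (hneg : -K = K) : ∃ p : Seminorm ℝ E, supportBody p = K := by
  have : Nonempty K := hne.to_subtype
  obtain ⟨r, hr⟩ := hK.isCompact.isBounded.exists_norm_le
  have hbdd (x : E) : BddAbove (range fun y : K => absInner (y : E) x) := by
    refine ⟨r * ‖x‖, ?_⟩
    rintro _ ⟨y, rfl⟩
    exact (abs_real_inner_le_norm _ _).trans (by gcongr; exact hr y y.2)
  have happly (x : E) : (⨆ y : K, absInner (y : E)) x = ⨆ y : K, |inner ℝ (y : E) x| :=
    Seminorm.iSup_apply (Seminorm.bddAbove_range_iff.2 hbdd)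
  refine ⟨⨆ y : K, absInner (y : E), Subset.antisymm (fun y hy => ?_) fun y hy x => ?_⟩
  · by_contra hmem
    obtain ⟨x, c, hxK, hxy⟩ := exists_lt_inner_of_notMem hK hmem
    have hle := hy x
    rw [happly] at hle
    refine (hxy.trans_le hle).not_ge (ciSup_le fun k => abs_le'.2 ⟨?_, ?_⟩) <;>
      rw [real_inner_comm]
    · exact (hxK k k.2).le
    · rw [← inner_neg_right]
      exact (hxK _ (hneg.subset (neg_mem_neg.2 k.2))).le
  · rw [happly, real_inner_comm]
    exact (le_abs_self _).trans (le_ciSup (hbdd x) ⟨y, hy⟩)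

end SupportBody

section Zonoid

variable {Ω E : Type*} [MeasurableSpace Ω] {μ : Measure Ω} [NormedAddCommGroup E]
  [InnerProductSpace ℝ E] {Y Z : Ω → E}

/-- The `μ`-average of a family of seminorms. -/
noncomputable def averageSeminorm (q : Ω → Seminorm ℝ E)
    (hq : ∀ x, Integrable (fun ω => q ω x) μ) : Seminorm ℝ E :=
  Seminorm.of (fun x => ∫ ω, q ω x ∂μ)
    (fun x y => by
      rw [← integral_add (hq x) (hq y)]
      exact integral_mono (hq _) ((hq x).add (hq y)) fun ω => map_add_le_add _ _ _)
    (fun c x => by simp only [map_smul_eq_mul, integral_const_mul])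

/-- The support function of the zonoid that averages the segments from `-Y ω` to `Y ω`. -/
noncomputable def zonoidSeminorm (hY : Integrable Y μ) : Seminorm ℝ E :=
  averageSeminorm (fun ω => absInner (Y ω)) fun x => (hY.inner_const x).abs

theorem zonoidSeminorm_apply (hY : Integrable Y μ) (x : E) :
    zonoidSeminorm hY x = ∫ ω, |inner ℝ (Y ω) x| ∂μ := rfl

theorem zonoidSeminorm_congr (hY : Integrable Y μ) (hZ : Integrable Z μ) (h : Y =ᵐ[μ] Z) :
    zonoidSeminorm hY = zonoidSeminorm hZ := by
  ext x
  exact integral_congr_ae (h.mono fun ω hω => by simp only [hω])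

theorem zonoidSeminorm_indicator_const {s : Set Ω} (hs : MeasurableSet s) (c : E)
    (h : Integrable (s.indicator fun _ => c) μ) :
    zonoidSeminorm h = absInner (μ.real s • c) := by
  ext x
  have hind : (fun ω => |inner ℝ (s.indicator (fun _ => c) ω) x|) =
      s.indicator fun _ => |inner ℝ c x| := by
    ext ω
    by_cases hω : ω ∈ s <;> simp [hω]
  rw [zonoidSeminorm_apply, hind, integral_indicator_const _ hs, absInner_apply,
    real_inner_smul_left, abs_mul, abs_of_nonneg measureReal_nonneg, smul_eq_mul]

theorem zonoidSeminorm_add (hY : Integrable Y μ) (hZ : Integrable Z μ)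
    (h : Disjoint (Function.support Y) (Function.support Z)) :
    zonoidSeminorm (hY.add hZ) = zonoidSeminorm hY + zonoidSeminorm hZ := by
  ext x
  rw [add_apply, zonoidSeminorm_apply, zonoidSeminorm_apply, zonoidSeminorm_apply,
    ← integral_add (hY.inner_const x).abs (hZ.inner_const x).abs]
  refine integral_congr_ae (.of_forall fun ω => ?_)
  by_cases hω : Y ω = 0
  · simp [hω]
  · simp [Function.notMem_support.1 (disjoint_left.1 h (Function.mem_support.2 hω))]

theorem abs_zonoidSeminorm_sub_le (hY : Integrable Y μ) (hZ : Integrable Z μ) (x : E) :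
    |zonoidSeminorm hY x - zonoidSeminorm hZ x| ≤ (∫ ω, ‖Y ω - Z ω‖ ∂μ) * ‖x‖ := by
  rw [zonoidSeminorm_apply, zonoidSeminorm_apply,
    ← integral_sub (hY.inner_const x).abs (hZ.inner_const x).abs, ← integral_mul_const]
  refine norm_integral_le_of_norm_le (f := fun ω => |inner ℝ (Y ω) x| - |inner ℝ (Z ω) x|)
    ((hY.sub hZ).norm.mul_const _) (.of_forall fun ω => ?_)
  refine (abs_abs_sub_abs_le_abs_sub _ _).trans ?_
  rw [← inner_sub_left]
  exact abs_real_inner_le_norm _ _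

variable [FiniteDimensional ℝ E] {φ : Set E → ℝ}

theorem IsSimpleValuation.supportBody_add_zonoidSeminorm (hφ : IsSimpleValuation φ)
    (hseg : ∀ K, IsCompactConvex K → ∀ u : E, φ (K + segment ℝ (-u) u) = φ K)
    (hY : Integrable Y μ) (p : Seminorm ℝ E) :
    φ (supportBody (p + zonoidSeminorm hY)) = φ (supportBody p) := by
  suffices h : ∀ (hY : Integrable Y μ) (p : Seminorm ℝ E),
      φ (supportBody (p + zonoidSeminorm hY)) = φ (supportBody p) from h hY p
  refine Integrable.induction (fun Y => ∀ (hY : Integrable Y μ) (p : Seminorm ℝ E),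
    φ (supportBody (p + zonoidSeminorm hY)) = φ (supportBody p)) ?_ ?_ ?_ ?_ hY
  · intro c s hs _ h p
    rw [zonoidSeminorm_indicator_const hs, supportBody_add_absInner,
      hseg _ (isCompactConvex_supportBody p)]
  · intro f g hdisj hf hg ihf ihg _ p
    rw [zonoidSeminorm_add hf hg hdisj, ← add_assoc, ihg hg, ihf hf]
  · refine isClosed_of_closure_subset fun f hf => ?_
    obtain ⟨g, hg, hlim⟩ := mem_closure_iff_seq_limit.1 hf
    intro hfi p
    have hgi (i : ℕ) : Integrable (g i) μ := L1.integrable_coeFn (g i)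
    have hbody : TendstoBody (fun i => supportBody (p + zonoidSeminorm (hgi i))) atTop
        (supportBody (p + zonoidSeminorm hfi)) := by
      refine tendstoBody_supportBody fun δ hδ => ?_
      filter_upwards [Metric.tendsto_nhds.1 hlim δ hδ] with i hi x
      rw [add_apply, add_apply, add_sub_add_left_eq_sub]
      refine (abs_zonoidSeminorm_sub_le (hgi i) hfi x).trans ?_
      gcongr
      rw [L1.dist_eq_integral_dist] at hi
      simpa only [dist_eq_norm] using hi.le
    have hφlim := hφ.tendsto_nat (fun i => isCompactConvex_supportBody _)
      (isCompactConvex_supportBody _) hbody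
    exact tendsto_nhds_unique hφlim (by simp only [hg _ (hgi _)]; exact tendsto_const_nhds)
  · intro f g hfg hf ih hg p
    rw [← zonoidSeminorm_congr hf hg hfg, ih hf]

end Zonoid

/-! ### Gaussian averages of zonoids -/

section Weight

open ProbabilityTheory

/-- A positive combination of centred Gaussian densities with signed coefficients, which puts most
of its mass far from the origin when `m` is large. -/
noncomputable def bump (m : ℕ) (y : ℝ) : ℝ := Real.exp (-y ^ 2) * (1 - Real.exp (-y ^ 2)) ^ m

/-- The even convex function with `farWeight m 0 = 0` and second derivative `2 * bump m`. -/
noncomputable def farWeight (m : ℕ) (t : ℝ) : ℝ := ∫ y, max (|t| - |y|) 0 * bump m y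

theorem one_sub_exp_neg_sq_mem (y : ℝ) : 1 - Real.exp (-y ^ 2) ∈ Icc 0 1 := by
  have := Real.exp_le_one_iff.2 (neg_nonpos.2 (sq_nonneg y))
  exact ⟨sub_nonneg.2 this, sub_le_self _ (Real.exp_pos _).le⟩

theorem one_sub_exp_neg_sq_le {y z : ℝ} (h : |y| ≤ |z|) :
    1 - Real.exp (-y ^ 2) ≤ 1 - Real.exp (-z ^ 2) := by
  exact sub_le_sub_left (Real.exp_le_exp.2 (neg_le_neg (sq_le_sq.2 h))) 1

theorem bump_nonneg (m : ℕ) (y : ℝ) : 0 ≤ bump m y :=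
  mul_nonneg (Real.exp_pos _).le (pow_nonneg (one_sub_exp_neg_sq_mem y).1 m)

theorem continuous_bump (m : ℕ) : Continuous (bump m) := by
  unfold bump
  fun_prop

theorem integrable_bump (m : ℕ) : Integrable (bump m) := by
  have hexp : Integrable fun y : ℝ => Real.exp (-y ^ 2) := by
    simpa using integrable_exp_neg_mul_sq one_pos
  refine hexp.mono' (continuous_bump m).aestronglyMeasurable (.of_forall fun y => ?_)
  rw [Real.norm_of_nonneg (bump_nonneg m y)]
  exact mul_le_of_le_one_right (Real.exp_pos _).le
    (pow_le_one₀ (one_sub_exp_neg_sq_mem y).1 (one_sub_exp_neg_sq_mem y).2)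

theorem integrable_mul_bump {f : ℝ → ℝ} (hf : Continuous f) {C : ℝ} (hC : ∀ y, |f y| ≤ C) (m : ℕ) :
    Integrable fun y => f y * bump m y :=
  (integrable_bump m).bdd_mul hf.aestronglyMeasurable (.of_forall hC)

theorem abs_max_sub_zero_le (t y : ℝ) : |max (|t| - |y|) 0| ≤ |t| := by
  rw [abs_of_nonneg (le_max_right _ _)]
  exact max_le (sub_le_self _ (abs_nonneg y)) (abs_nonneg t)

theorem integrable_max_mul_bump (m : ℕ) (t : ℝ) :
    Integrable fun y => max (|t| - |y|) 0 * bump m y :=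
  integrable_mul_bump (by fun_prop) (abs_max_sub_zero_le t) m

theorem farWeight_nonneg (m : ℕ) (t : ℝ) : 0 ≤ farWeight m t :=
  integral_nonneg fun y => mul_nonneg (le_max_right _ _) (bump_nonneg m y)

theorem farWeight_mono {s t : ℝ} (h : |s| ≤ |t|) (m : ℕ) : farWeight m s ≤ farWeight m t := by
  refine integral_mono (integrable_max_mul_bump m s) (integrable_max_mul_bump m t) fun y => ?_
  exact mul_le_mul_of_nonneg_right (max_le_max_right 0 (sub_le_sub_right h _)) (bump_nonneg m y)

theorem farWeight_le (m : ℕ) (t : ℝ) : farWeight m t ≤ |t| * ∫ y, bump m y := by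
  rw [← integral_const_mul]
  refine integral_mono (integrable_max_mul_bump m t) ((integrable_bump m).const_mul _) fun y => ?_
  exact mul_le_mul_of_nonneg_right ((le_abs_self _).trans (abs_max_sub_zero_le t y))
    (bump_nonneg m y)

theorem measurable_farWeight (m : ℕ) : Measurable (farWeight m) := by
  have : StronglyMeasurable fun p : ℝ × ℝ => max (|p.1| - |p.2|) 0 * bump m p.2 := by
    have := continuous_bump m
    exact Continuous.stronglyMeasurable (by fun_prop)
  exact this.integral_prod_right.measurable

theorem farWeight_eq_integral (m : ℕ) (t : ℝ) :
    farWeight m t = ∫ y, (|t + y| - |y|) * bump m y := by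
  have hint (s : ℝ) : Integrable fun y => (|s + y| - |y|) * bump m y :=
    integrable_mul_bump (by fun_prop) (fun y => by
      simpa using abs_abs_sub_abs_le_abs_sub (s + y) y) m
  have hneg : ∫ y, (|-t + y| - |y|) * bump m y = ∫ y, (|t + y| - |y|) * bump m y := by
    rw [← integral_neg_eq_self]
    refine integral_congr_ae (.of_forall fun y => ?_)
    simp only [bump, ← neg_add, abs_neg, even_two.neg_pow]
  have hsum : ∀ y, (|t + y| - |y|) * bump m y + (|-t + y| - |y|) * bump m y =
      2 * (max (|t| - |y|) 0 * bump m y) := fun y => by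
    have : |t + y| + |-t + y| = |y| + |y| + 2 * max (|t| - |y|) 0 := by
      rw [max_def]; grind
    linear_combination bump m y * this
  have := integral_add (hint t) (hint (-t))
  simp only [hsum, hneg, integral_const_mul] at this
  rw [farWeight]
  linarith

theorem integral_mul_exp_neg_mul_sq (F : ℝ → ℝ) {a : ℝ} (ha : 0 < a) :
    ∫ y, F y * Real.exp (-(a * y ^ 2)) =
      √(Real.pi / a) * ∫ y, F ((√(2 * a))⁻¹ * y) ∂gaussianReal 0 1 := by
  have hs : 0 < (√(2 * a))⁻¹ := by positivity
  have hscale := Measure.integral_comp_mul_left (fun y => F y * Real.exp (-(a * y ^ 2)))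
    (√(2 * a))⁻¹
  have hexp (y : ℝ) : -(a * ((√(2 * a))⁻¹ * y) ^ 2) = -y ^ 2 / 2 := by
    rw [mul_pow, inv_pow, Real.sq_sqrt (by positivity)]
    field_simp
  simp only [hexp, inv_inv, smul_eq_mul, abs_of_pos (inv_pos.1 hs)] at hscale
  rw [integral_gaussianReal_eq_integral_smul one_ne_zero]
  simp only [gaussianPDFReal_def, NNReal.coe_one, mul_one, sub_zero, smul_eq_mul, mul_assoc,
    integral_const_mul]
  have hcomm (y : ℝ) : Real.exp (-y ^ 2 / 2) * F ((√(2 * a))⁻¹ * y) =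
      F ((√(2 * a))⁻¹ * y) * Real.exp (-y ^ 2 / 2) := mul_comm _ _
  simp only [hcomm, hscale]
  rw [← mul_assoc, ← mul_assoc, ← Real.sqrt_inv, ← Real.sqrt_mul (by positivity),
    ← Real.sqrt_mul (by positivity), show Real.pi / a * (2 * Real.pi)⁻¹ * (2 * a) = 1 by field_simp,
    Real.sqrt_one, one_mul]

theorem bump_eq_sum (m : ℕ) (y : ℝ) : bump m y =
    ∑ j ∈ Finset.range (m + 1), (-1) ^ j * m.choose j * Real.exp (-((j + 1) * y ^ 2)) := by
  rw [bump, sub_eq_neg_add, add_pow, Finset.mul_sum]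
  refine Finset.sum_congr rfl fun j _ => ?_
  rw [one_pow, mul_one, neg_pow, ← Real.exp_nat_mul,
    show -((j + 1) * y ^ 2) = -y ^ 2 + j * -y ^ 2 by ring, Real.exp_add]
  ring

theorem farWeight_eq_sum (m : ℕ) : ∃ c s : ℕ → ℝ, ∀ t, farWeight m t =
    ∑ j ∈ Finset.range (m + 1), c j * ∫ y, (|t + s j * y| - |s j * y|) ∂gaussianReal 0 1 := by
  refine ⟨fun j => (-1) ^ j * m.choose j * √(Real.pi / (j + 1)), fun j => (√(2 * (j + 1)))⁻¹,
    fun t => ?_⟩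
  have hint (j : ℕ) : Integrable fun y : ℝ =>
      (|t + y| - |y|) * Real.exp (-((j + 1) * y ^ 2)) := by
    have hexp := integrable_exp_neg_mul_sq (b := (j + 1 : ℝ)) (by positivity)
    simp only [neg_mul] at hexp
    refine hexp.bdd_mul (c := |t|) (by fun_prop) (.of_forall fun y => ?_)
    simpa using abs_abs_sub_abs_le_abs_sub (t + y) y
  have hterm (y : ℝ) : (|t + y| - |y|) * bump m y = ∑ j ∈ Finset.range (m + 1),
      (-1) ^ j * m.choose j * ((|t + y| - |y|) * Real.exp (-((j + 1) * y ^ 2))) := by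
    rw [bump_eq_sum, Finset.mul_sum]
    exact Finset.sum_congr rfl fun j _ => by ring
  simp only [farWeight_eq_integral, hterm]
  rw [integral_finsetSum _ fun j _ => (hint j).const_mul _]
  refine Finset.sum_congr rfl fun j _ => ?_
  rw [integral_const_mul, integral_mul_exp_neg_mul_sq (fun y => |t + y| - |y|) (by positivity),
    ← mul_assoc]

theorem farWeight_le_pow (m : ℕ) (R : ℝ) :
    farWeight m R ≤ (1 - Real.exp (-R ^ 2)) ^ m * farWeight 0 R := by
  rw [farWeight, farWeight, ← integral_const_mul]
  refine integral_mono (integrable_max_mul_bump m R) ((integrable_max_mul_bump 0 R).const_mul _)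
    fun y => ?_
  rcases le_total |R| |y| with h | h
  · simp [max_eq_right (sub_nonpos.2 h)]
  · have hpow := pow_le_pow_left₀ (one_sub_exp_neg_sq_mem y).1 (one_sub_exp_neg_sq_le h) m
    have hmul := mul_le_mul_of_nonneg_right hpow
      (mul_nonneg (le_max_right (|R| - |y|) 0) (Real.exp_pos (-y ^ 2)).le)
    simp only [bump, pow_zero, mul_one]
    linarith

theorem le_farWeight (m : ℕ) {R : ℝ} (hR : 0 ≤ R) :
    R ^ 2 * Real.exp (-(3 * R) ^ 2) * (1 - Real.exp (-(2 * R) ^ 2)) ^ m ≤ farWeight m (4 * R) := by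
  have hconst : ∫ _ in Icc (2 * R) (3 * R),
      R * (Real.exp (-(3 * R) ^ 2) * (1 - Real.exp (-(2 * R) ^ 2)) ^ m) =
        R ^ 2 * Real.exp (-(3 * R) ^ 2) * (1 - Real.exp (-(2 * R) ^ 2)) ^ m := by
    rw [setIntegral_const, Real.volume_real_Icc_of_le (by linarith), smul_eq_mul]
    ring
  rw [← hconst]
  refine (setIntegral_mono_on (integrableOn_const measure_Icc_lt_top.ne)
    (integrable_max_mul_bump m _).integrableOn
    measurableSet_Icc fun y hy => ?_).trans (setIntegral_le_integral (integrable_max_mul_bump m _)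
      (.of_forall fun y => mul_nonneg (le_max_right _ _) (bump_nonneg m y)))
  have hy₀ : 0 ≤ y := by linarith [hy.1]
  have h₂ : |2 * R| ≤ |y| := by rw [abs_of_nonneg (by linarith), abs_of_nonneg hy₀]; exact hy.1
  have h₁ : R ≤ |4 * R| - |y| := by
    rw [abs_of_nonneg (by linarith), abs_of_nonneg hy₀]; linarith [hy.2]
  have hpow := (one_sub_exp_neg_sq_mem (2 * R)).1
  rw [bump]
  gcongr
  · exact h₁.trans (le_max_left _ _)
  · exact hy.2
  · exact hy.1

theorem integrable_farWeight_mul_pow (m k : ℕ) :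
    Integrable (fun t => farWeight m t * |t| ^ k) (gaussianReal 0 1) := by
  have hpow : Integrable (fun t : ℝ => |t| ^ (k + 1)) (gaussianReal 0 1) := by
    simpa using (memLp_id_gaussianReal (μ := 0) (v := 1) (k + 1 : ℕ)).integrable_norm_pow'
  refine (hpow.mul_const (∫ y, bump m y)).mono'
    ((measurable_farWeight m).mul (by fun_prop)).aestronglyMeasurable (.of_forall fun t => ?_)
  rw [Real.norm_of_nonneg (mul_nonneg (farWeight_nonneg m t) (by positivity)), pow_succ]
  nlinarith [mul_le_mul_of_nonneg_right (farWeight_le m t) (pow_nonneg (abs_nonneg t) k)]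

theorem le_integral_farWeight_mul_abs (m : ℕ) {R : ℝ} (hR : 0 ≤ R) :
    (gaussianReal 0 1).real (Ici R) * (farWeight m R * R) ≤
      ∫ t, farWeight m t * |t| ∂gaussianReal 0 1 := by
  have hint : Integrable (fun t => farWeight m t * |t|) (gaussianReal 0 1) := by
    simpa using integrable_farWeight_mul_pow m 1
  rw [← smul_eq_mul, ← setIntegral_const]
  refine (setIntegral_mono_on (integrableOn_const (measure_ne_top _ _)) hint.integrableOn
    measurableSet_Ici fun t ht => ?_).trans (setIntegral_le_integral hint
      (.of_forall fun t => mul_nonneg (farWeight_nonneg m t) (abs_nonneg t)))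
  have htR : |R| ≤ |t| := abs_le_abs_of_nonneg hR ht
  exact mul_le_mul (farWeight_mono htR m) ((le_abs_self R).trans htR) hR (farWeight_nonneg m t)

theorem integral_farWeight_le (m : ℕ) {R : ℝ} (hR : 0 < R) :
    ∫ t, farWeight m t ∂gaussianReal 0 1 ≤
      farWeight m R + R⁻¹ * ∫ t, farWeight m t * |t| ∂gaussianReal 0 1 := by
  have hint₀ : Integrable (farWeight m) (gaussianReal 0 1) := by
    simpa using integrable_farWeight_mul_pow m 0
  have hint₁ : Integrable (fun t => farWeight m t * |t|) (gaussianReal 0 1) := by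
    simpa using integrable_farWeight_mul_pow m 1
  have hle := integral_mono hint₀ ((integrable_const (farWeight m R)).add (hint₁.const_mul R⁻¹))
    fun t => ?_
  · simpa [integral_add (integrable_const _) (hint₁.const_mul _), integral_const_mul] using hle
  have hnonneg := farWeight_nonneg m t
  rcases le_total |t| R with h | h
  · exact le_add_of_le_of_nonneg (farWeight_mono (h.trans (le_abs_self R)) m) (by positivity)
  · refine le_add_of_nonneg_of_le (farWeight_nonneg m R) ?_
    change _ ≤ R⁻¹ * (farWeight m t * |t|)
    rw [mul_left_comm]
    exact le_mul_of_one_le_right hnonneg ((one_le_inv_mul₀ hR).2 h)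

/-- `farWeight m` dwarfs its own values at bounded distance as `m` grows. -/
theorem exists_integral_farWeight_le {δ : ℝ} (hδ : 0 < δ) : ∃ m,
    0 < ∫ t, farWeight m t * |t| ∂gaussianReal 0 1 ∧
    ∫ t, farWeight m t ∂gaussianReal 0 1 ≤ δ * ∫ t, farWeight m t * |t| ∂gaussianReal 0 1 := by
  set R := 2 / δ with hRδ
  have hR : 0 < R := by positivity
  set near := 1 - Real.exp (-R ^ 2)
  set far := 1 - Real.exp (-(2 * R) ^ 2)
  have hnear : 0 ≤ near := (one_sub_exp_neg_sq_mem R).1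
  have hlt : near < far := sub_lt_sub_left (Real.exp_lt_exp.2 (by nlinarith)) 1
  have hfar : 0 < far := hnear.trans_lt hlt
  have hmass : 0 < (gaussianReal 0 1).real (Ici (4 * R)) := by
    refine ENNReal.toReal_pos (fun h => ?_) (measure_ne_top _ _)
    simpa using gaussianReal_absolutelyContinuous' 0 one_ne_zero h
  set c := (gaussianReal 0 1).real (Ici (4 * R)) * (R ^ 2 * Real.exp (-(3 * R) ^ 2) * (4 * R))
  have hc₀ : 0 < c := by positivity
  have hD := farWeight_nonneg 0 R
  obtain ⟨m, hm⟩ := exists_pow_lt_of_lt_one (y := near / far)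
    (show 0 < δ / 2 * c / (farWeight 0 R + 1) by positivity) ((div_lt_one hfar).2 hlt)
  rw [div_pow, div_lt_div_iff₀ (by positivity) (by positivity)] at hm
  have hB : c * far ^ m ≤ ∫ t, farWeight m t * |t| ∂gaussianReal 0 1 := by
    refine le_trans ?_ (le_integral_farWeight_mul_abs m (by positivity : 0 ≤ 4 * R))
    have := mul_le_mul_of_nonneg_left (mul_le_mul_of_nonneg_right (le_farWeight m hR.le)
      (by positivity : 0 ≤ 4 * R)) hmass.le
    linarith
  refine ⟨m, (by positivity : 0 < c * far ^ m).trans_le hB, ?_⟩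
  have hA := integral_farWeight_le m hR
  have hnear_le := farWeight_le_pow m R
  rw [hRδ, inv_div] at hA
  nlinarith [pow_nonneg hnear m]

end Weight

section SkewGaussian

open ProbabilityTheory

variable {E ι : Type*} [NormedAddCommGroup E] [InnerProductSpace ℝ E] [Fintype ι]

/-- The skew-adjoint endomorphism of `E` whose matrix in the orthonormal basis `b` is the
antisymmetrization of the matrix `B`, divided by `√2`. -/
noncomputable def skewMap (b : OrthonormalBasis ι ℝ E) :
    EuclideanSpace ℝ (ι × ι) →L[ℝ] E →L[ℝ] E :=
  ∑ k : ι × ι, (EuclideanSpace.proj k).smulRight ((√2)⁻¹ •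
    ((innerSL ℝ (b k.2)).smulRight (b k.1) - (innerSL ℝ (b k.1)).smulRight (b k.2)))

variable (b : OrthonormalBasis ι ℝ E)

/-- The coordinates of `y ∧ x` in the orthonormal basis `b`, normalized so that the norm is the area
of the parallelogram spanned by `x` and `y`. -/
noncomputable def wedgeCoord (x y : E) : EuclideanSpace ℝ (ι × ι) := WithLp.toLp 2 fun k =>
  (√2)⁻¹ * (inner ℝ (b k.2) x * inner ℝ (b k.1) y - inner ℝ (b k.1) x * inner ℝ (b k.2) y)

theorem inner_skewMap (B : EuclideanSpace ℝ (ι × ι)) (x y : E) :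
    inner ℝ (skewMap b B x) y = inner ℝ B (wedgeCoord b x y) := by
  simp [skewMap, wedgeCoord, PiLp.inner_apply, sum_inner, inner_smul_left, inner_sub_left, mul_comm]

theorem inner_skewMap_self (B : EuclideanSpace ℝ (ι × ι)) (x : E) :
    inner ℝ (skewMap b B x) x = 0 := by
  simp [inner_skewMap, wedgeCoord, PiLp.inner_apply, mul_comm]

theorem norm_wedgeCoord_sq (x y : E) :
    ‖wedgeCoord b x y‖ ^ 2 = ‖x‖ ^ 2 * ‖y‖ ^ 2 - inner ℝ x y ^ 2 := by
  have hxy : inner ℝ x y = ∑ i, inner ℝ (b i) x * inner ℝ (b i) y := by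
    rw [← b.sum_inner_mul_inner x y]
    simp only [real_inner_comm x]
  have hprod (f g : ι → ℝ) : ∑ k : ι × ι, f k.1 * g k.2 = (∑ i, f i) * ∑ i, g i := by
    rw [Fintype.sum_prod_type, Finset.sum_mul_sum]
  have h₁ := hprod (fun i => inner ℝ (b i) y ^ 2) fun i => inner ℝ (b i) x ^ 2
  have h₂ := hprod (fun i => inner ℝ (b i) x ^ 2) fun i => inner ℝ (b i) y ^ 2
  have h₃ := hprod (fun i => inner ℝ (b i) x * inner ℝ (b i) y)
    fun i => inner ℝ (b i) x * inner ℝ (b i) y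
  simp only [b.sum_sq_inner_right] at h₁ h₂
  rw [hxy, sq (∑ i, _), ← h₃, EuclideanSpace.real_norm_sq_eq]
  calc _ = ∑ k : ι × ι, ((inner ℝ (b k.1) y ^ 2 * inner ℝ (b k.2) x ^ 2 +
        inner ℝ (b k.1) x ^ 2 * inner ℝ (b k.2) y ^ 2) / 2 - inner ℝ (b k.1) x *
          inner ℝ (b k.1) y * (inner ℝ (b k.2) x * inner ℝ (b k.2) y)) := by
        refine Finset.sum_congr rfl fun k _ => ?_
        rw [wedgeCoord, mul_pow, inv_pow, Real.sq_sqrt zero_le_two]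
        ring
    _ = _ := by
        rw [Finset.sum_sub_distrib, ← Finset.sum_div, Finset.sum_add_distrib, h₁, h₂]
        ring

variable [FiniteDimensional ℝ E] [MeasurableSpace E] [BorelSpace E]

theorem map_inner_stdGaussian {x : E} (hx : ‖x‖ = 1) :
    (stdGaussian E).map (fun y => inner ℝ x y) = gaussianReal 0 1 := by
  have hmap := IsGaussian.map_eq_gaussianReal (μ := stdGaussian E) (innerSL ℝ x)
  rw [integral_strongDual_stdGaussian, variance_dual_stdGaussian, innerSL_apply_norm, hx] at hmap
  simpa using hmap

/-- For a unit vector `x`, the coefficient of `x` and the skew-adjoint part are independent, but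
together they move `x` to a standard Gaussian vector. -/
theorem map_smul_add_skewMap {x : E} (hx : ‖x‖ = 1) :
    ((gaussianReal 0 1).prod (stdGaussian (EuclideanSpace ℝ (ι × ι)))).map
      (fun ω => ω.1 • x + skewMap b ω.2 x) = stdGaussian E := by
  refine Measure.ext_of_charFun (funext fun y => ?_)
  rw [charFun_stdGaussian, charFun_apply, integral_map (by fun_prop) (by fun_prop)]
  simp only [inner_add_left, real_inner_smul_left, inner_skewMap, Complex.ofReal_add, add_mul,
    Complex.exp_add]
  rw [integral_prod_mul (fun t : ℝ => Complex.exp (↑(t * inner ℝ x y) * Complex.I))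
    fun B : EuclideanSpace ℝ (ι × ι) => Complex.exp (inner ℝ B _ * Complex.I), ← charFun_apply,
    charFun_stdGaussian, ← Complex.ofReal_pow, norm_wedgeCoord_sq, hx]
  have hline : ∫ t : ℝ, Complex.exp (↑(t * inner ℝ x y) * Complex.I) ∂gaussianReal 0 1 =
      charFun (gaussianReal 0 1) (inner ℝ x y) := by
    simp [charFun_apply_real, mul_comm]
  rw [hline, charFun_gaussianReal, ← Complex.exp_add]
  congr 1
  push_cast
  ring

end SkewGaussian

section VirtualZonoid

variable {Ω E : Type*} [MeasurableSpace Ω] {μ : Measure Ω} [NormedAddCommGroup E]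
  [InnerProductSpace ℝ E]

/-- The group of differences of support functions of zonoids generated by `μ`. -/
def virtualZonoids (μ : Measure Ω) : AddSubgroup (E → ℝ) :=
  AddSubgroup.closure {f | ∃ (Y : Ω → E) (hY : Integrable Y μ), f = zonoidSeminorm hY}

theorem zonoidSeminorm_mem_virtualZonoids {Y : Ω → E} (hY : Integrable Y μ) :
    ⇑(zonoidSeminorm hY) ∈ virtualZonoids μ :=
  AddSubgroup.subset_closure ⟨Y, hY, rfl⟩

theorem smul_mem_virtualZonoids {f : E → ℝ} (hf : f ∈ virtualZonoids μ) (c : ℝ) :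
    c • f ∈ virtualZonoids μ := by
  induction hf using AddSubgroup.closure_induction with
  | mem f hf =>
    obtain ⟨Y, hY, rfl⟩ := hf
    have habs : |c| • ⇑(zonoidSeminorm hY) = zonoidSeminorm (hY.smul c) := funext fun x => by
      simp [zonoidSeminorm_apply, real_inner_smul_left, abs_mul, integral_const_mul]
    have hmem := zonoidSeminorm_mem_virtualZonoids (hY.smul c)
    rw [← habs] at hmem
    rcases abs_choice c with h | h
    · rwa [h] at hmem
    · simpa only [h, neg_smul, neg_neg] using neg_mem hmem
  | zero => simp only [smul_zero, zero_mem]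
  | add f g _ _ ihf ihg => simpa only [smul_add] using add_mem ihf ihg
  | neg f _ ih => simpa only [smul_neg] using neg_mem ih

theorem apply_smul_of_mem_virtualZonoids {f : E → ℝ} (hf : f ∈ virtualZonoids μ) (c : ℝ) (x : E) :
    f (c • x) = |c| * f x := by
  induction hf using AddSubgroup.closure_induction with
  | mem f hf =>
    obtain ⟨Y, hY, rfl⟩ := hf
    exact map_smul_eq_mul _ c x
  | zero => simp
  | add f g _ _ ihf ihg => rw [Pi.add_apply, Pi.add_apply, ihf, ihg, mul_add]
  | neg f _ ih => rw [Pi.neg_apply, Pi.neg_apply, ih, mul_neg]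

variable [FiniteDimensional ℝ E] {φ : Set E → ℝ}

theorem IsSimpleValuation.supportBody_of_mem_virtualZonoids (hφ : IsSimpleValuation φ)
    (hseg : ∀ K, IsCompactConvex K → ∀ u : E, φ (K + segment ℝ (-u) u) = φ K)
    {p : Seminorm ℝ E} (hp : ⇑p ∈ virtualZonoids μ) :
    φ (supportBody p) = φ (supportBody 0) := by
  suffices h : ∀ f ∈ virtualZonoids (E := E) μ, ∃ r q : Seminorm ℝ E,
      (∀ p, φ (supportBody (p + r)) = φ (supportBody p)) ∧
      (∀ p, φ (supportBody (p + q)) = φ (supportBody p)) ∧ ∀ x, f x + r x = q x by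
    obtain ⟨r, q, hr, hq, hpq⟩ := h _ hp
    rw [← hr, ← hq 0, zero_add, show p + r = q from Seminorm.ext hpq]
  intro f hf
  induction hf using AddSubgroup.closure_induction with
  | mem f hf =>
    obtain ⟨Y, hY, rfl⟩ := hf
    exact ⟨0, zonoidSeminorm hY, fun p => by rw [add_zero],
      hφ.supportBody_add_zonoidSeminorm hseg hY, fun x => add_zero _⟩
  | zero => exact ⟨0, 0, fun p => by rw [add_zero], fun p => by rw [add_zero], fun x => add_zero _⟩
  | add f g _ _ ihf ihg =>
    obtain ⟨r, q, hr, hq, hf⟩ := ihf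
    obtain ⟨r', q', hr', hq', hg⟩ := ihg
    refine ⟨r + r', q + q', fun p => ?_, fun p => ?_, fun x => ?_⟩
    · rw [← add_assoc, hr', hr]
    · rw [← add_assoc, hq', hq]
    · rw [Pi.add_apply, add_apply, add_apply, ← hf, ← hg, add_add_add_comm]
  | neg f _ ih =>
    obtain ⟨r, q, hr, hq, hf⟩ := ih
    exact ⟨q, r, hq, hr, fun x => by rw [Pi.neg_apply, ← hf, neg_add_cancel_left]⟩

end VirtualZonoid

section Averaging

open ProbabilityTheory

variable {E ι : Type*} [NormedAddCommGroup E] [InnerProductSpace ℝ E] [Fintype ι]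
  (b : OrthonormalBasis ι ℝ E)

theorem integrable_farWeight_mul_norm_skewMap (m : ℕ) :
    Integrable (fun ω : ℝ × EuclideanSpace ℝ (ι × ι) => farWeight m ω.1 * ‖skewMap b ω.2‖)
      ((gaussianReal 0 1).prod (stdGaussian (EuclideanSpace ℝ (ι × ι)))) := by
  have hW : Integrable (farWeight m) (gaussianReal 0 1) := by
    simpa using integrable_farWeight_mul_pow m 0
  exact hW.mul_prod ((skewMap b).integrable_comp IsGaussian.integrable_id).norm

variable [FiniteDimensional ℝ E]

theorem integrable_farWeight_mul_seminorm (m : ℕ) (h : Seminorm ℝ E) (x : E) :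
    Integrable (fun ω : ℝ × EuclideanSpace ℝ (ι × ι) =>
      farWeight m ω.1 * h (ω.1 • x + skewMap b ω.2 x))
      ((gaussianReal 0 1).prod (stdGaussian (EuclideanSpace ℝ (ι × ι)))) := by
  obtain ⟨C, hC, hhC⟩ := exists_forall_seminorm_le_mul_norm h
  have hWt : Integrable (fun t => farWeight m t * |t|) (gaussianReal 0 1) := by
    simpa using integrable_farWeight_mul_pow m 1
  have hdom := ((hWt.comp_fst (stdGaussian (EuclideanSpace ℝ (ι × ι)))).add
    (integrable_farWeight_mul_norm_skewMap b m)).mul_const (C * ‖x‖)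
  refine hdom.mono' (((measurable_farWeight m).comp measurable_fst).mul
    ((continuous_seminorm h).comp (by fun_prop)).measurable).aestronglyMeasurable
    (.of_forall fun ω => ?_)
  have hW := farWeight_nonneg m ω.1
  rw [Real.norm_of_nonneg (mul_nonneg hW (apply_nonneg h _))]
  calc farWeight m ω.1 * h (ω.1 • x + skewMap b ω.2 x)
      ≤ farWeight m ω.1 * (C * (|ω.1| * ‖x‖ + ‖skewMap b ω.2‖ * ‖x‖)) := by
        refine mul_le_mul_of_nonneg_left ((hhC _).trans (mul_le_mul_of_nonneg_left ?_ hC.le)) hW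
        refine (norm_add_le _ _).trans (add_le_add (norm_smul _ _).le ((skewMap b ω.2).le_opNorm x))
    _ = _ := by simp only [Pi.add_apply]; ring

/-- The `farWeight m`-weighted average of `h` over the random maps `N • id + A` with `N` a standard
Gaussian and `A` an independent Gaussian skew-adjoint endomorphism. -/
noncomputable def skewAverage (m : ℕ) (h : Seminorm ℝ E) : Seminorm ℝ E :=
  averageSeminorm (μ := (gaussianReal 0 1).prod (stdGaussian (EuclideanSpace ℝ (ι × ι))))
    (fun ω => (farWeight m ω.1).toNNReal •
      h.comp (ω.1 • LinearMap.id + (skewMap b ω.2).toLinearMap))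
    fun x => by
      simpa [NNReal.smul_def, Real.coe_toNNReal _ (farWeight_nonneg m _)] using
        integrable_farWeight_mul_seminorm b m h x

theorem skewAverage_apply (m : ℕ) (h : Seminorm ℝ E) (x : E) :
    skewAverage b m h x = ∫ ω, farWeight m ω.1 * h (ω.1 • x + skewMap b ω.2 x)
      ∂(gaussianReal 0 1).prod (stdGaussian (EuclideanSpace ℝ (ι × ι))) := by
  refine integral_congr_ae (.of_forall fun ω => ?_)
  simp [NNReal.smul_def, Real.coe_toNNReal _ (farWeight_nonneg m _)]

theorem abs_skewAverage_sub_le (m : ℕ) {h : Seminorm ℝ E} {C : ℝ} (hC : ∀ x, h x ≤ C * ‖x‖)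
    (hC₀ : 0 ≤ C) (x : E) :
    |skewAverage b m h x - (∫ t, farWeight m t * |t| ∂gaussianReal 0 1) * h x| ≤
      (∫ t, farWeight m t ∂gaussianReal 0 1) *
        (∫ B, ‖skewMap b B‖ ∂stdGaussian (EuclideanSpace ℝ (ι × ι))) * (C * ‖x‖) := by
  have hfst : (∫ t, farWeight m t * |t| ∂gaussianReal 0 1) * h x =
      ∫ ω, farWeight m ω.1 * h (ω.1 • x)
        ∂(gaussianReal 0 1).prod (stdGaussian (EuclideanSpace ℝ (ι × ι))) := by
    rw [integral_fun_fst (fun t => farWeight m t * h (t • x)), probReal_univ, one_smul,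
      ← integral_mul_const]
    simp only [map_smul_eq_mul, mul_assoc, Real.norm_eq_abs]
  have hint : Integrable (fun ω => farWeight m ω.1 * h (ω.1 • x))
      ((gaussianReal 0 1).prod (stdGaussian (EuclideanSpace ℝ (ι × ι)))) := by
    have hWt : Integrable (fun t => farWeight m t * |t|) (gaussianReal 0 1) := by
      simpa using integrable_farWeight_mul_pow m 1
    simpa only [map_smul_eq_mul, mul_assoc, Real.norm_eq_abs] using
      (hWt.mul_const (h x)).comp_fst (stdGaussian (EuclideanSpace ℝ (ι × ι)))
  rw [hfst, skewAverage_apply, ← integral_sub (integrable_farWeight_mul_seminorm b m h x) hint,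
    ← integral_prod_mul, ← integral_mul_const]
  refine norm_integral_le_of_norm_le (f := fun ω : ℝ × EuclideanSpace ℝ (ι × ι) =>
    farWeight m ω.1 * h (ω.1 • x + skewMap b ω.2 x) - farWeight m ω.1 * h (ω.1 • x))
    ((integrable_farWeight_mul_norm_skewMap b m).mul_const _) (.of_forall fun ω => ?_)
  have hW := farWeight_nonneg m ω.1
  rw [← mul_sub, norm_mul, Real.norm_of_nonneg hW, mul_assoc]
  refine mul_le_mul_of_nonneg_left ?_ hW
  calc ‖h (ω.1 • x + skewMap b ω.2 x) - h (ω.1 • x)‖ ≤ h (skewMap b ω.2 x) := by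
        rw [Real.norm_eq_abs]
        simpa only [add_sub_cancel_left] using abs_sub_map_le_sub h (ω.1 • x + skewMap b ω.2 x)
          (ω.1 • x)
    _ ≤ C * (‖skewMap b ω.2‖ * ‖x‖) :=
        (hC _).trans (mul_le_mul_of_nonneg_left ((skewMap b ω.2).le_opNorm x) hC₀)
    _ = ‖skewMap b ω.2‖ * (C * ‖x‖) := by ring

variable [MeasurableSpace E] [BorelSpace E]

theorem skewAverage_eq_integral_stdGaussian (m : ℕ) (h : Seminorm ℝ E) {x : E} (hx : ‖x‖ = 1) :
    skewAverage b m h x = ∫ w, farWeight m (inner ℝ x w) * h w ∂stdGaussian E := by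
  have hmeas : AEStronglyMeasurable (fun w => farWeight m (inner ℝ x w) * h w) (stdGaussian E) :=
    (((measurable_farWeight m).comp (by fun_prop)).mul
      (continuous_seminorm h).measurable).aestronglyMeasurable
  rw [← map_smul_add_skewMap b hx] at hmeas ⊢
  rw [integral_map (by fun_prop) hmeas, skewAverage_apply]
  refine integral_congr_ae (.of_forall fun ω => ?_)
  have hinner : inner ℝ x (ω.1 • x + skewMap b ω.2 x) = ω.1 := by
    rw [inner_add_right, real_inner_smul_right, real_inner_self_eq_norm_sq, hx,
      real_inner_comm, inner_skewMap_self]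
    ring
  simp only [hinner]

theorem integrable_seminorm_smul (h : Seminorm ℝ E) (r s : ℝ) :
    Integrable (fun p : E × E => h p.1 • (r • p.1 + s • p.2))
      ((stdGaussian E).prod (stdGaussian E)) := by
  obtain ⟨C, hC, hhC⟩ := exists_forall_seminorm_le_mul_norm h
  have hnorm : Integrable (fun w : E => ‖w‖) (stdGaussian E) := IsGaussian.integrable_id.norm
  have hsq : Integrable (fun w : E => ‖w‖ ^ 2) (stdGaussian E) :=
    IsGaussian.memLp_two_id.integrable_norm_pow two_ne_zero
  refine ((((hsq.const_mul |r|).comp_fst (stdGaussian E)).add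
    ((hnorm.mul_prod hnorm).const_mul |s|)).const_mul C).mono'
    (((continuous_seminorm h).comp continuous_fst).smul
      (by fun_prop)).aestronglyMeasurable (.of_forall fun p => ?_)
  rw [norm_smul, Real.norm_of_nonneg (apply_nonneg h _)]
  calc h p.1 * ‖r • p.1 + s • p.2‖ ≤ C * ‖p.1‖ * (|r| * ‖p.1‖ + |s| * ‖p.2‖) := by
        refine mul_le_mul (hhC _) ((norm_add_le _ _).trans_eq ?_) (norm_nonneg _) (by positivity)
        simp only [norm_smul, Real.norm_eq_abs]
    _ = _ := by simp only [Pi.add_apply]; ring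

theorem integral_abs_inner_sub_right (h : Seminorm ℝ E) (s : ℝ) {x : E} (hx : ‖x‖ = 1) (w : E) :
    ∫ g, (|inner ℝ (h w • ((1 : ℝ) • w + s • g)) x| - |inner ℝ (h w • ((0 : ℝ) • w + s • g)) x|)
        ∂stdGaussian E =
      h w * ∫ y, (|inner ℝ x w + s * y| - |s * y|) ∂gaussianReal 0 1 := by
  rw [← map_inner_stdGaussian hx, integral_map (by fun_prop) (by fun_prop), ← integral_const_mul]
  refine integral_congr_ae (.of_forall fun g => ?_)
  simp only [real_inner_comm, real_inner_smul_right, inner_add_right, abs_mul,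
    abs_of_nonneg (apply_nonneg h w), one_mul, zero_mul, zero_add, mul_sub]

theorem integral_farWeight_mul_seminorm {m : ℕ} {c s : ℕ → ℝ}
    (hcs : ∀ t, farWeight m t =
      ∑ j ∈ Finset.range (m + 1), c j * ∫ y, (|t + s j * y| - |s j * y|) ∂gaussianReal 0 1)
    (h : Seminorm ℝ E) {x : E} (hx : ‖x‖ = 1) :
    ∫ w, farWeight m (inner ℝ x w) * h w ∂stdGaussian E = ∑ j ∈ Finset.range (m + 1), c j *
      ((∫ p : E × E, |inner ℝ (h p.1 • ((1 : ℝ) • p.1 + s j • p.2)) x|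
        ∂(stdGaussian E).prod (stdGaussian E)) -
      ∫ p : E × E, |inner ℝ (h p.1 • ((0 : ℝ) • p.1 + s j • p.2)) x|
        ∂(stdGaussian E).prod (stdGaussian E)) := by
  have hint (r : ℝ) (j : ℕ) : Integrable (fun p : E × E =>
      |inner ℝ (h p.1 • (r • p.1 + s j • p.2)) x|) ((stdGaussian E).prod (stdGaussian E)) :=
    (Integrable.inner_const (𝕜 := ℝ) (integrable_seminorm_smul h r (s j)) x).abs
  have hfiber (j : ℕ) := integral_abs_inner_sub_right h (s j) hx
  have hleft (j : ℕ) : Integrable (fun w =>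
      h w * ∫ y, (|inner ℝ x w + s j * y| - |s j * y|) ∂gaussianReal 0 1) (stdGaussian E) :=
    ((hint 1 j).sub (hint 0 j)).integral_prod_left.congr (.of_forall (hfiber j))
  have hterm (w : E) : farWeight m (inner ℝ x w) * h w = ∑ j ∈ Finset.range (m + 1), c j *
      (h w * ∫ y, (|inner ℝ x w + s j * y| - |s j * y|) ∂gaussianReal 0 1) := by
    rw [hcs, Finset.sum_mul]
    exact Finset.sum_congr rfl fun j _ => by ring
  simp only [hterm]
  rw [integral_finsetSum _ fun j _ => (hleft j).const_mul _]
  refine Finset.sum_congr rfl fun j _ => ?_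
  rw [integral_const_mul, ← integral_sub (hint 1 j) (hint 0 j)]
  congr 1
  refine Eq.trans ?_ (integral_prod _ ((hint 1 j).sub (hint 0 j))).symm
  exact integral_congr_ae (.of_forall fun w => (hfiber j w).symm)

theorem skewAverage_mem_virtualZonoids (m : ℕ) (h : Seminorm ℝ E) :
    ⇑(skewAverage b m h) ∈ virtualZonoids ((stdGaussian E).prod (stdGaussian E)) := by
  obtain ⟨c, s, hcs⟩ := farWeight_eq_sum m
  let Z (r : ℝ) (j : ℕ) (x : E) : ℝ := ∫ p : E × E, |inner ℝ (h p.1 • (r • p.1 + s j • p.2)) x|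
    ∂(stdGaussian E).prod (stdGaussian E)
  set F : E → ℝ := ∑ j ∈ Finset.range (m + 1), c j • (Z 1 j - Z 0 j)
  have hZ (r : ℝ) (j : ℕ) : Z r j ∈ virtualZonoids ((stdGaussian E).prod (stdGaussian E)) :=
    zonoidSeminorm_mem_virtualZonoids (integrable_seminorm_smul h r (s j))
  have hF : F ∈ virtualZonoids ((stdGaussian E).prod (stdGaussian E)) :=
    sum_mem fun j _ => smul_mem_virtualZonoids (sub_mem (hZ 1 j) (hZ 0 j)) (c j)
  have hunit {x : E} (hx : ‖x‖ = 1) : skewAverage b m h x = F x := by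
    rw [skewAverage_eq_integral_stdGaussian b m h hx, integral_farWeight_mul_seminorm hcs h hx]
    simp only [F, Z, Finset.sum_apply, Pi.smul_apply, Pi.sub_apply, smul_eq_mul]
  suffices ⇑(skewAverage b m h) = F from this ▸ hF
  ext x
  rcases eq_or_ne x 0 with rfl | hx
  · simpa using (apply_smul_of_mem_virtualZonoids hF 0 0).symm
  · have h₁ := hunit (norm_smul_inv_norm (𝕜 := ℝ) hx)
    rw [map_smul_eq_mul, apply_smul_of_mem_virtualZonoids hF, Real.norm_eq_abs] at h₁
    exact mul_left_cancel₀ (by simpa using hx) h₁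

theorem exists_mem_virtualZonoids_abs_sub_le (h : Seminorm ℝ E) {δ : ℝ} (hδ : 0 < δ) :
    ∃ p : Seminorm ℝ E, ⇑p ∈ virtualZonoids ((stdGaussian E).prod (stdGaussian E)) ∧
      ∀ x, |p x - h x| ≤ δ * ‖x‖ := by
  obtain ⟨C, hC, hhC⟩ := exists_forall_seminorm_le_mul_norm h
  set b := stdOrthonormalBasis ℝ E
  set κ := ∫ B, ‖skewMap b B‖ ∂stdGaussian (EuclideanSpace ℝ (_ × _))
  have hκ : 0 ≤ κ := integral_nonneg fun _ => norm_nonneg _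
  obtain ⟨m, hβ, hm⟩ := exists_integral_farWeight_le (δ := δ / (C * (κ + 1))) (by positivity)
  set α := ∫ t, farWeight m t ∂gaussianReal 0 1
  set β := ∫ t, farWeight m t * |t| ∂gaussianReal 0 1
  have happ (x : E) : ((β⁻¹).toNNReal • skewAverage b m h) x = β⁻¹ * skewAverage b m h x := by
    simp [NNReal.smul_def, Real.coe_toNNReal _ (inv_pos.2 hβ).le]
  refine ⟨(β⁻¹).toNNReal • skewAverage b m h, ?_, fun x => ?_⟩
  · rw [show ⇑((β⁻¹).toNNReal • skewAverage b m h) = β⁻¹ • ⇑(skewAverage b m h) from funext happ]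
    exact smul_mem_virtualZonoids (skewAverage_mem_virtualZonoids b m h) _
  · have hα : α * κ * C ≤ δ * β := by
      rw [div_mul_eq_mul_div, le_div_iff₀ (by positivity)] at hm
      have hα₀ : 0 ≤ α := integral_nonneg (farWeight_nonneg m)
      nlinarith [mul_nonneg hα₀ hC.le]
    have hdev := abs_skewAverage_sub_le b m hhC hC.le x
    rw [happ, show β⁻¹ * skewAverage b m h x - h x = β⁻¹ * (skewAverage b m h x - β * h x) by
      field_simp, abs_mul, abs_of_pos (inv_pos.2 hβ), inv_mul_le_iff₀ hβ]
    nlinarith [mul_le_mul_of_nonneg_right hα (norm_nonneg x)]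

end Averaging

section SymmetricBody

open ProbabilityTheory

variable {E : Type*} [NormedAddCommGroup E] [InnerProductSpace ℝ E] [FiniteDimensional ℝ E]
  {φ : Set E → ℝ}

theorem IsSimpleValuation.eq_zero_of_neg_eq [Nontrivial E] (hφ : IsSimpleValuation φ)
    (hseg : ∀ K, IsCompactConvex K → ∀ u : E, φ (K + segment ℝ (-u) u) = φ K)
    {K : Set E} (hK : IsCompactConvex K) (hneg : -K = K) : φ K = 0 := by
  rcases K.eq_empty_or_nonempty with rfl | hne
  · exact hφ.empty
  borelize E
  obtain ⟨h, rfl⟩ := exists_supportBody_eq hK hne hneg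
  choose p hp hph using fun i : ℕ =>
    exists_mem_virtualZonoids_abs_sub_le h (Nat.one_div_pos_of_nat (α := ℝ) (n := i))
  have hzero : φ (supportBody 0) = 0 := by
    rw [supportBody_zero]
    exact hφ.simple ⟨isCompact_singleton, convex_singleton 0⟩ (interior_singleton 0)
  have hbody : TendstoBody (fun i => supportBody (p i)) atTop (supportBody h) := by
    refine tendstoBody_supportBody fun δ hδ => ?_
    filter_upwards [(tendsto_one_div_add_atTop_nhds_zero_nat (𝕜 := ℝ)).eventually_lt_const hδ]
      with i hi x
    exact (hph i x).trans (by gcongr)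
  refine tendsto_nhds_unique (hφ.tendsto_nat (fun i => isCompactConvex_supportBody _) hK hbody) ?_
  simp only [hφ.supportBody_of_mem_virtualZonoids hseg (hp _), hzero]
  exact tendsto_const_nhds

end SymmetricBody

/-! ### Dissections of simplices and Klain's theorem -/

section Simplex

variable {E : Type*} [NormedAddCommGroup E] [NormedSpace ℝ E]

/-- `φ` vanishes on the convex hulls of `dim E + 1` points. -/
def VanishesOnSimplices (φ : Set E → ℝ) : Prop :=
  ∀ p : Fin (Module.finrank ℝ E + 1) → E, φ (convexHull ℝ (range p)) = 0

theorem isCompactConvex_convexHull_range {ι : Type*} [Finite ι] (p : ι → E) :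
    IsCompactConvex (convexHull ℝ (range p)) :=
  ⟨(finite_range p).isCompact_convexHull ℝ, convex_convexHull ℝ _⟩

theorem IsSimpleValuation.inter_left {φ : Set E → ℝ} (hφ : IsSimpleValuation φ) {C : Set E}
    (hC : IsClosed C) (hC' : Convex ℝ C) : IsSimpleValuation fun K => φ (C ∩ K) := by
  have hbody {K : Set E} (hK : IsCompactConvex K) : IsCompactConvex (C ∩ K) :=
    ⟨hK.isCompact.inter_left hC, hC'.inter hK.convex⟩
  refine ⟨by rw [inter_empty, hφ.empty], fun {K L} hK hL hKL => ?_, fun {K} hK hint => ?_,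
    fun {K M} hK hM h => hφ.tendsto_nat (fun i => hbody (hK i)) (hbody hM) (h.inter_left hC)⟩
  · rw [inter_union_distrib_left, inter_inter_distrib_left]
    exact hφ.union (hbody hK) (hbody hL) (inter_union_distrib_left C K L ▸ hC'.inter hKL)
  · exact hφ.simple (hbody hK) (subset_eq_empty (interior_mono inter_subset_right) hint)

theorem IsSimpleValuation.cut_affine [FiniteDimensional ℝ E] {φ : Set E → ℝ}
    (hφ : IsSimpleValuation φ) {K : Set E} (hK : IsCompactConvex K) {g : E →ᵃ[ℝ] ℝ} {x y : E}
    (hg : g x ≠ g y) : φ K = φ (K ∩ {x | g x ≤ 0}) + φ (K ∩ {x | 0 ≤ g x}) := by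
  have hdecomp (z : E) : g z = g.linear z + g 0 := congrFun g.decomp z
  have hlin : LinearMap.toContinuousLinearMap g.linear ≠ 0 := fun h => hg <| by
    rw [hdecomp x, hdecomp y, LinearMap.toContinuousLinearMap.map_eq_zero_iff.1 h]
    rfl
  rw [hφ.cut hK hlin (-g 0)]
  congr 3 <;> ext z <;> simp only [mem_ofPred_eq, hdecomp z, LinearMap.coe_toContinuousLinearMap']
  · exact le_neg_iff_add_nonpos_right
  · exact neg_le_iff_add_nonneg

section Subdivision

variable {ι : Type*} {i j : ι} {α β : ℝ}

theorem convexHull_range_update_subset [DecidableEq ι] {p : ι → E} {q : E}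
    (hq : q ∈ convexHull ℝ (range p))
    (i : ι) : convexHull ℝ (range (Function.update p i q)) ⊆ convexHull ℝ (range p) := by
  refine convexHull_min (range_subset_iff.2 fun k => ?_) (convex_convexHull ℝ _)
  rcases eq_or_ne k i with rfl | hk
  · rwa [Function.update_self]
  · exact Function.update_of_ne hk q p ▸ subset_convexHull ℝ _ (mem_range_self k)

theorem combo_mem_convexHull_range (p : ι → E) (i j : ι) (hα : 0 ≤ α) (hβ : 0 ≤ β)
    (hαβ : α + β = 1) : α • p i + β • p j ∈ convexHull ℝ (range p) :=
  convex_convexHull ℝ _ (subset_convexHull ℝ _ (mem_range_self i))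
    (subset_convexHull ℝ _ (mem_range_self j)) hα hβ hαβ

variable [Fintype ι] [DecidableEq ι]

/-- A point with `β w i ≤ α w j` trades its weight `w i` on `p i` for the weight `w i / α` on the
new vertex, at the expense of `p j`. -/
theorem sum_smul_mem_convexHull_range_update (p : ι → E) (hij : i ≠ j) (hα : 0 < α) (hβ : 0 ≤ β)
    (hαβ : α + β = 1) {w : ι → ℝ} (hw : ∀ k, 0 ≤ w k) (hw1 : ∑ k, w k = 1)
    (h : β * w i ≤ α * w j) :
    ∑ k, w k • p k ∈ convexHull ℝ (range (Function.update p i (α • p i + β • p j))) := by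
  set c := β * w i / α
  have hcj : c ≤ w j := (div_le_iff₀' hα).2 h
  have hci : w i + c = w i / α := by
    simp only [c]
    field_simp
    linear_combination w i * hαβ
  refine mem_convexHull_of_exists_fintype (w + Pi.single i c - Pi.single j c) _ (fun k => ?_) ?_
    (fun k => mem_range_self k) ?_
  · have hc : 0 ≤ c := by have := hw i; positivity
    rcases eq_or_ne k j with rfl | hkj
    · simpa [hij.symm] using hcj
    · rcases eq_or_ne k i with rfl | hki
      · simpa [hkj] using add_nonneg (hw k) hc
      · simpa [hki, hkj] using hw k
  · simp [Finset.sum_add_distrib, hw1]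
  · have hupdate (k : ι) : Function.update p i (α • p i + β • p j) k =
        p k + if k = i then β • (p j - p i) else 0 := by
      rcases eq_or_ne k i with rfl | hk
      · rw [Function.update_self, if_pos rfl, eq_sub_of_add_eq hαβ]
        module
      · simp [hk]
    have hcoeff : (w i + c) * β = c := by rw [hci]; simp only [c]; ring
    simp only [hupdate, Pi.add_apply, Pi.sub_apply, Pi.single_apply, sub_smul, add_smul, smul_add,
      ite_smul, smul_ite, zero_smul, smul_zero, Finset.sum_add_distrib, Finset.sum_sub_distrib,
      Finset.sum_ite_eq', Finset.mem_univ, if_true, if_neg hij]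
    linear_combination (norm := module) hcoeff • (p j - p i)

/-- The point `q = α b i + β b j` of an edge splits the simplex along the hyperplane through `q`
and the vertices other than `b i` and `b j`. -/
theorem convexHull_range_update_eq (b : AffineBasis ι ℝ E) (hij : i ≠ j) (hα : 0 < α) (hβ : 0 ≤ β)
    (hαβ : α + β = 1) :
    convexHull ℝ (range (Function.update b i (α • b i + β • b j))) =
      convexHull ℝ (range b) ∩ {x | β * b.coord i x ≤ α * b.coord j x} := by
  apply Subset.antisymm
  · refine subset_inter (convexHull_range_update_subset
      (combo_mem_convexHull_range b i j hα.le hβ hαβ) i) (convexHull_min ?_ ?_)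
    · refine range_subset_iff.2 fun k => ?_
      rcases eq_or_ne k i with rfl | hk
      · have hcombo : ∀ l, b.coord l (α • b k + β • b j) =
            α * b.coord l (b k) + β * b.coord l (b j) :=
          fun l => Convex.combo_affine_apply hαβ
        simp [hcombo, hij, hij.symm, mul_comm]
      · rw [Function.update_of_ne hk, mem_ofPred_eq, b.coord_apply_ne hk.symm, mul_zero]
        rw [b.coord_apply]
        split_ifs <;> simp [hα.le]
    · have : {x | β * b.coord i x ≤ α * b.coord j x} =
          (β • b.coord i - α • b.coord j : E →ᵃ[ℝ] ℝ) ⁻¹' Iic 0 := by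
        ext x
        simp
      exact this ▸ (convex_Iic 0).affine_preimage _
  · rintro x ⟨hx, hle⟩
    rw [b.convexHull_eq_nonneg_coord] at hx
    rw [← b.linear_combination_coord_eq_self x]
    exact sum_smul_mem_convexHull_range_update b hij hα hβ hαβ hx (b.sum_coord_apply_eq_one x) hle

end Subdivision

section Vanishing

theorem card_filter_update_lt {ι X : Type*} [Fintype ι] [DecidableEq ι] {P : X → Prop}
    [DecidablePred P] {p : ι → X} {q : X} {i : ι} (hi : P (p i)) (hq : ¬P q) :
    (Finset.univ.filter fun k => P (Function.update p i q k)).card <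
      (Finset.univ.filter fun k => P (p k)).card := by
  refine Finset.card_lt_card (Finset.ssubset_iff_of_subset (fun k hk => ?_) |>.2
    ⟨i, by simpa using hi, by simpa using hq⟩)
  rcases eq_or_ne k i with rfl | hki
  · simpa using hi
  · simpa [hki] using hk

theorem exists_combo_apply_eq (f : E →L[ℝ] ℝ) {c : ℝ} {x y : E} (hx : f x < c) (hy : c < f y) :
    ∃ α β : ℝ, 0 < α ∧ 0 < β ∧ α + β = 1 ∧ f (α • x + β • y) = c := by
  obtain ⟨α, β, hα, hβ, hαβ, hc⟩ : c ∈ openSegment ℝ (f x) (f y) := by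
    rw [openSegment_eq_Ioo (hx.trans hy)]
    exact ⟨hx, hy⟩
  exact ⟨α, β, hα, hβ, hαβ, by rw [map_add, map_smul, map_smul, hc]⟩


variable [FiniteDimensional ℝ E] {φ : Set E → ℝ}

theorem interior_convexHull_range_of_not_affineIndependent
    {p : Fin (Module.finrank ℝ E + 1) → E} (hp : ¬AffineIndependent ℝ p) :
    interior (convexHull ℝ (range p)) = ∅ := by
  refine not_nonempty_iff_eq_empty.1 fun hne => hp ?_
  refine (affineIndependent_iff_finrank_vectorSpan_eq ℝ p (Fintype.card_fin _)).2 ?_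
  rw [← direction_affineSpan, interior_convexHull_nonempty_iff_affineSpan_eq_top.1 hne,
    AffineSubspace.direction_top, finrank_top]

theorem IsSimpleValuation.convexHull_range_eq_add (hφ : IsSimpleValuation φ)
    (p : Fin (Module.finrank ℝ E + 1) → E) {i j : Fin (Module.finrank ℝ E + 1)} (hij : i ≠ j)
    {α β : ℝ} (hα : 0 < α) (hβ : 0 < β) (hαβ : α + β = 1) :
    φ (convexHull ℝ (range p)) =
      φ (convexHull ℝ (range (Function.update p i (α • p i + β • p j)))) +
        φ (convexHull ℝ (range (Function.update p j (α • p i + β • p j)))) := by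
  by_cases hp : AffineIndependent ℝ p
  · let b : AffineBasis (Fin (Module.finrank ℝ E + 1)) ℝ E :=
      ⟨p, hp, hp.affineSpan_eq_top_iff_card_eq_finrank_add_one.2 (Fintype.card_fin _)⟩
    let g : E →ᵃ[ℝ] ℝ := β • b.coord i - α • b.coord j
    have hi : g (b i) = β := by simp [g, hij.symm]
    have hj : g (b j) = -α := by simp [g, hij]
    have hij' := convexHull_range_update_eq b hij hα hβ.le hαβ
    have hji := convexHull_range_update_eq b hij.symm hβ hα.le (by rwa [add_comm])
    rw [add_comm (β • b j)] at hji
    change φ (convexHull ℝ (range b)) =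
      φ (convexHull ℝ (range (Function.update b i (α • b i + β • b j)))) +
        φ (convexHull ℝ (range (Function.update b j (α • b i + β • b j))))
    rw [hφ.cut_affine (isCompactConvex_convexHull_range b) (g := g) (x := b i) (y := b j)
      (by rw [hi, hj]; linarith), hij', hji]
    simp [g]
  · have hzero {q : Fin (Module.finrank ℝ E + 1) → E}
        (hq : convexHull ℝ (range q) ⊆ convexHull ℝ (range p)) : φ (convexHull ℝ (range q)) = 0 :=
      hφ.simple (isCompactConvex_convexHull_range q) <| subset_eq_empty (interior_mono hq)
        (interior_convexHull_range_of_not_affineIndependent hp)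
    have hmem := combo_mem_convexHull_range p i j hα.le hβ.le hαβ
    rw [hzero Subset.rfl, hzero (convexHull_range_update_subset hmem i),
      hzero (convexHull_range_update_subset hmem j), add_zero]

/-- Repeatedly subdividing edges that cross the hyperplane `f = c` dissects every simplex into
simplices lying on one side of it. -/
theorem VanishesOnSimplices.inter_le (hφ : IsSimpleValuation φ) (h : VanishesOnSimplices φ)
    (f : E →L[ℝ] ℝ) (c : ℝ) : VanishesOnSimplices fun K => φ ({x | f x ≤ c} ∩ K) := by
  classical
  have hψ := hφ.inter_left (isClosed_le f.continuous (continuous_const (y := c)))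
    (convex_halfSpace_le f.isLinear c)
  intro p
  induction hN : (Finset.univ.filter fun k => f (p k) ≠ c).card using Nat.strong_induction_on
    generalizing p with
  | _ N ih =>
  beta_reduce at ih ⊢
  by_cases hle : ∀ k, f (p k) ≤ c
  · have hsub : convexHull ℝ (range p) ⊆ {x | f x ≤ c} :=
      convexHull_min (range_subset_iff.2 hle) (convex_halfSpace_le f.isLinear c)
    rw [inter_eq_right.2 hsub]
    exact h p
  push Not at hle
  obtain ⟨j, hj⟩ := hle
  by_cases hge : ∀ k, c ≤ f (p k)
  · have hsub : convexHull ℝ (range p) ⊆ {x | c ≤ f x} :=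
      convexHull_min (range_subset_iff.2 hge) (convex_halfSpace_ge f.isLinear c)
    rcases eq_or_ne f 0 with rfl | hf
    · rw [show {x : E | (0 : E →L[ℝ] ℝ) x ≤ c} = ∅ from
        eq_empty_of_forall_notMem fun _ => hj.not_ge,
        empty_inter, hφ.empty]
    · rw [inter_comm]
      exact hφ.eq_zero_of_subset_hyperplane ((isCompactConvex_convexHull_range p).inter_le f c) hf
        fun x hx => le_antisymm hx.2 (hsub hx.1)
  push Not at hge
  obtain ⟨i, hi⟩ := hge
  have hij : i ≠ j := fun h => (hi.trans hj).ne (h ▸ rfl)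
  obtain ⟨α, β, hα, hβ, hαβ, hq⟩ := exists_combo_apply_eq f hi hj
  subst hN
  rw [hψ.convexHull_range_eq_add p hij hα hβ hαβ,
    ih _ (card_filter_update_lt (P := fun x => f x ≠ c) hi.ne (not_not.2 hq)) _ rfl,
    ih _ (card_filter_update_lt (P := fun x => f x ≠ c) hj.ne' (not_not.2 hq)) _ rfl, add_zero]

theorem VanishesOnSimplices.biInter_le (hφ : IsSimpleValuation φ) (h : VanishesOnSimplices φ)
    (f : ℕ → E →L[ℝ] ℝ) (c : ℕ → ℝ) (m : ℕ) :
    VanishesOnSimplices fun K => φ ((⋂ i < m, {x | f i x ≤ c i}) ∩ K) := by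
  induction m generalizing φ with
  | zero => simpa using h
  | succ m ih =>
    have hψ := hφ.inter_left (isClosed_le (f m).continuous (continuous_const (y := c m)))
      (convex_halfSpace_le (f m).isLinear (c m))
    simpa only [biInter_lt_succ, inter_comm, inter_assoc, inter_left_comm] using
      ih hψ (h.inter_le hφ (f m) (c m))

theorem exists_subset_convexHull_range {K : Set E} (hK : Bornology.IsBounded K) :
    ∃ p : Fin (Module.finrank ℝ E + 1) → E, K ⊆ convexHull ℝ (range p) := by
  obtain ⟨b, hb, -⟩ := exists_mem_interior_convexHull_affineBasis (E := E) (x := 0) univ_mem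
  have habs := (NormedSpace.isVonNBounded_of_isBounded ℝ hK) (mem_interior_iff_mem_nhds.1 hb)
  obtain ⟨a, ha⟩ := habs.eventually.exists
  refine ⟨a • b, ha.trans ?_⟩
  rw [← convexHull_smul, ← image_smul, ← range_comp]
  rfl

theorem IsSimpleValuation.eq_zero_of_vanishesOnSimplices (hφ : IsSimpleValuation φ)
    (h : VanishesOnSimplices φ) {K : Set E} (hK : IsCompactConvex K) : φ K = 0 := by
  obtain ⟨f, c, hfc⟩ := RCLike.iInter_countable_halfSpaces_eq (𝕜 := ℝ) hK.convex
    hK.isCompact.isClosed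
  obtain ⟨p, hp⟩ := exists_subset_convexHull_range hK.isCompact.isBounded
  let T (m : ℕ) : Set E := (⋂ i < m, {x | f i x ≤ c i}) ∩ convexHull ℝ (range p)
  have hT (m : ℕ) : IsCompactConvex (T m) := by
    have hp := isCompactConvex_convexHull_range p
    refine ⟨hp.isCompact.inter_left (isClosed_biInter fun i _ =>
      isClosed_le (f i).continuous continuous_const), (convex_iInter₂ fun i _ =>
      convex_halfSpace_le (f i).isLinear (c i)).inter hp.convex⟩
  have hanti : Antitone T := fun m n hmn => inter_subset_inter_left _
    (biInter_mono (fun i hi => lt_of_lt_of_le hi hmn) fun _ _ => Subset.rfl)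
  have hinter : ⋂ m, T m = K := by
    refine Subset.antisymm (fun x hx => ?_) (subset_iInter fun m => subset_inter ?_ hp)
    · rw [← hfc]
      exact mem_iInter.2 fun i => mem_iInter₂.1 (mem_iInter.1 hx (i + 1)).1 i i.lt_succ_self
    · exact subset_iInter₂ fun i _ => hfc ▸ iInter_subset _ i
  have hlim := hφ.tendsto_nat hT hK
    (hinter ▸ tendstoBody_of_antitone hanti fun m => (hT m).isCompact)
  simp only [T, VanishesOnSimplices.biInter_le hφ h f c _ p] at hlim
  exact tendsto_nhds_unique hlim tendsto_const_nhds

end Vanishing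

end Simplex

section CornerSimplex

variable {E : Type*} [NormedAddCommGroup E] [NormedSpace ℝ E] {φ : Set E → ℝ}

theorem isCompactConvex_parallelepiped {ι : Type*} [Fintype ι] (w : ι → E) :
    IsCompactConvex (parallelepiped w) :=
  ⟨isCompact_Icc.image (by fun_prop), convex_parallelepiped w⟩

theorem IsKlainValuation.eq_zero_of_vadd_neg_eq (hφ : IsKlainValuation φ)
    (hsymm : ∀ {K : Set E}, IsCompactConvex K → -K = K → φ K = 0) {K : Set E}
    (hK : IsCompactConvex K) {s : E} (hs : s +ᵥ -K = K) : φ K = 0 := by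
  rw [← hφ.vadd hK (-((1 / 2 : ℝ) • s))]
  refine hsymm (hK.vadd _) ?_
  ext x
  rw [Set.mem_neg, mem_vadd_set_iff_neg_vadd_mem, mem_vadd_set_iff_neg_vadd_mem]
  nth_rw 1 [← hs]
  rw [mem_vadd_set_iff_neg_vadd_mem, Set.mem_neg]
  simp only [vadd_eq_add]
  congr! 1
  module

variable {ι : Type*} [Fintype ι] (b : Module.Basis ι ℝ E)

theorem mem_parallelepiped_basis_iff {x : E} :
    x ∈ parallelepiped b ↔ ∀ i, b.repr x i ∈ Icc (0 : ℝ) 1 := by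
  rw [parallelepiped_basis_eq]
  rfl

theorem sum_sub_mem_parallelepiped_basis_iff {x : E} :
    ∑ i, b i - x ∈ parallelepiped b ↔ x ∈ parallelepiped b := by
  simp only [mem_parallelepiped_basis_iff, map_sub, map_sum, b.repr_self, mem_Icc]
  refine forall_congr' fun i => ?_
  simp [and_comm]

theorem sumCoords_eq_sum (x : E) : b.sumCoords x = ∑ i, b.repr x i := by
  simp

theorem sumCoords_sum_sub (x : E) :
    b.sumCoords (∑ i, b i - x) = Fintype.card ι - b.sumCoords x := by
  rw [map_sub, map_sum]
  simp only [b.sumCoords_self_apply]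
  simp

/-- The slab between the corner simplex and its opposite copy is centrally symmetric, so both
corners have the same value by evenness and this value is half that of the parallelotope. -/
theorem IsKlainValuation.parallelepiped_inter_sumCoords_le_one [FiniteDimensional ℝ E]
    (hφ : IsKlainValuation φ)
    (hsymm : ∀ {K : Set E}, IsCompactConvex K → -K = K → φ K = 0)
    (hb : φ (parallelepiped b) = 0) : φ (parallelepiped b ∩ {x | b.sumCoords x ≤ 1}) = 0 := by
  set P := parallelepiped b
  have hPc : IsCompactConvex P := isCompactConvex_parallelepiped b
  set f : E →L[ℝ] ℝ := LinearMap.toContinuousLinearMap b.sumCoords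
  set s := ∑ i, b i
  have hfs (x : E) : f (s - x) = Fintype.card ι - f x := sumCoords_sum_sub b x
  have hPs (x : E) : s - x ∈ P ↔ x ∈ P := sum_sub_mem_parallelepiped_basis_iff b
  change φ (P ∩ {x | f x ≤ 1}) = 0
  rcases le_or_gt (Fintype.card ι) 1 with hcard | hcard
  · have hsub : P ⊆ {x | f x ≤ 1} := fun x hx => by
      have hsum : f x ≤ ∑ _i : ι, (1 : ℝ) := (sumCoords_eq_sum b x).trans_le <|
        Finset.sum_le_sum fun i _ => ((mem_parallelepiped_basis_iff b).1 hx i).2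
      exact hsum.trans (by simpa using hcard)
    rwa [inter_eq_left.2 hsub]
  have hf0 : f ≠ 0 := by
    obtain ⟨i⟩ := Fintype.card_pos_iff.1 (zero_lt_one.trans hcard)
    exact fun h => one_ne_zero (α := ℝ) <| (b.sumCoords_self_apply i).symm.trans
      (DFunLike.congr_fun h (b i))
  have hcut := hφ.cut hPc hf0 1
  have hcut' := hφ.cut (hPc.inter_ge f 1) hf0 (Fintype.card ι - 1)
  have hreflect (x : E) (Q : Set E) : x ∈ s +ᵥ -Q ↔ s - x ∈ Q := by
    rw [mem_vadd_set_iff_neg_vadd_mem, Set.mem_neg, vadd_eq_add, neg_add, neg_neg, sub_eq_add_neg]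
  have hmid : φ (P ∩ {x | 1 ≤ f x} ∩ {x | f x ≤ Fintype.card ι - 1}) = 0 := by
    refine hφ.eq_zero_of_vadd_neg_eq hsymm ((hPc.inter_ge f 1).inter_le f _) (s := s) ?_
    ext x
    simp only [hreflect, mem_inter_iff, mem_ofPred_eq, hPs, hfs]
    grind
  have hopp : P ∩ {x | 1 ≤ f x} ∩ {x | Fintype.card ι - 1 ≤ f x} = s +ᵥ -(P ∩ {x | f x ≤ 1}) := by
    ext x
    have hcard : (2 : ℝ) ≤ Fintype.card ι := by exact_mod_cast hcard
    simp only [hreflect, mem_inter_iff, mem_ofPred_eq, hPs, hfs]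
    grind
  rw [hmid, hopp, hφ.vadd (hPc.inter_le f 1).neg, hφ.neg (hPc.inter_le f 1)] at hcut'
  linarith

variable {κ : Type*} (a : AffineBasis κ ℝ E) (i : κ)

theorem basisOf_repr_sub [Finite κ] (x : E) (j : {j // j ≠ i}) :
    (a.basisOf i).repr (x - a i) j = a.coord j x := by
  classical
  have := Fintype.ofFinite κ
  have hx : ∑ j : {j // j ≠ i}, a.coord j x • a.basisOf i j = x - a i := by
    have h := Fintype.sum_eq_add_sum_subtype_ne (fun j => a.coord j x • (a j - a i)) i
    simp only [sub_self, smul_zero, zero_add, smul_sub, Finset.sum_sub_distrib] at h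
    rw [a.linear_combination_coord_eq_self, ← Finset.sum_smul, a.sum_coord_apply_eq_one,
      one_smul] at h
    simp only [h, a.basisOf_apply, vsub_eq_sub, smul_sub, Finset.sum_sub_distrib]
  rw [← hx, (a.basisOf i).repr_sum_self]

/-- A simplex is a corner of the parallelotope spanned by its edges at a vertex. -/
theorem convexHull_range_affineBasis [Fintype κ] [DecidableEq κ] :
    convexHull ℝ (range a) =
      a i +ᵥ (parallelepiped (a.basisOf i) ∩ {x | (a.basisOf i).sumCoords x ≤ 1}) := by
  ext x
  have hsum : a.coord i x = 1 - (a.basisOf i).sumCoords (x - a i) := rfl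
  rw [a.convexHull_eq_nonneg_coord, mem_vadd_set_iff_neg_vadd_mem, vadd_eq_add, neg_add_eq_sub,
    mem_inter_iff, mem_parallelepiped_basis_iff]
  simp only [basisOf_repr_sub, mem_ofPred_eq]
  constructor
  · intro h
    refine ⟨fun j => ⟨h j, ?_⟩, by linarith [h i]⟩
    exact (Finset.single_le_sum (fun k _ => h k) (Finset.mem_univ (j : κ))).trans_eq
      (a.sum_coord_apply_eq_one x)
  · rintro ⟨h, hi⟩ j
    rcases eq_or_ne j i with rfl | hj
    · linarith
    · exact (h ⟨j, hj⟩).1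

end CornerSimplex

section Klain

variable {E : Type*} [NormedAddCommGroup E] [InnerProductSpace ℝ E] [FiniteDimensional ℝ E]
  {φ : Set E → ℝ}

theorem VanishesOnParallelotopes.vanishesOnSimplices (hφ : IsKlainValuation φ)
    (hsymm : ∀ {K : Set E}, IsCompactConvex K → -K = K → φ K = 0)
    (h : VanishesOnParallelotopes φ (Module.finrank ℝ E)) : VanishesOnSimplices φ := by
  intro p
  by_cases hp : AffineIndependent ℝ p
  · let a : AffineBasis (Fin (Module.finrank ℝ E + 1)) ℝ E :=
      ⟨p, hp, hp.affineSpan_eq_top_iff_card_eq_finrank_add_one.2 (Fintype.card_fin _)⟩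
    have hcorner := (isCompactConvex_parallelepiped (a.basisOf 0)).inter_le
      (LinearMap.toContinuousLinearMap (a.basisOf 0).sumCoords) 1
    change φ (convexHull ℝ (range a)) = 0
    rw [convexHull_range_affineBasis a 0]
    refine (hφ.vadd hcorner _).trans
      (hφ.parallelepiped_inter_sumCoords_le_one (a.basisOf 0) hsymm ?_)
    rw [← parallelepiped_comp_equiv (a.basisOf 0) (finSuccAboveEquiv 0)]
    exact h _
  · exact hφ.simple (isCompactConvex_convexHull_range p)
      (interior_convexHull_range_of_not_affineIndependent hp)

end Klain

theorem IsKlainValuation.eq_zero_of_vanishesOnParallelotopes.{u} {E : Type u}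
    [NormedAddCommGroup E] [InnerProductSpace ℝ E] [FiniteDimensional ℝ E] {φ : Set E → ℝ}
    (hφ : IsKlainValuation φ) (h : VanishesOnParallelotopes φ (Module.finrank ℝ E)) {K : Set E}
    (hK : IsCompactConvex K) : φ K = 0 := by
  obtain ⟨n, hn⟩ : ∃ n, Module.finrank ℝ E = n := ⟨_, rfl⟩
  induction n generalizing E with
  | zero =>
    have := Module.finrank_zero_iff.1 hn
    rcases K.eq_empty_or_nonempty with rfl | hne
    · exact hφ.empty
    · convert h 0
      exact (Subsingleton.eq_univ_of_nonempty hne).trans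
        (Subsingleton.eq_univ_of_nonempty (nonempty_Icc.2 zero_le_one |>.image _)).symm
  | succ n ih =>
    have : Fact (Module.finrank ℝ E = n + 1) := ⟨hn⟩
    have : Nontrivial E := Module.nontrivial_of_finrank_eq_succ hn
    have hprism : ∀ w ≠ (0 : E), ∀ A : Set (ℝ ∙ w)ᗮ, IsCompactConvex A →
        φ (_root_.prism w A) = 0 := fun w hw A hA =>
      have hdim : Module.finrank ℝ (ℝ ∙ w)ᗮ = n := Submodule.finrank_orthogonal_span_singleton hw
      ih (hφ.prism hw) (hdim ▸ VanishesOnParallelotopes.prism (hn ▸ h) hw) hA hdim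
    have hsymm : ∀ {K : Set E}, IsCompactConvex K → -K = K → φ K = 0 :=
      hφ.eq_zero_of_neg_eq fun K hK u => hφ.add_segment_neg hprism hK u
    exact hφ.eq_zero_of_vanishesOnSimplices (h.vanishesOnSimplices hφ hsymm) hK

/-! ### Hausdorff convergence -/

section Hausdorff

section NormedSpace

variable {E : Type*} [NormedAddCommGroup E] [NormedSpace ℝ E]

theorem convex_of_tendsto_hausdorffDist {K : ℕ → Set E} {L : Set E} (hL : IsCompact L)
    (hLne : L.Nonempty) (hK : ∀ i, IsCompactConvex (K i)) (hKne : ∀ i, (K i).Nonempty)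
    (h : Tendsto (fun i => hausdorffDist (K i) L) atTop (nhds 0)) : Convex ℝ L := by
  have hfin (i : ℕ) : hausdorffEDist (K i) L ≠ ⊤ :=
    hausdorffEDist_ne_top_of_nonempty_of_bounded (hKne i) hLne
      (hK i).isCompact.isBounded hL.isBounded
  have hLK : L = ⋂ i, cthickening (hausdorffDist (K i) L) (K i) := by
    refine Subset.antisymm (subset_iInter fun i x hx => ?_) fun x hx => ?_
    · rw [mem_cthickening_iff, hausdorffDist, ENNReal.ofReal_toReal (hfin i), hausdorffEDist_comm]
      exact infEDist_le_hausdorffEDist_of_mem hx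
    · rw [hL.isClosed.mem_iff_infDist_zero hLne]
      have hle (i : ℕ) : infDist x L ≤ hausdorffDist (K i) L + hausdorffDist (K i) L := by
        refine (infDist_le_infDist_add_hausdorffDist (hfin i)).trans (add_le_add_left ?_ _)
        have := mem_cthickening_iff.1 (mem_iInter.1 hx i)
        exact ENNReal.toReal_le_of_le_ofReal hausdorffDist_nonneg this
      exact le_antisymm (ge_of_tendsto' (by simpa using h.add h) hle) infDist_nonneg
  rw [hLK]
  exact convex_iInter fun i => (hK i).convex.cthickening _

theorem exists_subseq_tendsto_hausdorffDist {K : ℕ → Set E} {C : Set E} (hC : IsCompact C)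
    (hK : ∀ i, IsCompactConvex (K i)) (hKne : ∀ i, (K i).Nonempty) (hKC : ∀ i, K i ⊆ C) :
    ∃ L, IsCompactConvex L ∧ L.Nonempty ∧ L ⊆ C ∧ ∃ u : ℕ → ℕ, StrictMono u ∧
      Tendsto (fun i => hausdorffDist (K (u i)) L) atTop (nhds 0) := by
  let κ (i : ℕ) : TopologicalSpace.NonemptyCompacts E := ⟨⟨K i, (hK i).isCompact⟩, hKne i⟩
  obtain ⟨L, hLC, u, hu, hlim⟩ :=
    (TopologicalSpace.NonemptyCompacts.isCompact_subsets_of_isCompact hC).tendsto_subseq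
      (x := κ) hKC
  have hdist : Tendsto (fun i => hausdorffDist (K (u i)) L) atTop (nhds 0) :=
    tendsto_iff_dist_tendsto_zero.1 hlim
  exact ⟨L, ⟨L.isCompact, convex_of_tendsto_hausdorffDist L.isCompact L.nonempty (fun i => hK _)
    (fun i => hKne _) hdist⟩, L.nonempty, hLC, u, hu, hdist⟩

end NormedSpace

section InnerProductSpace

variable {E : Type*} [NormedAddCommGroup E] [InnerProductSpace ℝ E] [FiniteDimensional ℝ E]

/-- A convex set that misses an interior point `x` of `L` is separated from it, and thus stays away
from the far side of a ball around `x`. -/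
theorem tendstoBody_of_tendsto_hausdorffDist {ι : Type*} {l : Filter ι} {K : ι → Set E} {L : Set E}
    (hK : ∀ i, IsCompactConvex (K i)) (hKne : ∀ i, (K i).Nonempty) (hL : IsCompact L)
    (hLne : L.Nonempty) (h : Tendsto (fun i => hausdorffDist (K i) L) l (nhds 0)) :
    TendstoBody K l L := by
  have hfin (i : ι) : hausdorffEDist (K i) L ≠ ⊤ :=
    hausdorffEDist_ne_top_of_nonempty_of_bounded (hKne i) hLne
      (hK i).isCompact.isBounded hL.isBounded
  constructor
  · intro x hx
    obtain ⟨r, hr, hball⟩ := nhds_basis_closedBall.mem_iff.1 (mem_interior_iff_mem_nhds.1 hx)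
    filter_upwards [h.eventually (gt_mem_nhds hr)] with i hi
    by_contra hxK
    obtain ⟨u, c, hKu, hux⟩ := exists_lt_inner_of_notMem (hK i) hxK
    have hu : 0 < ‖u‖ := by
      obtain ⟨k, hk⟩ := hKne i
      refine norm_pos_iff.2 fun hu => ?_
      have := (hKu k hk).trans hux
      simp only [hu, inner_zero_left, lt_self_iff_false] at this
    have hfar : x + (r / ‖u‖) • u ∈ L := hball <| by
      simp [norm_smul, abs_of_pos hr, hu.ne']
    obtain ⟨y, hy, hxy⟩ := exists_dist_lt_of_hausdorffDist_lt' hfar hi (hfin i)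
    have hinner : r * ‖u‖ < inner ℝ u (x + (r / ‖u‖) • u - y) := by
      rw [inner_sub_right, inner_add_right, inner_smul_right, real_inner_self_eq_norm_sq]
      have : r / ‖u‖ * ‖u‖ ^ 2 = r * ‖u‖ := by field_simp
      linarith [hKu y hy]
    refine (hinner.trans_le (real_inner_le_norm _ _)).not_ge ?_
    rw [mul_comm, ← dist_eq_norm, dist_comm]
    gcongr
  · intro U hU hLU
    obtain ⟨δ, hδ, hδU⟩ := hL.exists_thickening_subset_open hU hLU
    filter_upwards [h.eventually (gt_mem_nhds hδ)] with i hi x hx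
    obtain ⟨y, hy, hxy⟩ := exists_dist_lt_of_hausdorffDist_lt hx hi (hfin i)
    exact hδU (mem_thickening_iff.2 ⟨y, hy, hxy⟩)

theorem IsSimpleValuation.exists_abs_le {φ : Set E → ℝ} (hφ : IsSimpleValuation φ) {C : Set E}
    (hC : IsCompact C) : ∃ B, ∀ K ⊆ C, IsCompactConvex K → |φ K| ≤ B := by
  by_contra! h
  choose K hKC hK hB using fun m : ℕ => h m
  have hKne (m : ℕ) : (K m).Nonempty := by
    refine nonempty_iff_ne_empty.2 fun h => ?_
    have := hB m
    rw [h, hφ.empty, abs_zero] at this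
    exact this.not_ge m.cast_nonneg
  obtain ⟨L, hL, hLne, -, u, hu, hlim⟩ := exists_subseq_tendsto_hausdorffDist hC hK hKne hKC
  have hbody := tendstoBody_of_tendsto_hausdorffDist (fun i => hK (u i)) (fun i => hKne (u i))
    hL.isCompact hLne hlim
  refine not_tendsto_nhds_of_tendsto_atTop ?_ _ (hφ.tendsto (fun i => hK (u i)) hL hbody).abs
  exact tendsto_atTop_mono (fun i => (hB (u i)).le)
    (tendsto_natCast_atTop_atTop.comp hu.tendsto_atTop)

end InnerProductSpace

end Hausdorff

/-! ### The kinematic formula -/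

section Slabs

variable {E : Type*} [NormedAddCommGroup E] [NormedSpace ℝ E] {φ : Set E → ℝ} {K : Set E}

theorem tendstoBody_inter_forall_le {ι X : Type*} [Finite ι] [TopologicalSpace X]
    (hK : IsCompact K) {f : ι → E →L[ℝ] ℝ} (hf : ∀ j, f j ≠ 0) {c : ι → X → ℝ} {a : X}
    (hc : ∀ j, ContinuousAt (c j) a) :
    TendstoBody (fun t => K ∩ {x | ∀ j, f j x ≤ c j t}) (nhds a)
      (K ∩ {x | ∀ j, f j x ≤ c j a}) := by
  refine tendstoBody_of_isCompact hK (.of_forall fun t => inter_subset_left) ?_ ?_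
  · intro x hx
    have hlt (j : ι) : f j x < c j a := by
      have hopen := (f j).isOpenMap_of_ne_zero (hf j) _ (isOpen_interior
        (s := K ∩ {x | ∀ j, f j x ≤ c j a}))
      have hsub : f j '' interior (K ∩ {x | ∀ j, f j x ≤ c j a}) ⊆ Iic (c j a) :=
        image_subset_iff.2 fun y hy => (interior_subset hy).2 j
      have := hopen.subset_interior_iff.2 hsub (mem_image_of_mem _ hx)
      rwa [interior_Iic] at this
    filter_upwards [eventually_all.2 fun j => (hc j).eventually (lt_mem_nhds (hlt j))] with t ht
    exact ⟨(interior_subset hx).1, fun j => (ht j).le⟩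
  · intro x hx
    by_cases hxK : x ∈ K
    · obtain ⟨j, hj⟩ := not_forall.1 fun h => hx ⟨hxK, h⟩
      have := ((hc j).tendsto.comp tendsto_fst).eventually_lt
        (((f j).continuous.tendsto x).comp tendsto_snd) (not_le.1 hj)
      filter_upwards [this] with p hp h using hp.not_ge (h.2 j)
    · filter_upwards [tendsto_snd.eventually (hK.isClosed.isOpen_compl.mem_nhds hxK)] with p hp h
      exact hp h.1

theorem integral_add_one_sub {G : ℝ → ℝ} (hG : Continuous G) {a b c : ℝ}
    (ha : ∀ s ≤ a, G s = 0) (hb : ∀ s, b ≤ s → G s = c) : ∫ s, (G (s + 1) - G s) = c := by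
  have hint (x y : ℝ) : IntervalIntegrable G volume x y := hG.intervalIntegrable x y
  have hsupp : Function.support (fun s => G (s + 1) - G s) ⊆ Ioc (a - 1) b := by
    refine Function.support_subset_iff'.2 fun s hs => ?_
    rcases not_and_or.1 hs with hs | hs
    · rw [ha s (by linarith), ha (s + 1) (by linarith), sub_zero]
    · rw [hb s (by linarith), hb (s + 1) (by linarith), sub_self]
  rw [← intervalIntegral.integral_eq_integral_of_support_subset hsupp,
    intervalIntegral.integral_sub (Continuous.intervalIntegrable (by fun_prop) _ _) (hint _ _),
    intervalIntegral.integral_comp_add_right, sub_add_cancel,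
    intervalIntegral.integral_interval_sub_interval_comm (hint _ _) (hint _ _) (hint _ _)]
  have hleft : ∫ s in a..a - 1, G s = ∫ _ in a..a - 1, 0 :=
    intervalIntegral.integral_congr fun s hs => ha s (by
      rw [uIcc_of_ge (by linarith)] at hs; exact hs.2)
  have hright : ∫ s in b + 1..b, G s = ∫ _ in b + 1..b, c :=
    intervalIntegral.integral_congr fun s hs => hb s (by
      rw [uIcc_of_ge (by linarith)] at hs; exact hs.1)
  rw [hleft, hright, intervalIntegral.integral_zero, intervalIntegral.integral_const]
  simp

theorem IsSimpleValuation.integral_inter_slab (hφ : IsSimpleValuation φ) (hK : IsCompactConvex K)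
    {f : E →L[ℝ] ℝ} (hf : f ≠ 0) : ∫ s, φ (K ∩ {x | f x ∈ Icc s (s + 1)}) = φ K := by
  obtain ⟨R, hR⟩ := (hK.isCompact.image f.continuous).isBounded.exists_norm_le
  have hbound (x : E) (hx : x ∈ K) : |f x| ≤ R := hR _ (mem_image_of_mem f hx)
  have hcont : Continuous fun s => φ (K ∩ {x | f x ≤ s}) := by
    refine continuous_iff_continuousAt.2 fun s => ?_
    have := tendstoBody_inter_forall_le (ι := Unit) (f := fun _ => f) (c := fun _ s => s)
      hK.isCompact (fun _ => hf) (fun _ => continuousAt_id (x := s))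
    simp only [forall_const] at this
    exact hφ.tendsto (fun s => hK.inter_le f s) (hK.inter_le f s) this
  have hcut (s : ℝ) : φ (K ∩ {x | f x ∈ Icc s (s + 1)}) =
      φ (K ∩ {x | f x ≤ s + 1}) - φ (K ∩ {x | f x ≤ s}) := by
    have hle : K ∩ {x | f x ≤ s + 1} ∩ {x | f x ≤ s} = K ∩ {x | f x ≤ s} := by
      have hsub : {x | f x ≤ s} ⊆ {x | f x ≤ s + 1} := fun x (hx : f x ≤ s) => by
        rw [mem_ofPred_eq]; linarith
      rw [inter_assoc, inter_eq_right.2 hsub]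
    have hge : K ∩ {x | f x ≤ s + 1} ∩ {x | s ≤ f x} = K ∩ {x | f x ∈ Icc s (s + 1)} := by
      rw [inter_assoc, inter_comm {x | f x ≤ s + 1}]
      rfl
    rw [hφ.cut (hK.inter_le f (s + 1)) hf s, hle, hge, add_sub_cancel_left]
  simp only [hcut]
  refine integral_add_one_sub hcont (a := -R - 1) (b := R) (fun s hs => ?_) fun s hs => ?_
  · rw [← hφ.empty]
    congr
    refine eq_empty_of_forall_notMem fun x hx => ?_
    have : f x ≤ s := hx.2
    linarith [neg_le_of_abs_le (hbound x hx.1)]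
  · congr
    exact inter_eq_left.2 fun x hx => (le_of_abs_le (hbound x hx)).trans hs

/-- The intersection of the unit slabs `t i ≤ f i x ≤ t i + 1`. -/
def slabs {ι : Type*} (f : ι → E →L[ℝ] ℝ) (t : ι → ℝ) : Set E :=
  {x | ∀ i, f i x ∈ Icc (t i) (t i + 1)}

theorem IsCompactConvex.inter_slabs {ι : Type*} (hK : IsCompactConvex K) (f : ι → E →L[ℝ] ℝ)
    (t : ι → ℝ) : IsCompactConvex (K ∩ slabs f t) := by
  have hslabs : slabs f t = ⋂ i, f i ⁻¹' Icc (t i) (t i + 1) := by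
    ext x
    simp [slabs]
  rw [hslabs]
  exact ⟨hK.isCompact.inter_right (isClosed_iInter fun i => isClosed_Icc.preimage (f i).continuous),
    hK.convex.inter (convex_iInter fun i => (convex_Icc _ _).is_linear_preimage (f i).isLinear)⟩

theorem IsSimpleValuation.continuous_inter_slabs {ι : Type*} [Finite ι] (hφ : IsSimpleValuation φ)
    (hK : IsCompactConvex K) {f : ι → E →L[ℝ] ℝ} (hf : ∀ i, f i ≠ 0) :
    Continuous fun t => φ (K ∩ slabs f t) := by
  refine continuous_iff_continuousAt.2 fun t => ?_
  let c : ι ⊕ ι → (ι → ℝ) → ℝ := Sum.elim (fun i t => t i + 1) (fun i t => -t i)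
  have hslabs (t : ι → ℝ) : {x | ∀ j, Sum.elim f (-f) j x ≤ c j t} = slabs f t := by
    ext x
    simp [slabs, c, forall_and, and_comm]
  have := tendstoBody_inter_forall_le (f := Sum.elim f (-f)) (c := c) (a := t) hK.isCompact
    (Sum.forall.2 ⟨hf, fun i => neg_ne_zero.2 (hf i)⟩)
    (Sum.forall.2 ⟨fun i => ((continuous_apply i).add_const 1).continuousAt,
      fun i => (continuous_apply i).neg.continuousAt⟩)
  simp only [hslabs] at this
  exact hφ.tendsto (fun t => hK.inter_slabs f t) (hK.inter_slabs f t) this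

theorem IsSimpleValuation.hasCompactSupport_inter_slabs {ι : Type*} (hφ : IsSimpleValuation φ)
    (hK : IsCompact K) (f : ι → E →L[ℝ] ℝ) :
    HasCompactSupport fun t => φ (K ∩ slabs f t) := by
  refine .intro (isCompact_univ_pi fun i =>
    (hK.image (f i).continuous).add (isCompact_Icc (a := (-1 : ℝ)) (b := 0))) fun t ht => ?_
  rw [← hφ.empty]
  congr
  refine eq_empty_of_forall_notMem fun x hx => ht fun i _ => ?_
  obtain ⟨h₁, h₂⟩ := hx.2 i
  exact ⟨f i x, mem_image_of_mem _ hx.1, t i - f i x, ⟨by linarith, by linarith⟩, by ring⟩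

theorem IsSimpleValuation.integral_inter_slabs {m : ℕ} (hφ : IsSimpleValuation φ)
    (hK : IsCompactConvex K) {f : Fin m → E →L[ℝ] ℝ} (hf : ∀ i, f i ≠ 0) :
    ∫ t, φ (K ∩ slabs f t) = φ K := by
  induction m generalizing K with
  | zero =>
    have huniv (t : Fin 0 → ℝ) : slabs f t = univ := eq_univ_of_forall fun _ i => i.elim0
    simp [huniv, volume_pi, Measure.real]
  | succ m ih =>
    have hcons (s : ℝ) (t : Fin m → ℝ) : K ∩ slabs f (Fin.cons s t) =
        K ∩ {x | f 0 x ∈ Icc s (s + 1)} ∩ slabs (Fin.tail f) t := by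
      ext x
      simp [slabs, Fin.forall_fin_succ, and_assoc, Fin.tail]
    have hint := (hφ.continuous_inter_slabs hK hf).integrable_of_hasCompactSupport
      (μ := volume) (hφ.hasCompactSupport_inter_slabs hK.isCompact f)
    have hpre := (volume_preserving_piFinSuccAbove (fun _ : Fin (m + 1) => ℝ) 0).symm
    have hprod (p : ℝ × (Fin m → ℝ)) : (MeasurableEquiv.piFinSuccAbove (fun _ => ℝ) 0).symm p =
        (Fin.cons p.1 p.2 : Fin (m + 1) → ℝ) :=
      Fin.insertNth_zero' p.1 p.2
    have hint' := hpre.integrable_comp_of_integrable hint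
    rw [← hpre.integral_comp', Measure.volume_eq_prod]
    refine (integral_prod _ hint').trans ?_
    simp only [Function.comp_apply, hprod, hcons]
    rw [← hφ.integral_inter_slab hK (hf 0)]
    refine integral_congr_ae (.of_forall fun s => ih ⟨?_, ?_⟩ fun i => hf i.succ)
    · exact hK.isCompact.inter_right (isClosed_Icc.preimage (f 0).continuous)
    · exact hK.convex.inter ((convex_Icc _ _).is_linear_preimage (f 0).isLinear)

end Slabs

section Translates

variable {E : Type*} [NormedAddCommGroup E]

theorem tendstoBody_vadd {Q : Set E} (hQ : IsCompact Q) (t : E) :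
    TendstoBody (fun s => s +ᵥ Q) (nhds t) (t +ᵥ Q) := by
  refine ⟨fun x hx => ?_, fun U hU hQU => ?_⟩
  · rw [interior_vadd, mem_vadd_set_iff_neg_vadd_mem] at hx
    have hcont : Tendsto (fun s : E => -s +ᵥ x) (nhds t) (nhds (-t +ᵥ x)) :=
      Continuous.tendsto (by simp only [vadd_eq_add]; fun_prop) t
    filter_upwards [hcont.eventually (isOpen_interior.mem_nhds hx)] with s hs
    exact mem_vadd_set_iff_neg_vadd_mem.2 (interior_subset hs)
  · have := hQ.eventually_forall_of_forall_eventually (x₀ := t) (P := fun s q => s + q ∈ U)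
      fun q hq => (continuous_add.tendsto (t, q)).eventually (hU.mem_nhds
        (hQU (vadd_mem_vadd_set hq)))
    filter_upwards [this] with s hs
    rintro _ ⟨q, hq, rfl⟩
    exact hs q hq

theorem inter_vadd_eq_empty {K Q : Set E} {t : E} (ht : t ∉ K + -Q) : K ∩ (t +ᵥ Q) = ∅ := by
  refine eq_empty_of_forall_notMem ?_
  rintro _ ⟨hK, q, hq, rfl⟩
  exact ht ⟨_, hK, -q, neg_mem_neg.2 hq, add_neg_cancel_right t q⟩

variable [NormedSpace ℝ E] {φ : Set E → ℝ} {K Q : Set E}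

theorem IsSimpleValuation.continuous_inter_vadd (hφ : IsSimpleValuation φ)
    (hK : IsCompactConvex K) (hQ : IsCompactConvex Q) : Continuous fun t : E => φ (K ∩ (t +ᵥ Q)) :=
  continuous_iff_continuousAt.2 fun t => hφ.tendsto (fun s => hK.inter (hQ.vadd s))
    (hK.inter (hQ.vadd t)) ((tendstoBody_vadd hQ.isCompact t).inter_left hK.isCompact.isClosed)

theorem IsSimpleValuation.hasCompactSupport_inter_vadd (hφ : IsSimpleValuation φ)
    (hK : IsCompact K) (hQ : IsCompact Q) : HasCompactSupport fun t : E => φ (K ∩ (t +ᵥ Q)) :=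
  .intro (hK.add hQ.neg) fun t ht => by rw [inter_vadd_eq_empty ht, hφ.empty]

theorem vadd_parallelepiped_basis_eq_slabs [FiniteDimensional ℝ E] {ι : Type*} [Fintype ι]
    (b : Module.Basis ι ℝ E) (t : ι → ℝ) :
    b.equivFunL.symm t +ᵥ parallelepiped b =
      slabs (fun i => LinearMap.toContinuousLinearMap (b.coord i)) t := by
  ext x
  simp only [mem_vadd_set_iff_neg_vadd_mem, mem_parallelepiped_basis_iff, slabs, mem_ofPred_eq]
  refine forall_congr' fun i => ?_
  have hcoord : b.repr (-b.equivFunL.symm t +ᵥ x) i = b.repr x i - t i := by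
    rw [vadd_eq_add, neg_add_eq_sub, map_sub, Finsupp.sub_apply]
    congr 1
    exact congrFun (b.equivFun.apply_symm_apply t) i
  rw [hcoord, mem_Icc, mem_Icc, sub_nonneg, sub_le_iff_le_add']
  rfl

variable [MeasurableSpace E] [BorelSpace E] (μ : Measure E)

theorem IsSimpleValuation.integrable_inter_vadd [IsFiniteMeasureOnCompacts μ]
    (hφ : IsSimpleValuation φ) (hK : IsCompactConvex K) (hQ : IsCompactConvex Q) :
    Integrable (fun t => φ (K ∩ (t +ᵥ Q))) μ :=
  (hφ.continuous_inter_vadd hK hQ).integrable_of_hasCompactSupport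
    (hφ.hasCompactSupport_inter_vadd hK.isCompact hQ.isCompact)

theorem IsSimpleValuation.integral_inter_vadd_parallelepiped_basis [FiniteDimensional ℝ E]
    [μ.IsAddHaarMeasure] {m : ℕ} (hφ : IsSimpleValuation φ)
    (hK : IsCompactConvex K) (b : Module.Basis (Fin m) ℝ E) :
    ∫ t, φ (K ∩ (t +ᵥ parallelepiped b)) ∂μ = φ K * μ.real (parallelepiped b) := by
  have hμ : μ = μ (parallelepiped b) • b.addHaar := by
    rw [Module.Basis.addHaar_def]
    exact Measure.addHaarMeasure_unique μ b.parallelepiped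
  have hvol : b.addHaar = Measure.map b.equivFunL.symm volume := by
    have hmap : (Pi.basisFun ℝ (Fin m)).map b.equivFunL.symm.toLinearEquiv = b :=
      Module.Basis.eq_of_apply_eq fun i => by
        simp [Module.Basis.equivFunL]
    rw [← addHaarMeasure_eq_volume_pi, ← Module.Basis.parallelepiped_basisFun,
      ← Module.Basis.addHaar_def, Module.Basis.map_addHaar, hmap]
  have hcoord (i : Fin m) : LinearMap.toContinuousLinearMap (b.coord i) ≠ 0 := fun h => by
    have := congr($h (b i))
    simp at this
  nth_rw 1 [hμ]
  have hemb : MeasurableEmbedding b.equivFunL.symm :=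
    b.equivFunL.symm.toHomeomorph.measurableEmbedding
  rw [integral_smul_measure, hvol, hemb.integral_map]
  simp only [vadd_parallelepiped_basis_eq_slabs]
  rw [hφ.integral_inter_slabs hK hcoord, smul_eq_mul, mul_comm]
  rfl

end Translates

section Operations

variable {E : Type*} [NormedAddCommGroup E] [NormedSpace ℝ E] {φ : Set E → ℝ}

theorem IsSimpleValuation.comp_vadd (hφ : IsSimpleValuation φ) (t : E) :
    IsSimpleValuation fun K => φ (t +ᵥ K) := by
  refine ⟨by rw [vadd_set_empty, hφ.empty], fun {K L} hK hL hKL => ?_, fun {K} hK hint => ?_,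
    fun {K M} hK hM h => hφ.tendsto_nat (fun i => (hK i).vadd t) (hM.vadd t)
      (h.image_homeomorph (Homeomorph.addLeft t))⟩
  · rw [vadd_set_union, vadd_set_inter]
    exact hφ.union (hK.vadd t) (hL.vadd t)
      (vadd_set_union (a := t) (t₁ := K) (t₂ := L) ▸ hKL.vadd t)
  · exact hφ.simple (hK.vadd t) (by rw [interior_vadd, hint, vadd_set_empty])

theorem IsSimpleValuation.comp_neg (hφ : IsSimpleValuation φ) :
    IsSimpleValuation fun K => φ (-K) := by
  refine ⟨by rw [Set.neg_empty, hφ.empty], fun {K L} hK hL hKL => ?_, fun {K} hK hint => ?_,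
    fun {K M} hK hM h => hφ.tendsto_nat (fun i => (hK i).neg) hM.neg ?_⟩
  · rw [union_neg, inter_neg]
    exact hφ.union hK.neg hL.neg (union_neg (s := K) (t := L) ▸ hKL.neg)
  · exact hφ.simple hK.neg (by
      rw [← image_neg_eq_neg, ← Homeomorph.coe_neg, ← (Homeomorph.neg E).image_interior, hint,
        image_empty])
  · simpa only [image_neg_eq_neg, Homeomorph.coe_neg] using h.image_homeomorph (Homeomorph.neg E)

theorem IsSimpleValuation.add {ψ : Set E → ℝ} (hφ : IsSimpleValuation φ)
    (hψ : IsSimpleValuation ψ) : IsSimpleValuation fun K => φ K + ψ K where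
  empty := by rw [hφ.empty, hψ.empty, add_zero]
  union hK hL hKL := by
    rw [hφ.union hK hL hKL, hψ.union hK hL hKL]
    ring
  simple hK hint := by rw [hφ.simple hK hint, hψ.simple hK hint, add_zero]
  tendsto_nat hK hM h := (hφ.tendsto_nat hK hM h).add (hψ.tendsto_nat hK hM h)

theorem IsSimpleValuation.const_mul (hφ : IsSimpleValuation φ) (c : ℝ) :
    IsSimpleValuation fun K => c * φ K where
  empty := by rw [hφ.empty, mul_zero]
  union hK hL hKL := by
    rw [hφ.union hK hL hKL]
    ring
  simple hK hint := by rw [hφ.simple hK hint, mul_zero]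
  tendsto_nat hK hM h := (hφ.tendsto_nat hK hM h).const_mul c

theorem interior_parallelepiped_of_not_linearIndependent
    {w : Fin (Module.finrank ℝ E) → E} (hw : ¬LinearIndependent ℝ w) :
    interior (parallelepiped w) = ∅ := by
  have hsub : parallelepiped w ⊆ Submodule.span ℝ (range w) := by
    rintro _ ⟨t, -, rfl⟩
    exact Submodule.sum_smul_mem _ _ fun i _ => Submodule.subset_span (mem_range_self i)
  refine not_nonempty_iff_eq_empty.1 fun hne => hw ?_
  exact linearIndependent_of_top_le_span_of_card_eq_finrank
    (Submodule.eq_top_of_nonempty_interior' _ (hne.mono (interior_mono hsub))).ge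
    (Fintype.card_fin _)

end Operations

section Kinematic

variable {E : Type*} [NormedAddCommGroup E] [InnerProductSpace ℝ E] [FiniteDimensional ℝ E]
  [MeasurableSpace E] [BorelSpace E] (μ : Measure E) [μ.IsAddHaarMeasure] {φ : Set E → ℝ}
  {K Q : Set E}

theorem IsCompactConvex.measureReal_eq_zero (hK : IsCompactConvex K) (hint : interior K = ∅) :
    μ.real K = 0 := by
  have hfrontier := hK.convex.addHaar_frontier μ
  rw [hK.isCompact.isClosed.frontier_eq, hint, sdiff_empty] at hfrontier
  rw [Measure.real, hfrontier, ENNReal.toReal_zero]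

theorem isSimpleValuation_measureReal :
    IsSimpleValuation μ.real where
  empty := measureReal_empty
  union hK hL _ := eq_sub_of_add_eq <| measureReal_union_add_inter hL.isCompact.measurableSet
    hK.isCompact.measure_lt_top.ne hL.isCompact.measure_lt_top.ne
  simple hK hint := hK.measureReal_eq_zero μ hint
  tendsto_nat {K M} hK hM h := by
    have hfin : μ (cthickening 1 M) ≠ ⊤ := hM.isCompact.cthickening.measure_lt_top.ne
    refine (ENNReal.tendsto_toReal hM.isCompact.measure_lt_top.ne).comp <|
      tendsto_measure_of_ae_tendsto_indicator atTop hM.isCompact.measurableSet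
        (fun i => (hK i).isCompact.measurableSet) isClosed_cthickening.measurableSet hfin
        ((h.eventually_subset _ isOpen_thickening (self_subset_thickening one_pos M)).mono
          fun i hi => hi.trans (thickening_subset_cthickening 1 M)) ?_
    filter_upwards [measure_eq_zero_iff_ae_notMem.1 (hM.convex.addHaar_frontier μ)] with x hx
    by_cases hxM : x ∈ M
    · rw [hM.isCompact.isClosed.frontier_eq] at hx
      filter_upwards [h.eventually_mem x (not_not.1 fun hxi => hx ⟨hxM, hxi⟩)] with i hi
      exact iff_of_true hi hxM
    · filter_upwards [h.eventually_subset {x}ᶜ isOpen_compl_singleton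
        (subset_compl_singleton_iff.2 hxM)] with i hi
      exact iff_of_false (fun hxK => hi hxK rfl) hxM

theorem IsSimpleValuation.integral_inter_vadd (hφ : IsSimpleValuation φ) (hK : IsCompactConvex K) :
    IsSimpleValuation fun Q => ∫ t, φ (K ∩ (t +ᵥ Q)) ∂μ := by
  have hψ (t : E) : IsSimpleValuation fun Q => φ (K ∩ (t +ᵥ Q)) :=
    (hφ.inter_left hK.isCompact.isClosed hK.convex).comp_vadd t
  have hint {Q : Set E} := hφ.integrable_inter_vadd μ hK (Q := Q)
  refine ⟨by simp only [(hψ _).empty, integral_zero], fun {Q R} hQ hR hQR => ?_,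
    fun {Q} hQ h => by simp only [(hψ _).simple hQ h, integral_zero], fun {Q R} hQ hR h => ?_⟩
  · simp only [(hψ _).union hQ hR hQR]
    exact (integral_sub ((hint hQ).add (hint hR)) (hint (hQ.inter hR))).trans
      (congrArg (· - _) (integral_add (hint hQ) (hint hR)))
  · obtain ⟨B, hB⟩ := hφ.exists_abs_le hK.isCompact
    let C := cthickening 1 R
    have hC : IsCompact (K + -C) := hK.isCompact.add hR.isCompact.cthickening.neg
    refine tendsto_integral_filter_of_dominated_convergence ((K + -C).indicator fun _ => B)
      (.of_forall fun i => (hint (hQ i)).aestronglyMeasurable) ?_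
      ((integrable_indicator_iff hC.measurableSet).2
        (integrableOn_const hC.measure_lt_top.ne))
      (.of_forall fun t => (hψ t).tendsto_nat hQ hR h)
    filter_upwards [h.eventually_subset _ isOpen_thickening (self_subset_thickening one_pos R)]
      with i hi
    refine .of_forall fun t => ?_
    by_cases ht : t ∈ K + -C
    · rw [indicator_of_mem ht]
      exact hB _ inter_subset_left (hK.inter ((hQ i).vadd t))
    · have hsub : K ∩ (t +ᵥ Q i) ⊆ K ∩ (t +ᵥ C) :=
        inter_subset_inter_right K (vadd_set_mono (hi.trans (thickening_subset_cthickening 1 R)))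
      rw [indicator_of_notMem ht, subset_eq_empty hsub (inter_vadd_eq_empty ht), hφ.empty,
        norm_zero]

theorem isKlainValuation_kinematicDefect (hφ : IsSimpleValuation φ) (hK : IsCompactConvex K) :
    IsKlainValuation fun Q => ∫ t, φ (K ∩ (t +ᵥ Q)) ∂μ + ∫ t, φ (K ∩ (t +ᵥ -Q)) ∂μ +
      -(2 * φ K) * μ.real Q where
  toIsSimpleValuation := ((hφ.integral_inter_vadd μ hK).add
    (hφ.integral_inter_vadd μ hK).comp_neg).add ((isSimpleValuation_measureReal μ).const_mul _)
  vadd {Q} _ s := by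
    have hshift (Q : Set E) (s : E) :
        ∫ t, φ (K ∩ (t +ᵥ (s +ᵥ Q))) ∂μ = ∫ t, φ (K ∩ (t +ᵥ Q)) ∂μ := by
      simp only [vadd_vadd]
      exact integral_add_right_eq_self (fun t => φ (K ∩ (t +ᵥ Q))) s
    rw [neg_vadd_set_distrib, op_vadd_eq_vadd, hshift, hshift, measureReal_def, measure_vadd,
      measureReal_def]
  neg {Q} _ := by
    rw [neg_neg, measureReal_def, Measure.measure_neg, measureReal_def]
    congr 1
    exact add_comm _ _

/-- The principal kinematic formula for simple valuations and the group of translations, for the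
symmetrised average. -/
theorem IsSimpleValuation.integral_inter_vadd_add_integral_inter_vadd_neg
    (hφ : IsSimpleValuation φ) (hK : IsCompactConvex K) (hQ : IsCompactConvex Q) :
    ∫ t, φ (K ∩ (t +ᵥ Q)) ∂μ + ∫ t, φ (K ∩ (t +ᵥ -Q)) ∂μ = 2 * φ K * μ.real Q := by
  have hdefect := isKlainValuation_kinematicDefect μ hφ hK
  have := hdefect.eq_zero_of_vanishesOnParallelotopes (fun w => ?_) hQ
  · linarith
  by_cases hw : LinearIndependent ℝ w
  · let b := Module.Basis.mk hw (hw.span_eq_top_of_card_eq_finrank' (Fintype.card_fin _)).ge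
    have hb : parallelepiped w = parallelepiped b := by rw [Module.Basis.coe_mk]
    have hneg : -parallelepiped b = parallelepiped (b.map (LinearEquiv.neg ℝ)) := by
      rw [← image_neg_eq_neg]
      exact image_parallelepiped (LinearEquiv.neg ℝ : E ≃ₗ[ℝ] E).toLinearMap b
    beta_reduce
    rw [hb, hφ.integral_inter_vadd_parallelepiped_basis μ hK b, hneg,
      hφ.integral_inter_vadd_parallelepiped_basis μ hK, ← hneg, measureReal_def μ (-_),
      Measure.measure_neg, ← measureReal_def]
    ring
  · exact hdefect.simple (isCompactConvex_parallelepiped w)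
      (interior_parallelepiped_of_not_linearIndependent hw)

theorem IsSimpleValuation.integral_inter_vadd_of_neg_eq (hφ : IsSimpleValuation φ)
    (hK : IsCompactConvex K) (hQ : IsCompactConvex Q) (hneg : -Q = Q) :
    ∫ t, φ (K ∩ (t +ᵥ Q)) ∂μ = φ K * μ.real Q := by
  have := hφ.integral_inter_vadd_add_integral_inter_vadd_neg μ hK hQ
  rw [hneg] at this
  linarith

end Kinematic

/-! ### Almost invariant valuations -/

theorem abs_mul_measureReal_le {α : Type*} [MeasurableSpace α] {μ : Measure α} {F : α → ℝ}
    (hF : Integrable F μ) {A B : Set α} (hA : MeasurableSet A) (hAB : A ⊆ B) (hμB : μ B < ⊤)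
    {c η β : ℝ} (hzero : ∀ t ∉ B, F t = 0) (hin : ∀ t ∈ A, |F t - c| ≤ η)
    (hout : ∀ t ∈ B \ A, |F t| ≤ β) :
    |c| * μ.real A ≤ |∫ t, F t ∂μ| + η * μ.real A + β * μ.real (B \ A) := by
  have hμA : μ A < ⊤ := (measure_mono hAB).trans_lt hμB
  have hsplit : c * μ.real A = ∫ t, F t ∂μ - ∫ t in A, (F t - c) ∂μ - ∫ t in B \ A, F t ∂μ := by
    rw [← setIntegral_eq_integral_of_forall_compl_eq_zero hzero,
      ← integral_inter_add_sdiff hA hF.integrableOn, inter_eq_right.2 hAB,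
      integral_sub hF.integrableOn (integrableOn_const hμA.ne), setIntegral_const, smul_eq_mul]
    ring
  have hinner := norm_setIntegral_le_of_norm_le_const (f := fun t => F t - c) hμA hin
  have houter := norm_setIntegral_le_of_norm_le_const (f := F)
    ((measure_mono sdiff_subset).trans_lt hμB) hout
  calc |c| * μ.real A = |c * μ.real A| := by rw [abs_mul, abs_of_nonneg measureReal_nonneg]
    _ ≤ |∫ t, F t ∂μ| + |∫ t in A, (F t - c) ∂μ| + |∫ t in B \ A, F t ∂μ| := by
      rw [hsplit]
      exact (abs_sub _ _).trans (add_le_add_left (abs_sub _ _) _)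
    _ ≤ _ := add_le_add (add_le_add_right hinner _) houter

theorem isCompactConvex_closedBall {E : Type*} [NormedAddCommGroup E] [NormedSpace ℝ E]
    [ProperSpace E] (x : E) (r : ℝ) : IsCompactConvex (closedBall x r) :=
  ⟨isCompact_closedBall x r, convex_closedBall x r⟩

section QuasiInvariance

variable {E : Type*} [NormedAddCommGroup E]

theorem closedBall_zero_inter_vadd {Q : Set E} {r s : ℝ} (hQ : Q ⊆ closedBall 0 s) {t : E}
    (ht : t ∈ closedBall 0 (r - s)) : closedBall 0 r ∩ (t +ᵥ Q) = t +ᵥ Q := by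
  refine inter_eq_right.2 ?_
  rintro _ ⟨q, hq, rfl⟩
  have hq := hQ hq
  rw [mem_closedBall_zero_iff] at *
  exact (norm_add_le t q).trans (by linarith)

theorem closedBall_zero_inter_vadd_eq_empty {Q : Set E} {r s : ℝ} (hQ : Q ⊆ closedBall 0 s) {t : E}
    (ht : t ∉ closedBall 0 (r + s)) : closedBall 0 r ∩ (t +ᵥ Q) = ∅ := by
  refine inter_vadd_eq_empty fun h => ht ?_
  obtain ⟨k, hk, q, hq, rfl⟩ := h
  have hq := hQ (Set.mem_neg.1 hq)
  rw [mem_closedBall_zero_iff] at *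
  rw [norm_neg] at hq
  exact (norm_add_le k q).trans (by linarith)

variable [InnerProductSpace ℝ E]

/-- Translations and point reflections of compact convex sets change `φ` by a relative error of at
most `δ`, as long as everything stays inside `U`. -/
structure IsQuasiInvariant (φ : Set E → ℝ) (δ : ℝ) (U : Set E) : Prop where
  vadd : ∀ {X : Set E} (t : E), IsCompactConvex X → X ⊆ U → t +ᵥ X ⊆ U →
    |φ (t +ᵥ X) - φ X| ≤ δ * |φ X|
  vadd_neg : ∀ {X : Set E} (t : E), IsCompactConvex X → X ⊆ U → t +ᵥ -X ⊆ U →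
    |φ (t +ᵥ -X) - φ X| ≤ δ * |φ X|

variable {φ : Set E → ℝ} {δ : ℝ} {U K Q : Set E}

theorem IsQuasiInvariant.abs_le_two_mul (hq : IsQuasiInvariant φ δ U) (hδ : δ < 1) {X : Set E}
    (hX : IsCompactConvex X) {t : E} (hXU : X ⊆ U) (htX : -t +ᵥ X ⊆ U) :
    |φ X| ≤ 2 * |φ (-t +ᵥ X)| := by
  have h := hq.vadd t (hX.vadd (-t)) htX (by rwa [vadd_neg_vadd])
  rw [vadd_neg_vadd] at h
  have := abs_sub_abs_le_abs_sub (φ X) (φ (-t +ᵥ X))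
  nlinarith [abs_nonneg (φ (-t +ᵥ X))]

theorem IsQuasiInvariant.abs_vadd_add_vadd_neg_sub_le (hq : IsQuasiInvariant φ δ U) {X : Set E}
    (hX : IsCompactConvex X) {t : E} (hXU : X ⊆ U) (htX : t +ᵥ X ⊆ U) (htX' : t +ᵥ -X ⊆ U) :
    |φ (t +ᵥ X) + φ (t +ᵥ -X) - 2 * φ X| ≤ 2 * (δ * |φ X|) := by
  have hsub : φ (t +ᵥ X) + φ (t +ᵥ -X) - 2 * φ X =
      φ (t +ᵥ X) - φ X + (φ (t +ᵥ -X) - φ X) := by ring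
  rw [hsub, two_mul]
  exact (abs_add_le _ _).trans (add_le_add (hq.vadd t hX hXU htX) (hq.vadd_neg t hX hXU htX'))

theorem IsQuasiInvariant.abs_inter_vadd_le (hq : IsQuasiInvariant φ δ U) (hδ : δ < 1)
    (hK : IsCompactConvex K) (hKU : K ⊆ U) (hQ : IsCompactConvex Q) (hQU : Q ⊆ U) {β : ℝ}
    (hβ : ∀ Y ⊆ Q, IsCompactConvex Y → |φ Y| ≤ β) (t : E) : |φ (K ∩ (t +ᵥ Q))| ≤ 2 * β := by
  have hKQ := hK.inter (hQ.vadd t)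
  have hsub : -t +ᵥ (K ∩ (t +ᵥ Q)) ⊆ Q := by
    rw [vadd_set_inter, neg_vadd_vadd]
    exact inter_subset_right
  have := hq.abs_le_two_mul hδ hKQ (inter_subset_left.trans hKU) (hsub.trans hQU)
  linarith [hβ _ hsub (hKQ.vadd (-t))]

variable [FiniteDimensional ℝ E] [MeasurableSpace E] [BorelSpace E] (μ : Measure E)
  [μ.IsAddHaarMeasure]

/-- The kinematic formula for a ball and `X`: the integrand is almost constant `2 * φ X` on the
translates of `X` inside the ball, so `φ X` is controlled by the volume of `X` and by the translates
meeting the boundary of the ball. -/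
theorem IsQuasiInvariant.mul_abs_le (hφ : IsSimpleValuation φ) (hq : IsQuasiInvariant φ δ U)
    (hδ : δ < 1) {r s β : ℝ} (hs : 0 ≤ s) (hsr : s ≤ r) (hrU : closedBall 0 r ⊆ U)
    (hβ : ∀ Y ⊆ closedBall 0 s, IsCompactConvex Y → |φ Y| ≤ β) {X : Set E}
    (hX : IsCompactConvex X) (hXs : X ⊆ closedBall 0 s) :
    (1 - δ) * μ.real (closedBall 0 (r - s)) * |φ X| ≤ |φ (closedBall 0 r)| * μ.real X +
      2 * β * μ.real (closedBall 0 (r + s) \ closedBall 0 (r - s)) := by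
  have hK : IsCompactConvex (closedBall (0 : E) r) := isCompactConvex_closedBall 0 r
  have hnegX : -X ⊆ closedBall 0 s := by
    rw [neg_subset, neg_closedBall, neg_zero]
    exact hXs
  have hXU {Y : Set E} (hY : Y ⊆ closedBall 0 s) : Y ⊆ U :=
    hY.trans ((closedBall_subset_closedBall hsr).trans hrU)
  let F (t : E) : ℝ := φ (closedBall 0 r ∩ (t +ᵥ X)) + φ (closedBall 0 r ∩ (t +ᵥ -X))
  have hF : Integrable F μ :=
    (hφ.integrable_inter_vadd μ hK hX).add (hφ.integrable_inter_vadd μ hK hX.neg)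
  have htotal : ∫ t, F t ∂μ = 2 * φ (closedBall 0 r) * μ.real X :=
    (integral_add (hφ.integrable_inter_vadd μ hK hX) (hφ.integrable_inter_vadd μ hK hX.neg)).trans
      (hφ.integral_inter_vadd_add_integral_inter_vadd_neg μ hK hX)
  have hzero (t : E) (ht : t ∉ closedBall 0 (r + s)) : F t = 0 := by
    simp only [F, closedBall_zero_inter_vadd_eq_empty hXs ht,
      closedBall_zero_inter_vadd_eq_empty hnegX ht, hφ.empty, add_zero]
  have hin (t : E) (ht : t ∈ closedBall 0 (r - s)) : |F t - 2 * φ X| ≤ 2 * (δ * |φ X|) := by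
    have h₁ := closedBall_zero_inter_vadd hXs ht
    have h₂ := closedBall_zero_inter_vadd hnegX ht
    simp only [F, h₁, h₂]
    exact hq.abs_vadd_add_vadd_neg_sub_le hX (hXU hXs) ((inter_eq_right.1 h₁).trans hrU)
      ((inter_eq_right.1 h₂).trans hrU)
  have hout (t : E) : |F t| ≤ 2 * β + 2 * β := by
    have hbound {Y : Set E} (hY : IsCompactConvex Y) (hYs : Y ⊆ closedBall 0 s) :=
      hq.abs_inter_vadd_le hδ hK hrU hY (hXU hYs) (fun Z hZ => hβ Z (hZ.trans hYs)) t
    exact (abs_add_le _ _).trans (add_le_add (hbound hX hXs) (hbound hX.neg hnegX))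
  have hmain := abs_mul_measureReal_le hF isClosed_closedBall.measurableSet
    (closedBall_subset_closedBall (by linarith)) measure_closedBall_lt_top hzero hin
    fun t _ => hout t
  rw [htotal, abs_mul, abs_mul, abs_mul, abs_two, abs_of_nonneg measureReal_nonneg] at hmain
  linarith

end QuasiInvariance

theorem le_two_mul_of_forall_le_add_half {ι : Type*} {f : ι → ℝ} {a : ℝ}
    (hf : BddAbove (range f)) (h : ∀ β, (∀ i, f i ≤ β) → ∀ i, f i ≤ a + β / 2) (i : ι) :
    f i ≤ 2 * a := by
  have : Nonempty ι := ⟨i⟩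
  have hsup := ciSup_le (h _ (le_ciSup hf))
  linarith [le_ciSup hf i]

section SmallBodies

variable {E : Type*} [NormedAddCommGroup E] [InnerProductSpace ℝ E] [FiniteDimensional ℝ E]
  [MeasurableSpace E] [BorelSpace E] (μ : Measure E) [μ.IsAddHaarMeasure]

theorem eventually_measureReal_closedBall_sdiff_le {r κ : ℝ} (hr : 0 < r) (hκ : 0 < κ) :
    ∀ᶠ s in nhdsWithin 0 (Ioi 0), μ.real (closedBall (0 : E) (r + s) \ closedBall 0 (r - s)) ≤
      κ * μ.real (closedBall (0 : E) (r - s)) := by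
  have hlim : Tendsto (fun s => κ * (r - s) ^ Module.finrank ℝ E -
      ((r + s) ^ Module.finrank ℝ E - (r - s) ^ Module.finrank ℝ E)) (nhds 0)
      (nhds (κ * r ^ Module.finrank ℝ E)) := by
    refine Continuous.tendsto' (by fun_prop) _ _ ?_
    simp only [sub_zero, add_zero, sub_self]
  filter_upwards [self_mem_nhdsWithin, Ioo_mem_nhdsGT hr,
    (hlim.mono_left nhdsWithin_le_nhds).eventually_const_le (by positivity)] with s hs₀ hsr hs
  have hs₀ : 0 < s := hs₀
  rw [measureReal_sdiff (closedBall_subset_closedBall (by linarith))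
    isClosed_closedBall.measurableSet measure_closedBall_lt_top.ne,
    Measure.addHaar_real_closedBall μ _ (by linarith),
    Measure.addHaar_real_closedBall μ _ (by linarith [hsr.2])]
  nlinarith [measureReal_nonneg (μ := μ) (s := ball (0 : E) 1)]

variable {φ : Set E → ℝ} {δ r : ℝ} {U : Set E}

theorem IsQuasiInvariant.exists_abs_le_of_subset_closedBall_zero (hφ : IsSimpleValuation φ)
    (hq : IsQuasiInvariant φ δ U) (hδ : δ < 1) (hr : 0 < r) (hrU : closedBall 0 r ⊆ U) :
    ∃ C, ∀ᶠ s in nhdsWithin 0 (Ioi 0), ∀ X ⊆ closedBall 0 s, IsCompactConvex X →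
      |φ X| ≤ C * μ.real (closedBall (0 : E) s) := by
  let m : ℝ := μ.real (closedBall (0 : E) (r / 2))
  have hm : 0 < m := ENNReal.toReal_pos (measure_closedBall_pos μ 0 (half_pos hr)).ne'
    measure_closedBall_lt_top.ne
  have hm' : 0 < (1 - δ) * m := mul_pos (sub_pos.2 hδ) hm
  refine ⟨2 * (|φ (closedBall 0 r)| / ((1 - δ) * m)), ?_⟩
  filter_upwards [self_mem_nhdsWithin, Ioo_mem_nhdsGT (half_pos hr),
    eventually_measureReal_closedBall_sdiff_le μ hr (by linarith : 0 < (1 - δ) / 4)]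
    with s hs₀ hsr hshell X hXs hX
  have hs₀ : 0 < s := hs₀
  obtain ⟨B, hB⟩ := hφ.exists_abs_le (isCompact_closedBall 0 s)
  rw [mul_assoc, div_mul_eq_mul_div]
  refine le_two_mul_of_forall_le_add_half
    (f := fun Y : {Y // Y ⊆ closedBall 0 s ∧ IsCompactConvex Y} => |φ Y|)
    ⟨B, forall_mem_range.2 fun Y => hB Y Y.2.1 Y.2.2⟩ (fun β hβ Y => ?_) ⟨X, hXs, hX⟩
  have hβ₀ : 0 ≤ β := (abs_nonneg _).trans (hβ Y)
  have hmain := hq.mul_abs_le μ hφ hδ hs₀.le (by linarith [hsr.2]) hrU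
    (fun Z hZ hZc => hβ ⟨Z, hZ, hZc⟩) Y.2.2 Y.2.1
  have hmr : m ≤ μ.real (closedBall (0 : E) (r - s)) :=
    measureReal_mono (closedBall_subset_closedBall (by linarith [hsr.2]))
      measure_closedBall_lt_top.ne
  have hYs : μ.real (Y : Set E) ≤ μ.real (closedBall (0 : E) s) :=
    measureReal_mono Y.2.1 measure_closedBall_lt_top.ne
  have hself : (1 - δ) * μ.real (closedBall (0 : E) (r - s)) * (|φ Y| - β / 2) ≤
      |φ (closedBall 0 r)| * μ.real (closedBall (0 : E) s) := by
    linarith [mul_le_mul_of_nonneg_left hYs (abs_nonneg (φ (closedBall 0 r))),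
      mul_le_mul_of_nonneg_left hshell (by linarith : 0 ≤ 2 * β)]
  rw [← sub_le_iff_le_add, le_div_iff₀ hm', mul_comm]
  rcases le_total 0 (|φ Y| - β / 2) with h | h
  · exact (mul_le_mul_of_nonneg_right (mul_le_mul_of_nonneg_left hmr (by linarith)) h).trans hself
  · exact (mul_nonpos_of_nonneg_of_nonpos hm'.le h).trans
      (mul_nonneg (abs_nonneg _) measureReal_nonneg)

theorem IsQuasiInvariant.exists_abs_le_of_subset_closedBall (hφ : IsSimpleValuation φ)
    (hq : IsQuasiInvariant φ δ U) (hδ : δ < 1) (hU : U ∈ nhds 0) :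
    ∃ C, ∀ᶠ s in nhdsWithin 0 (Ioi 0), ∀ (t : E) (X : Set E), IsCompactConvex X → X ⊆ U →
      X ⊆ closedBall t s → |φ X| ≤ C * μ.real (closedBall (0 : E) s) := by
  obtain ⟨r, hr, hrU⟩ := nhds_basis_closedBall.mem_iff.1 hU
  obtain ⟨C, hC⟩ := hq.exists_abs_le_of_subset_closedBall_zero μ hφ hδ hr hrU
  refine ⟨2 * C, ?_⟩
  filter_upwards [hC, Ioo_mem_nhdsGT hr] with s hs hsr t X hX hXU hXt
  have hsub : -t +ᵥ X ⊆ closedBall 0 s := by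
    rw [← neg_vadd_vadd t (closedBall (0 : E) s), vadd_closedBall_zero]
    exact vadd_set_mono hXt
  rw [mul_assoc]
  exact (hq.abs_le_two_mul hδ hX hXU
    (hsub.trans ((closedBall_subset_closedBall hsr.2.le).trans hrU))).trans
    (mul_le_mul_of_nonneg_left (hs _ hsub (hX.vadd (-t))) zero_le_two)

end SmallBodies

section Averages

variable {E : Type*}

/-- The error made when `φ (T ∩ closedBall t s)` is replaced by `φ (closedBall t s)` if `t ∈ T`, and
by `0` otherwise. -/
noncomputable def ballDefect [PseudoMetricSpace E] (φ : Set E → ℝ) (T : Set E) (s : ℝ)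
    (t : E) : ℝ :=
  φ (T ∩ closedBall t s) - T.indicator (fun x => φ (closedBall x s)) t

theorem eventually_ballDefect_eq_zero [PseudoMetricSpace E] {φ : Set E → ℝ} {T : Set E}
    (hφ : φ ∅ = 0) (hT : IsClosed T) {t : E} (ht : t ∉ frontier T) :
    ∀ᶠ s in nhdsWithin 0 (Ioi 0), ballDefect φ T s t = 0 := by
  refine nhdsWithin_le_nhds ?_
  by_cases htT : t ∈ T
  · have hint : T ∈ nhds t :=
      mem_interior_iff_mem_nhds.1 (by_contra fun h => ht ⟨subset_closure htT, h⟩)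
    filter_upwards [eventually_closedBall_subset hint] with s hs
    rw [ballDefect, inter_eq_right.2 hs, indicator_of_mem htT, sub_self]
  · filter_upwards [eventually_closedBall_subset (hT.isOpen_compl.mem_nhds htT)] with s hs
    rw [ballDefect, (disjoint_right.2 hs).inter_eq, hφ, indicator_of_notMem htT, sub_zero]

variable [NormedAddCommGroup E] [InnerProductSpace ℝ E] [FiniteDimensional ℝ E] {φ : Set E → ℝ}
  {T U : Set E}

theorem IsSimpleValuation.continuous_closedBall (hφ : IsSimpleValuation φ) (s : ℝ) :
    Continuous fun t : E => φ (closedBall t s) := by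
  refine continuous_iff_continuousAt.2 fun t => ?_
  refine hφ.tendsto (fun t => isCompactConvex_closedBall t s) (isCompactConvex_closedBall t s) ?_
  simpa only [vadd_closedBall_zero] using tendstoBody_vadd (isCompact_closedBall (0 : E) s) t

variable [MeasurableSpace E] [BorelSpace E] (μ : Measure E)

theorem IsSimpleValuation.integrable_inter_closedBall [IsFiniteMeasureOnCompacts μ]
    (hφ : IsSimpleValuation φ) (hT : IsCompactConvex T) (s : ℝ) :
    Integrable (fun t => φ (T ∩ closedBall t s)) μ := by
  simpa only [vadd_closedBall_zero] using
    hφ.integrable_inter_vadd μ hT (isCompactConvex_closedBall 0 s)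

theorem IsSimpleValuation.integrable_indicator_closedBall [IsFiniteMeasureOnCompacts μ]
    (hφ : IsSimpleValuation φ) (hT : IsCompact T) (s : ℝ) :
    Integrable (T.indicator fun t => φ (closedBall t s)) μ :=
  (integrable_indicator_iff hT.isClosed.measurableSet).2
    ((hφ.continuous_closedBall s).continuousOn.integrableOn_compact hT)

theorem IsSimpleValuation.integrable_ballDefect [IsFiniteMeasureOnCompacts μ]
    (hφ : IsSimpleValuation φ) (hT : IsCompactConvex T) (s : ℝ) :
    Integrable (ballDefect φ T s) μ :=
  (hφ.integrable_inter_closedBall μ hT s).sub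
    (hφ.integrable_indicator_closedBall μ hT.isCompact s)

variable [μ.IsAddHaarMeasure]

theorem IsSimpleValuation.integral_ballDefect (hφ : IsSimpleValuation φ)
    (hT : IsCompactConvex T) (s : ℝ) :
    ∫ t, ballDefect φ T s t ∂μ =
      φ T * μ.real (closedBall (0 : E) s) - ∫ t in T, φ (closedBall t s) ∂μ := by
  have hneg : -closedBall (0 : E) s = closedBall 0 s := by rw [neg_closedBall, neg_zero]
  have hkinematic := hφ.integral_inter_vadd_of_neg_eq μ hT (isCompactConvex_closedBall 0 s) hneg
  simp only [vadd_closedBall_zero] at hkinematic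
  refine (integral_sub (hφ.integrable_inter_closedBall μ hT s)
    (hφ.integrable_indicator_closedBall μ hT.isCompact s)).trans ?_
  rw [hkinematic, integral_indicator hT.isCompact.isClosed.measurableSet]

variable {δ : ℝ}

theorem IsQuasiInvariant.exists_abs_ballDefect_le (hφ : IsSimpleValuation φ)
    (hq : IsQuasiInvariant φ δ U) (hδ : δ < 1) (hU : IsOpen U) (h0 : (0 : E) ∈ U)
    (hT : IsCompactConvex T) (hTU : T ⊆ U) :
    ∃ A C, IsCompact A ∧ ∀ᶠ s in nhdsWithin 0 (Ioi 0), ∀ t,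
      |ballDefect φ T s t| ≤ μ.real (closedBall (0 : E) s) * A.indicator (fun _ => C) t := by
  obtain ⟨C, hC⟩ := hq.exists_abs_le_of_subset_closedBall μ hφ hδ (hU.mem_nhds h0)
  obtain ⟨ρ, hρ, hρU⟩ := hT.isCompact.exists_cthickening_subset_open hU hTU
  refine ⟨cthickening ρ T, 2 * C, hT.isCompact.cthickening, ?_⟩
  filter_upwards [hC, Ioo_mem_nhdsGT hρ] with s hs hsρ t
  have hnear {x y : E} (hx : x ∈ T) (hy : y ∈ closedBall x s) : y ∈ cthickening ρ T :=
    mem_cthickening_of_dist_le y x ρ T hx (hy.trans hsρ.2.le)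
  have hinter : |φ (T ∩ closedBall t s)| ≤ C * μ.real (closedBall (0 : E) s) :=
    hs t _ (hT.inter (isCompactConvex_closedBall t s)) (inter_subset_left.trans hTU)
      inter_subset_right
  by_cases ht : t ∈ cthickening ρ T
  · rw [indicator_of_mem ht, mul_comm, mul_assoc, two_mul]
    refine (abs_sub _ _).trans (add_le_add hinter ?_)
    by_cases htT : t ∈ T
    · rw [indicator_of_mem htT]
      exact hs t _ (isCompactConvex_closedBall t s) (fun y hy => hρU (hnear htT hy)) subset_rfl
    · rw [indicator_of_notMem htT, abs_zero]
      exact (abs_nonneg _).trans hinter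
  · have htT : t ∉ T := fun h => ht (self_subset_cthickening T h)
    have hempty : T ∩ closedBall t s = ∅ :=
      eq_empty_of_forall_notMem fun x hx => ht (hnear hx.1 (mem_closedBall_comm.1 hx.2))
    rw [ballDefect, indicator_of_notMem ht, indicator_of_notMem htT, hempty, hφ.empty, sub_zero,
      abs_zero, mul_zero]

/-- `T ∩ closedBall t s` is either empty or the whole ball unless `t` lies close to the boundary of
`T`, so the kinematic formula reconstructs `φ T` from the values of `φ` on small balls. -/
theorem IsQuasiInvariant.tendsto_average_closedBall (hφ : IsSimpleValuation φ)
    (hq : IsQuasiInvariant φ δ U) (hδ : δ < 1) (hU : IsOpen U) (h0 : (0 : E) ∈ U)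
    (hT : IsCompactConvex T) (hTU : T ⊆ U) :
    Tendsto (fun s => (μ.real (closedBall (0 : E) s))⁻¹ * ∫ t in T, φ (closedBall t s) ∂μ)
      (nhdsWithin 0 (Ioi 0)) (nhds (φ T)) := by
  have hpos : ∀ᶠ s in nhdsWithin 0 (Ioi 0), 0 < μ.real (closedBall (0 : E) s) := by
    filter_upwards [self_mem_nhdsWithin] with s hs
    exact ENNReal.toReal_pos (measure_closedBall_pos μ 0 hs).ne' measure_closedBall_lt_top.ne
  obtain ⟨A, C, hA, hC⟩ := hq.exists_abs_ballDefect_le μ hφ hδ hU h0 hT hTU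
  have hlim : Tendsto (fun s => ∫ t, (μ.real (closedBall (0 : E) s))⁻¹ * ballDefect φ T s t ∂μ)
      (nhdsWithin 0 (Ioi 0)) (nhds (∫ _ : E, (0 : ℝ) ∂μ)) := by
    refine tendsto_integral_filter_of_dominated_convergence (A.indicator fun _ => C) ?_ ?_ ?_ ?_
    · exact .of_forall fun s => ((hφ.integrable_ballDefect μ hT s).const_mul _).aestronglyMeasurable
    · filter_upwards [hC, hpos] with s hs hs₀
      refine .of_forall fun t => ?_
      rw [norm_mul, norm_inv, Real.norm_of_nonneg hs₀.le, inv_mul_le_iff₀ hs₀]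
      exact hs t
    · exact (integrable_indicator_iff hA.isClosed.measurableSet).2
        (integrableOn_const hA.measure_lt_top.ne)
    · filter_upwards [measure_eq_zero_iff_ae_notMem.1 (hT.convex.addHaar_frontier μ)] with t ht
      refine tendsto_const_nhds.congr' ?_
      filter_upwards [eventually_ballDefect_eq_zero hφ.empty hT.isCompact.isClosed ht] with s hs
      rw [hs, mul_zero]
  rw [integral_zero] at hlim
  have hsub := hlim.const_sub (φ T)
  rw [sub_zero] at hsub
  refine hsub.congr' ?_
  filter_upwards [hpos] with s hs
  rw [integral_const_mul, hφ.integral_ballDefect μ hT]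
  field_simp
  ring

end Averages

theorem setIntegral_abs_eq_abs_setIntegral {α : Type*} [MeasurableSpace α] {μ : Measure α}
    {A : Set α} (hA : MeasurableSet A) {g : α → ℝ}
    (hg : (∀ x ∈ A, 0 ≤ g x) ∨ ∀ x ∈ A, g x ≤ 0) : ∫ x in A, |g x| ∂μ = |∫ x in A, g x ∂μ| := by
  rcases hg with hg | hg
  · rw [abs_of_nonneg (setIntegral_nonneg hA hg)]
    exact setIntegral_congr_fun hA fun x hx => abs_of_nonneg (hg x hx)
  · rw [abs_of_nonpos (setIntegral_nonpos hA hg), ← integral_neg]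
    exact setIntegral_congr_fun hA fun x hx => abs_of_nonpos (hg x hx)

theorem abs_setIntegral_sub_setIntegral_le {α : Type*} [MeasurableSpace α] {μ : Measure α}
    {A : Set α} (hA : MeasurableSet A) {f g : α → ℝ} (hf : IntegrableOn f A μ)
    (hgi : IntegrableOn g A μ) {δ : ℝ} (hfg : ∀ x ∈ A, |f x - g x| ≤ δ * |g x|)
    (hg : (∀ x ∈ A, 0 ≤ g x) ∨ ∀ x ∈ A, g x ≤ 0) :
    |∫ x in A, f x ∂μ - ∫ x in A, g x ∂μ| ≤ δ * |∫ x in A, g x ∂μ| := by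
  rw [← integral_sub hf hgi, ← setIntegral_abs_eq_abs_setIntegral hA hg, ← integral_const_mul]
  exact abs_integral_le_integral_abs.trans
    (setIntegral_mono_on (hf.sub hgi).abs (hgi.abs.const_mul δ) hA hfg)

theorem eventually_forall_closedBall_subset {X : Type*} [PseudoMetricSpace X] {T U : Set X}
    (hT : IsCompact T) (hU : IsOpen U) (hTU : T ⊆ U) :
    ∀ᶠ s in nhdsWithin 0 (Ioi 0), ∀ t ∈ T, closedBall t s ⊆ U := by
  obtain ⟨ρ, hρ, hρU⟩ := hT.exists_cthickening_subset_open hU hTU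
  filter_upwards [Ioo_mem_nhdsGT hρ] with s hs t ht
  exact ((closedBall_subset_cthickening ht s).trans (cthickening_mono hs.2.le T)).trans hρU

section Scaling

variable {E : Type*} [NormedAddCommGroup E] [InnerProductSpace ℝ E] [FiniteDimensional ℝ E]
  {φ : Set E → ℝ} {δ c s : ℝ} {T U : Set E}

theorem IsQuasiInvariant.abs_closedBall_sub_closedBall_le (hq : IsQuasiInvariant φ δ U) {x y : E}
    (hx : closedBall x s ⊆ U) (hy : closedBall y s ⊆ U) :
    |φ (closedBall y s) - φ (closedBall x s)| ≤ δ * |φ (closedBall x s)| := by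
  have hvadd : (y - x) +ᵥ closedBall x s = closedBall y s := by
    rw [vadd_closedBall, vadd_eq_add, sub_add_cancel]
  rw [← hvadd] at hy ⊢
  exact hq.vadd _ (isCompactConvex_closedBall x s) hx hy

theorem IsQuasiInvariant.nonneg_or_nonpos_closedBall (hq : IsQuasiInvariant φ δ U) (hδ : δ < 1)
    {A : Set E} (h0 : closedBall 0 s ⊆ U) (hA : ∀ x ∈ A, closedBall x s ⊆ U) :
    (∀ x ∈ A, 0 ≤ φ (closedBall x s)) ∨ ∀ x ∈ A, φ (closedBall x s) ≤ 0 := by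
  have hnear (x : E) (hx : x ∈ A) := abs_le.1 (hq.abs_closedBall_sub_closedBall_le h0 (hA x hx))
  refine (le_total 0 (φ (closedBall 0 s))).imp (fun h x hx => ?_) fun h x hx => ?_
  · have := (hnear x hx).1
    rw [abs_of_nonneg h] at this
    nlinarith
  · have := (hnear x hx).2
    rw [abs_of_nonpos h] at this
    nlinarith

variable [MeasurableSpace E] [BorelSpace E] (μ : Measure E) [μ.IsAddHaarMeasure]

theorem IsQuasiInvariant.abs_setIntegral_sub_setIntegral_smul_le (hφ : IsSimpleValuation φ)
    (hq : IsQuasiInvariant φ δ U) (hδ : δ < 1) (hc : 0 < c) (hT : IsCompact T)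
    (h0 : closedBall 0 s ⊆ U) (hTs : ∀ x ∈ T, closedBall x s ⊆ U)
    (hcTs : ∀ x ∈ c • T, closedBall x s ⊆ U) :
    |∫ t in T, φ (closedBall t s) ∂μ -
        (c ^ Module.finrank ℝ E)⁻¹ * ∫ t in c • T, φ (closedBall t s) ∂μ| ≤
      δ * |(c ^ Module.finrank ℝ E)⁻¹ * ∫ t in c • T, φ (closedBall t s) ∂μ| := by
  have hcT (x : E) (hx : x ∈ T) : closedBall (c • x) s ⊆ U := hcTs _ (smul_mem_smul_set hx)
  have hcont := hφ.continuous_closedBall s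
  have hchange : ∫ t in T, φ (closedBall (c • t) s) ∂μ =
      (c ^ Module.finrank ℝ E)⁻¹ * ∫ t in c • T, φ (closedBall t s) ∂μ := by
    rw [Measure.setIntegral_comp_smul μ (fun t => φ (closedBall t s)) T hc.ne', smul_eq_mul,
      abs_of_pos (by positivity)]
  rw [← hchange]
  refine abs_setIntegral_sub_setIntegral_le hT.isClosed.measurableSet
    (hcont.continuousOn.integrableOn_compact hT)
    ((hcont.comp (continuous_const_smul c)).continuousOn.integrableOn_compact hT)
    (fun x hx => hq.abs_closedBall_sub_closedBall_le (hcT x hx) (hTs x hx)) ?_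
  exact (hq.nonneg_or_nonpos_closedBall hδ h0 hcTs).imp
    (fun h x hx => h _ (smul_mem_smul_set hx)) fun h x hx => h _ (smul_mem_smul_set hx)

theorem IsQuasiInvariant.abs_sub_smul_le (hφ : IsSimpleValuation φ) (hq : IsQuasiInvariant φ δ U)
    (hδ : δ < 1) (hU : IsOpen U) (h0 : (0 : E) ∈ U) (hc : 0 < c) (hT : IsCompactConvex T)
    (hTU : T ⊆ U) (hcTU : c • T ⊆ U) :
    |φ T - (c ^ Module.finrank ℝ E)⁻¹ * φ (c • T)| ≤
      δ * |(c ^ Module.finrank ℝ E)⁻¹ * φ (c • T)| := by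
  have hcT : IsCompactConvex (c • T) := ⟨hT.isCompact.smul c, hT.convex.smul c⟩
  have hlimT := hq.tendsto_average_closedBall volume hφ hδ hU h0 hT hTU
  have hlimcT := (hq.tendsto_average_closedBall volume hφ hδ hU h0 hcT hcTU).const_mul
    (c ^ Module.finrank ℝ E)⁻¹
  refine le_of_tendsto_of_tendsto (hlimT.sub hlimcT).abs (hlimcT.abs.const_mul δ) ?_
  filter_upwards [eventually_forall_closedBall_subset isCompact_singleton hU
      (singleton_subset_iff.2 h0), eventually_forall_closedBall_subset hT.isCompact hU hTU,
    eventually_forall_closedBall_subset hcT.isCompact hU hcTU] with s hs₀ hs hs'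
  have hstep := hq.abs_setIntegral_sub_setIntegral_smul_le volume hφ hδ hc hT.isCompact
    (hs₀ 0 rfl) hs hs'
  simp only [mul_left_comm _ (volume.real (closedBall (0 : E) s))⁻¹, ← mul_sub, abs_mul,
    mul_left_comm δ] at hstep ⊢
  exact mul_le_mul_of_nonneg_left hstep (abs_nonneg _)

end Scaling

/-! ### Continuity and almost invariance from polytopes -/

section HausdorffContinuity

theorem TendstoBody.interior_subset {ι E : Type*} [TopologicalSpace E] [T1Space E] {l : Filter ι}
    [l.NeBot] {K : ι → Set E} {L M : Set E} (hL : TendstoBody K l L) (hM : TendstoBody K l M) :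
    interior L ⊆ M := by
  intro x hx
  by_contra hxM
  have hsub := hM.eventually_subset {x}ᶜ isOpen_compl_singleton (subset_compl_singleton_iff.2 hxM)
  obtain ⟨i, hxi, hi⟩ := ((hL.eventually_mem x hx).and hsub).exists
  exact hi hxi rfl

theorem TendstoBody.interior_eq {ι E : Type*} [TopologicalSpace E] [T1Space E] {l : Filter ι}
    [l.NeBot] {K : ι → Set E} {L M : Set E} (hL : TendstoBody K l L) (hM : TendstoBody K l M) :
    interior L = interior M :=
  Subset.antisymm (interior_maximal (hL.interior_subset hM) isOpen_interior)
    (interior_maximal (hM.interior_subset hL) isOpen_interior)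

variable {E : Type*} [NormedAddCommGroup E]

theorem IsCompactConvex.eq_of_interior_eq [NormedSpace ℝ E] {K L : Set E} (hK : IsCompactConvex K)
    (hL : IsCompactConvex L) (hne : (interior K).Nonempty) (h : interior K = interior L) :
    K = L := by
  rw [← hK.isCompact.isClosed.closure_eq, ← hL.isCompact.isClosed.closure_eq,
    ← hK.convex.closure_interior_eq_closure_of_nonempty_interior hne,
    ← hL.convex.closure_interior_eq_closure_of_nonempty_interior (h ▸ hne), h]

variable [InnerProductSpace ℝ E] [FiniteDimensional ℝ E] {φ : Set E → ℝ}

/-- Hausdorff limits of bodies converging to `M` have the same interior as `M`, and `φ` depends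
only on the interior. -/
theorem exists_subseq_tendsto_of_tendstoBody (hempty : φ ∅ = 0)
    (hsimple : ∀ {K : Set E}, IsCompactConvex K → interior K = ∅ → φ K = 0)
    (hcont : ∀ {K : ℕ → Set E} {L : Set E}, (∀ i, IsCompactConvex (K i) ∧ (K i).Nonempty) →
      IsCompactConvex L → L.Nonempty →
      Tendsto (fun i => hausdorffDist (K i) L) atTop (nhds 0) →
      Tendsto (fun i => φ (K i)) atTop (nhds (φ L)))
    {K : ℕ → Set E} {M : Set E} (hK : ∀ i, IsCompactConvex (K i)) (hM : IsCompactConvex M)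
    (h : TendstoBody K atTop M) :
    ∃ u : ℕ → ℕ, Tendsto (fun i => φ (K (u i))) atTop (nhds (φ M)) := by
  by_cases hfreq : ∃ᶠ i in atTop, K i = ∅
  · obtain ⟨u, hu, hKu⟩ := extraction_of_frequently_atTop hfreq
    have hint : interior M = ∅ := eq_empty_of_forall_notMem fun x hx => by
      obtain ⟨i, hi⟩ := ((h.comp hu.tendsto_atTop).eventually_mem x hx).exists
      exact (hKu i ▸ hi : x ∈ (∅ : Set E))
    refine ⟨u, ?_⟩
    simp only [hKu, hempty, hsimple hM hint]
    exact tendsto_const_nhds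
  · obtain ⟨u, hu, hKu⟩ := extraction_of_eventually_atTop <| (not_frequently.1 hfreq).and <|
      h.eventually_subset (thickening 1 M) isOpen_thickening (self_subset_thickening one_pos M)
    have hKne (i : ℕ) : (K (u i)).Nonempty := nonempty_iff_ne_empty.2 (hKu i).1
    obtain ⟨L, hL, hLne, -, w, hw, hlim⟩ := exists_subseq_tendsto_hausdorffDist
      hM.isCompact.cthickening (fun i => hK (u i)) hKne
      fun i => (hKu i).2.trans (thickening_subset_cthickening 1 M)
    have hint : interior L = interior M :=
      (tendstoBody_of_tendsto_hausdorffDist (fun i => hK (u (w i))) (fun i => hKne (w i))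
        hL.isCompact hLne hlim).interior_eq (h.comp (hu.comp hw).tendsto_atTop)
    have heq : φ L = φ M := by
      rcases (interior L).eq_empty_or_nonempty with hL0 | hL0
      · rw [hsimple hL hL0, hsimple hM (hint ▸ hL0)]
      · rw [hL.eq_of_interior_eq hM hL0 hint]
    exact ⟨u ∘ w, heq ▸ hcont (fun i => ⟨hK _, hKne _⟩) hL hLne hlim⟩

theorem isSimpleValuation_of_tendsto_hausdorffDist (hempty : φ ∅ = 0)
    (hunion : ∀ {K L : Set E}, IsCompactConvex K → K.Nonempty → IsCompactConvex L → L.Nonempty →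
      Convex ℝ (K ∪ L) → φ (K ∪ L) = φ K + φ L - φ (K ∩ L))
    (hsimple : ∀ {K : Set E}, IsCompactConvex K → interior K = ∅ → φ K = 0)
    (hcont : ∀ {K : ℕ → Set E} {L : Set E}, (∀ i, IsCompactConvex (K i) ∧ (K i).Nonempty) →
      IsCompactConvex L → L.Nonempty →
      Tendsto (fun i => hausdorffDist (K i) L) atTop (nhds 0) →
      Tendsto (fun i => φ (K i)) atTop (nhds (φ L))) : IsSimpleValuation φ where
  empty := hempty
  union {K L} hK hL hKL := by
    rcases K.eq_empty_or_nonempty with rfl | hKne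
    · simp only [empty_union, empty_inter, hempty, zero_add, sub_zero]
    rcases L.eq_empty_or_nonempty with rfl | hLne
    · simp only [union_empty, inter_empty, hempty, add_zero, sub_zero]
    exact hunion hK hKne hL hLne hKL
  simple := hsimple
  tendsto_nat hK hM h := tendsto_of_subseq_tendsto fun _ hu =>
    exists_subseq_tendsto_of_tendstoBody hempty hsimple hcont (fun _ => hK _) hM (h.comp hu)

end HausdorffContinuity

section AlmostInvariance

theorem exists_seq_convexHull_finset_tendstoBody {E : Type*} [NormedAddCommGroup E]
    [NormedSpace ℝ E] [FiniteDimensional ℝ E] {X U : Set E} (hX : IsCompactConvex X)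
    (hU : IsOpen U) (hXU : X ⊆ U) :
    ∃ s : ℕ → Finset E, (∀ i, convexHull ℝ (s i : Set E) ⊆ U) ∧
      TendstoBody (fun i => convexHull ℝ (s i : Set E)) atTop X := by
  have hnhds (i : ℕ) : U ∩ thickening (1 / (i + 1 : ℝ)) X ∈ nhdsSet X :=
    (hU.inter isOpen_thickening).mem_nhdsSet.2
      (subset_inter hXU (self_subset_thickening Nat.one_div_pos_of_nat X))
  choose s hXs hs using fun i =>
    hX.convex.exists_subset_interior_convexHull_finset_of_isCompact hX.isCompact (hnhds i)
  refine ⟨s, fun i => (hs i).trans inter_subset_left, fun x hx => .of_forall fun i =>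
    interior_subset (hXs i (interior_subset hx)), fun V hV hXV => ?_⟩
  obtain ⟨r, hr, hrV⟩ := hX.isCompact.exists_thickening_subset_open hV hXV
  filter_upwards [tendsto_one_div_add_atTop_nhds_zero_nat.eventually (gt_mem_nhds hr)] with i hi
  exact ((hs i).trans inter_subset_right).trans ((thickening_mono hi.le X).trans hrV)

variable {E : Type*} [NormedAddCommGroup E]

theorem IsCompactConvex.image_isometryEquiv [NormedSpace ℝ E] {X : Set E} (hX : IsCompactConvex X)
    (g : E ≃ᵢ E) : IsCompactConvex (g '' X) :=
  ⟨hX.isCompact.image g.continuous,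
    hX.convex.affine_image g.toRealAffineIsometryEquiv.toAffineEquiv.toAffineMap⟩

variable [InnerProductSpace ℝ E] [FiniteDimensional ℝ E] {φ : Set E → ℝ} {δ : ℝ} {U : Set E}

theorem IsSimpleValuation.abs_image_isometryEquiv_sub_le (hφ : IsSimpleValuation φ) (hU : IsOpen U)
    {g : E ≃ᵢ E} (h : ∀ s : Finset E, convexHull ℝ (s : Set E) ⊆ U →
      g '' convexHull ℝ (s : Set E) ⊆ U →
      |φ (g '' convexHull ℝ (s : Set E)) - φ (convexHull ℝ s)| ≤ δ * |φ (convexHull ℝ s)|)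
    {X : Set E} (hX : IsCompactConvex X) (hXU : X ⊆ U) (hgXU : g '' X ⊆ U) :
    |φ (g '' X) - φ X| ≤ δ * |φ X| := by
  obtain ⟨s, hsU, hlim⟩ := exists_seq_convexHull_finset_tendstoBody hX
    (hU.inter (hU.preimage g.continuous)) (subset_inter hXU (image_subset_iff.1 hgXU))
  have hs (i : ℕ) : IsCompactConvex (convexHull ℝ (s i : Set E)) :=
    ⟨(s i).finite_toSet.isCompact_convexHull ℝ, convex_convexHull ℝ _⟩
  have hφs := hφ.tendsto hs hX hlim
  have hφgs := hφ.tendsto (fun i => (hs i).image_isometryEquiv g) (hX.image_isometryEquiv g)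
    (hlim.image_homeomorph g.toHomeomorph)
  exact le_of_tendsto_of_tendsto' (hφgs.sub hφs).abs (hφs.abs.const_mul δ) fun i =>
    h (s i) ((hsU i).trans inter_subset_left)
      (image_subset_iff.2 ((hsU i).trans inter_subset_right))

theorem IsSimpleValuation.isQuasiInvariant (hφ : IsSimpleValuation φ) (hU : IsOpen U)
    (h : ∀ (s : Finset E) (g : E ≃ᵢ E), convexHull ℝ (s : Set E) ⊆ U →
      g '' convexHull ℝ (s : Set E) ⊆ U →
      |φ (g '' convexHull ℝ (s : Set E)) - φ (convexHull ℝ s)| ≤ δ * |φ (convexHull ℝ s)|) :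
    IsQuasiInvariant φ δ U where
  vadd t hX hXU htXU := hφ.abs_image_isometryEquiv_sub_le (g := IsometryEquiv.addLeft t) hU
    (fun s => h s _) hX hXU htXU
  vadd_neg {X} t hX hXU htXU := by
    have himage : IsometryEquiv.subLeft t '' X = t +ᵥ -X := by
      rw [← image_neg_eq_neg, ← image_vadd, image_image]
      exact image_congr fun x _ => sub_eq_add_neg t x
    rw [← himage] at htXU ⊢
    exact hφ.abs_image_isometryEquiv_sub_le hU (fun s => h s _) hX hXU htXU

end AlmostInvariance

/-! ### The rescaled sequence -/

section InfiniteProduct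

theorem exists_eq_mul_one_add_mul {x y M ε : ℝ} (hM : 0 ≤ M) (hε : 0 < ε)
    (h : |x - y| ≤ M * ε * |y|) : ∃ a, |a| ≤ M ∧ x = y * (1 + a * ε) := by
  rcases eq_or_ne y 0 with rfl | hy
  · refine ⟨0, by rwa [abs_zero], ?_⟩
    rw [abs_zero, mul_zero, sub_zero, abs_nonpos_iff] at h
    rw [h, zero_mul]
  · refine ⟨(x - y) / (y * ε), ?_, by field_simp; ring⟩
    rw [abs_div, div_le_iff₀ (by positivity), abs_mul, abs_of_pos hε]
    linarith

theorem multipliable_inv_one_add_of_summable {ι : Type*} {f : ι → ℝ} (hne : ∀ i, 1 + f i ≠ 0)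
    (hf : Summable fun i => ‖f i‖) : Multipliable fun i => (1 + f i)⁻¹ :=
  (multipliable_one_add_of_summable hf).inv₀ (tprod_one_add_ne_zero_of_summable hne hf)

theorem eq_mul_prod_inv_of_eq_mul {w x : ℕ → ℝ} (hx : ∀ i, x i ≠ 0)
    (h : ∀ i, w i = w (i + 1) * x i) (p : ℕ) : w p = w 0 * ∏ i ∈ Finset.range p, (x i)⁻¹ := by
  induction p with
  | zero => rw [Finset.prod_range_zero, mul_one]
  | succ p ih => rw [Finset.prod_range_succ, ← mul_assoc, ← ih, h p, mul_inv_cancel_right₀ (hx p)]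

theorem abs_pow_mul_mul_le {a c M ε : ℝ} (hc : 0 ≤ c) (hε : 0 ≤ ε) (ha : |a| ≤ M) (i : ℕ) :
    |c ^ i * a * ε| ≤ c ^ i * (M * ε) := by
  rw [abs_mul, abs_mul, abs_of_nonneg (pow_nonneg hc i), abs_of_nonneg hε, mul_assoc]
  gcongr

variable {E : Type*} [NormedAddCommGroup E] [InnerProductSpace ℝ E] [FiniteDimensional ℝ E]
  [MeasurableSpace E] [BorelSpace E] {φ : Set E → ℝ} {c M ε : ℝ} {T : Set E}

theorem IsQuasiInvariant.exists_smul_eq_mul (hφ : IsSimpleValuation φ) (hc : 0 < c) (hc1 : c ≤ 1)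
    (hM : 0 ≤ M) (hε : 0 < ε) (hMε : M * ε < 1) (hq : IsQuasiInvariant φ (M * ε) (ball 0 ε))
    (hT : IsCompactConvex T) (hTε : T ⊆ ball 0 ε) :
    ∃ a, |a| ≤ M ∧ φ T = (c ^ Module.finrank ℝ E)⁻¹ * φ (c • T) * (1 + a * ε) := by
  have hcT : c • T ⊆ ball 0 ε := by
    refine (smul_set_mono hTε).trans ?_
    rw [_root_.smul_ball hc.ne', smul_zero, Real.norm_of_nonneg hc.le]
    exact ball_subset_ball (mul_le_of_le_one_left hε.le hc1)
  exact exists_eq_mul_one_add_mul hM hε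
    (hq.abs_sub_smul_le hφ hMε isOpen_ball (mem_ball_self hε) hc hT hTε hcT)

theorem IsSimpleValuation.exists_tendsto_pow_smul (hφ : IsSimpleValuation φ) (hc : 0 < c)
    (hc1 : c < 1) (hM : 0 ≤ M) (hε : 0 < ε) (hMε : M * ε < 1)
    (hq : ∀ i : ℕ, IsQuasiInvariant φ (M * (c ^ i * ε)) (ball 0 (c ^ i * ε)))
    (hT : IsCompactConvex T) (hTε : T ⊆ ball 0 ε) :
    ∃ a : ℕ → ℝ, (∀ i, |a i| ≤ M) ∧ Multipliable (fun i => (1 + c ^ i * a i * ε)⁻¹) ∧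
      Tendsto (fun p : ℕ => ((c ^ Module.finrank ℝ E)⁻¹) ^ p * φ (c ^ p • T)) atTop
        (nhds (φ T * ∏' i, (1 + c ^ i * a i * ε)⁻¹)) := by
  have hstep (i : ℕ) : ∃ a, |a| ≤ M ∧ φ (c ^ i • T) =
      (c ^ Module.finrank ℝ E)⁻¹ * φ (c ^ (i + 1) • T) * (1 + c ^ i * a * ε) := by
    have hTi : c ^ i • T ⊆ ball 0 (c ^ i * ε) := by
      refine (smul_set_mono hTε).trans_eq ?_
      rw [_root_.smul_ball (pow_pos hc i).ne', smul_zero, Real.norm_of_nonneg (by positivity)]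
    have hci : c ^ i * ε ≤ ε := mul_le_of_le_one_left hε.le (pow_le_one₀ hc.le hc1.le)
    obtain ⟨a, ha, h⟩ := (hq i).exists_smul_eq_mul hφ hc hc1.le hM (by positivity)
      ((mul_le_mul_of_nonneg_left hci hM).trans_lt hMε)
      ⟨hT.isCompact.smul (c ^ i), hT.convex.smul (c ^ i)⟩ hTi
    refine ⟨a, ha, ?_⟩
    rwa [smul_smul, ← pow_succ', mul_left_comm, ← mul_assoc (c ^ i)] at h
  choose a ha hstep using hstep
  have habs (i : ℕ) := abs_pow_mul_mul_le hc.le hε.le (ha i) i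
  have hne (i : ℕ) : 1 + c ^ i * a i * ε ≠ 0 := by
    have hle : c ^ i * (M * ε) ≤ M * ε :=
      mul_le_of_le_one_left (by positivity) (pow_le_one₀ hc.le hc1.le)
    linarith [neg_le_of_abs_le (habs i)]
  have hmult := multipliable_inv_one_add_of_summable hne <|
    ((summable_geometric_of_lt_one hc.le hc1).mul_right (M * ε)).of_nonneg_of_le
      (fun _ => norm_nonneg _) habs
  have hprod := eq_mul_prod_inv_of_eq_mul
    (w := fun p => ((c ^ Module.finrank ℝ E)⁻¹) ^ p * φ (c ^ p • T)) hne fun i => by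
      rw [hstep i, pow_succ]
      ring
  refine ⟨a, ha, hmult, ?_⟩
  simp only [pow_zero, one_smul, one_mul] at hprod
  simp only [hprod]
  exact hmult.hasProd.tendsto_prod_nat.const_mul (φ T)

end InfiniteProduct

section EuclideanSpace

variable {n : ℕ}

theorem IsSimplex.isConvexBody {T : Set (EuclideanSpace ℝ (Fin n))} (hT : IsSimplex T) :
    IsConvexBody T := by
  obtain ⟨p, -, rfl⟩ := hT
  exact ⟨convexHull_nonempty_iff.2 (range_nonempty p), (finite_range p).isCompact_convexHull ℝ,
    convex_convexHull ℝ _⟩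

theorem isSimpleValuation_of_isConvexBody {v : Set (EuclideanSpace ℝ (Fin n)) → ℝ}
    (hempty : v ∅ = 0)
    (hval : ∀ K L : Set (EuclideanSpace ℝ (Fin n)), IsConvexBody K → IsConvexBody L →
      Convex ℝ (K ∪ L) → v (K ∪ L) = v K + v L - v (K ∩ L))
    (hsimple : ∀ K : Set (EuclideanSpace ℝ (Fin n)), IsConvexBody K →
      affineSpan ℝ K ≠ ⊤ → v K = 0)
    (hcont : ∀ (K : ℕ → Set (EuclideanSpace ℝ (Fin n))) (L : Set (EuclideanSpace ℝ (Fin n))),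
      (∀ m, IsConvexBody (K m)) → IsConvexBody L →
      Tendsto (fun m => Metric.hausdorffDist (K m) L) atTop (nhds 0) →
      Tendsto (fun m => v (K m)) atTop (nhds (v L))) : IsSimpleValuation v := by
  refine isSimpleValuation_of_tendsto_hausdorffDist hempty
    (fun hK hKne hL hLne => hval _ _ ⟨hKne, hK.isCompact, hK.convex⟩
      ⟨hLne, hL.isCompact, hL.convex⟩)
    (fun {K} hK hint => ?_) fun hK hL hLne => hcont _ _
      (fun i => ⟨(hK i).2, (hK i).1.isCompact, (hK i).1.convex⟩) ⟨hLne, hL.isCompact, hL.convex⟩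
  rcases K.eq_empty_or_nonempty with rfl | hKne
  · exact hempty
  · refine hsimple K ⟨hKne, hK.isCompact, hK.convex⟩ fun hspan => ?_
    exact (hK.convex.interior_nonempty_iff_affineSpan_eq_top.2 hspan).ne_empty hint

theorem IsSimpleValuation.isQuasiInvariant_ball {v : Set (EuclideanSpace ℝ (Fin n)) → ℝ}
    (hv : IsSimpleValuation v) {M ε : ℝ} (hε : 0 < ε)
    (hstar : ∀ P : Set (EuclideanSpace ℝ (Fin n)), IsPolytope P →
      ∀ g : EuclideanSpace ℝ (Fin n) ≃ᵢ EuclideanSpace ℝ (Fin n),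
        P ⊆ ball 0 ε → g '' P ⊆ ball 0 ε →
        ∃ a : ℝ, |a| ≤ M ∧ v (g '' P) = v P * (1 + a * ε)) :
    IsQuasiInvariant v (M * ε) (ball 0 ε) := by
  refine hv.isQuasiInvariant isOpen_ball fun s g hs hgs => ?_
  obtain ⟨a, ha, h⟩ := hstar _ ⟨s, rfl⟩ g hs hgs
  rw [h, mul_one_add, add_sub_cancel_left, mul_comm, abs_mul, abs_mul, abs_of_pos hε]
  gcongr

end EuclideanSpace

theorem stmt9_general {n : ℕ} (v : Set (EuclideanSpace ℝ (Fin n)) → ℝ)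
    (hempty : v ∅ = 0)
    (hval : ∀ K L : Set (EuclideanSpace ℝ (Fin n)), IsConvexBody K → IsConvexBody L →
      Convex ℝ (K ∪ L) → v (K ∪ L) = v K + v L - v (K ∩ L))
    (hsimple : ∀ K : Set (EuclideanSpace ℝ (Fin n)), IsConvexBody K →
      affineSpan ℝ K ≠ ⊤ → v K = 0)
    (hcont : ∀ (K : ℕ → Set (EuclideanSpace ℝ (Fin n))) (L : Set (EuclideanSpace ℝ (Fin n))),
      (∀ m, IsConvexBody (K m)) → IsConvexBody L →
      Tendsto (fun m => Metric.hausdorffDist (K m) L) atTop (nhds 0) →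
      Tendsto (fun m => v (K m)) atTop (nhds (v L)))
    (M ε₀ : ℝ)
    (hstar : ∀ ε : ℝ, 0 < ε → ε < ε₀ →
      ∀ P : Set (EuclideanSpace ℝ (Fin n)), IsPolytope P →
      ∀ g : EuclideanSpace ℝ (Fin n) ≃ᵢ EuclideanSpace ℝ (Fin n),
        P ⊆ Metric.ball 0 ε → g '' P ⊆ Metric.ball 0 ε →
        ∃ a : ℝ, |a| ≤ M ∧ v (g '' P) = v P * (1 + a * ε)) :
    ∀ ε : ℝ, 0 < ε → ε < ε₀ → M * ε < 1 →
      ∀ T : Set (EuclideanSpace ℝ (Fin n)), IsConvexBody T → T ⊆ Metric.ball 0 ε →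
        ∃ a : ℕ → ℝ, (∀ i, |a i| ≤ M) ∧
          Multipliable (fun i : ℕ => (1 + (2 : ℝ) ^ (-(i : ℤ)) * a i * ε)⁻¹) ∧
          Tendsto (fun p : ℕ => (2 : ℝ) ^ (n * p) * v (((2 : ℝ) ^ (-(p : ℤ))) • T)) atTop
            (nhds (v T * ∏' i : ℕ, (1 + (2 : ℝ) ^ (-(i : ℤ)) * a i * ε)⁻¹)) := by
  intro ε hε hεε₀ hMε T hT hTε
  have hv := isSimpleValuation_of_isConvexBody hempty hval hsimple hcont
  obtain ⟨a, ha, -⟩ := hstar ε hε hεε₀ ∅ ⟨∅, by simp⟩ (IsometryEquiv.refl _) (by simp) (by simp)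
  have hq (i : ℕ) : IsQuasiInvariant v (M * (2⁻¹ ^ i * ε)) (ball 0 (2⁻¹ ^ i * ε)) := by
    have hpos : 0 < 2⁻¹ ^ i * ε := by positivity
    have hle : 2⁻¹ ^ i * ε ≤ ε :=
      mul_le_of_le_one_left hε.le (pow_le_one₀ (by norm_num) (by norm_num))
    exact hv.isQuasiInvariant_ball hpos (hstar _ hpos (hle.trans_lt hεε₀))
  have hpow (p : ℕ) : (2 : ℝ) ^ (-(p : ℤ)) = 2⁻¹ ^ p := by rw [zpow_neg, zpow_natCast, inv_pow]
  simpa only [hpow, finrank_euclideanSpace_fin, inv_pow, inv_inv, ← pow_mul] using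
    hv.exists_tendsto_pow_smul (by norm_num : (0 : ℝ) < 2⁻¹) (by norm_num)
      ((abs_nonneg a).trans ha) hε hMε hq ⟨hT.2.1, hT.2.2⟩ hTε

/-- for a simple, continuous valuation `v` satisfying condition (*)
(uniformly bounded on polytopes in the unit ball and almost invariant under
isometries on small balls), for every `n`-simplex `T` contained in a small ball
`B(0,ε)`, the rescaled sequence `v_p(T) = 2^{np} v(2^{-p} T)` converges, with limit
`v(T) · ∏_{i} 1/(1 + 2^{-i} αᵢ ε)` for some sequence `(αᵢ)` with `|αᵢ| ≤ M`. -/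
theorem stmt9 {n : ℕ} (v : Set (EuclideanSpace ℝ (Fin n)) → ℝ)
    (hempty : v ∅ = 0)
    (hval : ∀ K L : Set (EuclideanSpace ℝ (Fin n)), IsConvexBody K → IsConvexBody L →
      Convex ℝ (K ∪ L) → v (K ∪ L) = v K + v L - v (K ∩ L))
    (hsimple : ∀ K : Set (EuclideanSpace ℝ (Fin n)), IsConvexBody K →
      affineSpan ℝ K ≠ ⊤ → v K = 0)
    (hcont : ∀ (K : ℕ → Set (EuclideanSpace ℝ (Fin n))) (L : Set (EuclideanSpace ℝ (Fin n))),
      (∀ m, IsConvexBody (K m)) → IsConvexBody L →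
      Tendsto (fun m => Metric.hausdorffDist (K m) L) atTop (nhds 0) →
      Tendsto (fun m => v (K m)) atTop (nhds (v L)))
    (hbd : ∃ B : ℝ, ∀ P : Set (EuclideanSpace ℝ (Fin n)), IsPolytope P →
      P ⊆ Metric.closedBall 0 1 → |v P| ≤ B)
    (M ε₀ : ℝ) (hM : 0 < M) (hε₀ : 0 < ε₀)
    (hstar : ∀ ε : ℝ, 0 < ε → ε < ε₀ →
      ∀ P : Set (EuclideanSpace ℝ (Fin n)), IsPolytope P →
      ∀ g : EuclideanSpace ℝ (Fin n) ≃ᵢ EuclideanSpace ℝ (Fin n),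
        P ⊆ Metric.ball 0 ε → g '' P ⊆ Metric.ball 0 ε →
        ∃ a : ℝ, |a| ≤ M ∧ v (g '' P) = v P * (1 + a * ε)) :
    ∀ ε : ℝ, 0 < ε → ε < ε₀ → M * ε < 1 →
      ∀ T : Set (EuclideanSpace ℝ (Fin n)), IsSimplex T → T ⊆ Metric.ball 0 ε →
        ∃ a : ℕ → ℝ, (∀ i, |a i| ≤ M) ∧
          Multipliable (fun i : ℕ => (1 + (2 : ℝ) ^ (-(i : ℤ)) * a i * ε)⁻¹) ∧
          Tendsto (fun p : ℕ => (2 : ℝ) ^ (n * p) * v (((2 : ℝ) ^ (-(p : ℤ))) • T)) atTop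
            (nhds (v T * ∏' i : ℕ, (1 + (2 : ℝ) ^ (-(i : ℤ)) * a i * ε)⁻¹)) := by
  exact fun ε hε hεε₀ hMε T hT =>
    stmt9_general v hempty hval hsimple hcont M ε₀ hstar ε hε hεε₀ hMε T hT.isConvexBody
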